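/- arXiv:1403.1126 — 2 statements merged into one kernel-verified Lean document; each statement's English description precedes it below -/
import Mathlib

section
/- Let I be an arbitrary index set, Ωᵢ ⊂ ℂ bounded domains with (closure Ωᵢ)° = Ωᵢ, ℂ \ closure(Ωᵢ) connected, and constants Mᵢ < ∞ so that any two points of Ωᵢ can be joined in Ωᵢ by a path of length at most Mᵢ. Then every function f : ∏ᵢ closure(Ωᵢ) → ℂ continuous in the product topology and separately holomorphic on ∏ᵢ Ωᵢ is a uniform limit of polynomials, each depending on finitely many of the variables. -/
/-- Two points are joined in `Ω` by a path of length at most `M`. -/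
def JoinedLe (Ω : Set ℂ) (M : ℝ) (z w : ℂ) : Prop :=
  ∃ γ : ℝ → ℂ, ContinuousOn γ (Set.Icc 0 1) ∧ γ 0 = z ∧ γ 1 = w ∧
    (∀ t ∈ Set.Icc (0:ℝ) 1, γ t ∈ Ω) ∧ eVariationOn γ (Set.Icc 0 1) ≤ ENNReal.ofReal M

/-!
In one variable, Mergelyan's construction approximates `f` on a compact `K` with connected
complement by a finite combination `∑ f(x) p_x` of values of `f` at points of `K`. The points and
the polynomials `p_x` depend on `f` only through its modulus of continuity and a bound, so one
choice serves a whole uniformly equicontinuous family. By compactness of the product, the slices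
of `f : ∏ᵢ Kᵢ → ℂ` in one variable form such a family, indexed by the remaining variables; each
coefficient `f(…, x, …)` is then a function of one variable fewer, and induction applies. Finally,
uniform continuity on the product makes `f` uniformly close to a function of finitely many
variables.
-/

namespace Mergelyan

open Set Filter Topology MeasureTheory Metric Polynomial
open scoped Real Uniformity

section PolyClosure

/-- The algebra `P(K)` of functions whose restriction to `K` is a uniform limit of polynomials. Its
elements are functions on the whole plane, so that Cauchy kernels and compositions can be written
without coercions; their values off `K` are irrelevant. -/
noncomputable def polyClosure (K : Set ℂ) [CompactSpace K] : Subalgebra ℂ (ℂ → ℂ) :=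
  ((polynomialFunctions K).topologicalClosure.map (ContinuousMap.coeFnAlgHom ℂ)).comap
    (AlgHom.pi fun z : K => Pi.evalAlgHom ℂ (fun _ : ℂ => ℂ) z)

variable {K L : Set ℂ} [CompactSpace K] [CompactSpace L] {f g : ℂ → ℂ}

theorem mem_polyClosure_iff :
    f ∈ polyClosure K ↔ ∃ F ∈ (polynomialFunctions K).topologicalClosure, ∀ z : K, F z = f z :=
  exists_congr fun _ => and_congr_right fun _ => funext_iff

theorem eval_mem_polyClosure (p : ℂ[X]) : (fun z => p.eval z) ∈ polyClosure K :=
  mem_polyClosure_iff.2 ⟨p.toContinuousMapOn K,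
    (polynomialFunctions K).le_topologicalClosure ⟨p, mem_univ p, rfl⟩, fun _ => rfl⟩

theorem id_mem_polyClosure : (fun z => z) ∈ polyClosure K := by
  simpa only [eval_X] using eval_mem_polyClosure (K := K) X

theorem const_mem_polyClosure (c : ℂ) : (fun _ => c) ∈ polyClosure K :=
  (polyClosure K).algebraMap_mem c

theorem continuousOn_of_mem_polyClosure (hf : f ∈ polyClosure K) : ContinuousOn f K := by
  obtain ⟨F, -, hF⟩ := mem_polyClosure_iff.1 hf
  rw [continuousOn_iff_continuous_domRestrict]
  exact F.continuous.congr hF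

theorem exists_polynomial_norm_sub_lt (hf : f ∈ polyClosure K) {ε : ℝ}
    (hε : 0 < ε) : ∃ p : ℂ[X], ∀ z ∈ K, ‖p.eval z - f z‖ < ε := by
  obtain ⟨F, hF, hFf⟩ := mem_polyClosure_iff.1 hf
  obtain ⟨_, ⟨p, -, rfl⟩, hp⟩ := Metric.mem_closure_iff.1 hF ε hε
  refine ⟨p, fun z hz => ?_⟩
  have := (ContinuousMap.dist_apply_le_dist ⟨z, hz⟩).trans_lt hp
  rwa [hFf, dist_comm, dist_eq_norm] at this

theorem mem_polyClosure_of_forall_exists (hf : ContinuousOn f K)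
    (h : ∀ ε > 0, ∃ p : ℂ[X], ∀ z ∈ K, ‖p.eval z - f z‖ < ε) : f ∈ polyClosure K := by
  refine mem_polyClosure_iff.2
    ⟨⟨K.domRestrict f, continuousOn_iff_continuous_domRestrict.1 hf⟩, ?_, fun _ => rfl⟩
  refine Metric.mem_closure_iff.2 fun ε hε => ?_
  obtain ⟨p, hp⟩ := h ε hε
  refine ⟨p.toContinuousMapOn K, ⟨p, mem_univ p, rfl⟩, ?_⟩
  rw [ContinuousMap.dist_lt_iff hε]
  intro z
  rw [dist_comm, dist_eq_norm]
  exact hp z z.2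

theorem comp_mem_polyClosure (hg : g ∈ polyClosure L)
    (hf : f ∈ polyClosure K) (hfg : MapsTo f K L) : (fun z => g (f z)) ∈ polyClosure K := by
  refine mem_polyClosure_of_forall_exists ((continuousOn_of_mem_polyClosure hg).comp
    (continuousOn_of_mem_polyClosure hf) hfg) fun ε hε => ?_
  obtain ⟨p, hp⟩ := exists_polynomial_norm_sub_lt hg (half_pos hε)
  have hpf : (fun z => p.eval (f z)) ∈ polyClosure K := by
    convert Algebra.adjoin_le (singleton_subset_iff.2 hf)
      (aeval_mem_adjoin_singleton ℂ f (p := p)) using 1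
    ext z
    simp [aeval_fn_apply]
  obtain ⟨q, hq⟩ := exists_polynomial_norm_sub_lt hpf (half_pos hε)
  refine ⟨q, fun z hz => ?_⟩
  calc ‖q.eval z - g (f z)‖ ≤ ‖q.eval z - p.eval (f z)‖ + ‖p.eval (f z) - g (f z)‖ :=
        norm_sub_le_norm_sub_add_norm_sub _ _ _
    _ < ε / 2 + ε / 2 := add_lt_add (hq z hz) (hp _ (hfg hz))
    _ = ε := add_halves ε

theorem inv_sub_mem_polyClosure (hKc : IsPreconnected Kᶜ) {q : ℂ}
    (hq : q ∉ K) : (fun z => (z - q)⁻¹) ∈ polyClosure K := by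
  let A : Subalgebra ℂ C(K, ℂ) := (polynomialFunctions K).topologicalClosure
  have hA : IsClosed (A : Set C(K, ℂ)) := (polynomialFunctions K).isClosed_topologicalClosure
  have : CompleteSpace A := hA.completeSpace_coe
  let x : A := ⟨toContinuousMapOn X K, (polynomialFunctions K).le_topologicalClosure
    ⟨X, mem_univ _, rfl⟩⟩
  have hx (z : K) : (x : C(K, ℂ)) z = z := eval_X
  have hspec : spectrum ℂ (x : C(K, ℂ)) = K := by
    rw [ContinuousMap.spectrum_eq_range, funext hx, Subtype.range_coe]
  have hspecA : spectrum ℂ x = K :=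
    (Subalgebra.spectrum_eq_of_isPreconnected_compl A x (by rwa [hspec])).trans hspec
  obtain ⟨v, hv⟩ := (spectrum.notMem_iff.1 (hspecA ▸ hq)).exists_right_inv
  refine mem_polyClosure_iff.2 ⟨-v, neg_mem v.2, fun z => ?_⟩
  have hvz : (q - z) * (v : C(K, ℂ)) z = 1 := by
    simpa [hx] using congrArg (fun a : A => (a : C(K, ℂ)) z) hv
  rw [ContinuousMap.neg_apply, ← neg_sub q, inv_neg, eq_inv_of_mul_eq_one_right hvz]

theorem mem_polyClosure_of_differentiableOn {r R : ℝ} (hr : r < R)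
    (hf : DifferentiableOn ℂ f (ball 0 R)) : f ∈ polyClosure (closedBall 0 r) := by
  refine mem_polyClosure_of_forall_exists
    (hf.continuousOn.mono (closedBall_subset_ball hr)) fun ε hε => ?_
  rcases lt_or_ge r 0 with hr0 | hr0
  · exact ⟨0, by simp [closedBall_eq_empty.2 hr0]⟩
  obtain ⟨s, hrs, hsR⟩ := exists_between hr
  obtain ⟨t, hrt, hts⟩ := exists_between hrs
  lift s to NNReal using hr0.trans hrs.le
  lift t to NNReal using hr0.trans hrt.le
  have hs : 0 < s := NNReal.coe_pos.1 (hr0.trans_lt hrs)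
  have hunif := ((hf.mono (closedBall_subset_ball hsR)).hasFPowerSeriesOnBall hs).tendstoUniformlyOn
    (r' := t) (by exact_mod_cast hts)
  obtain ⟨n, hn⟩ := (Metric.tendstoUniformlyOn_iff.1 hunif ε hε).exists
  refine ⟨∑ k ∈ Finset.range n, X ^ k * C ((cauchyPowerSeries f 0 s).coeff k), fun z hz => ?_⟩
  have heval : eval z (∑ k ∈ Finset.range n, X ^ k * C ((cauchyPowerSeries f 0 s).coeff k)) =
      (cauchyPowerSeries f 0 s).partialSum n z := by
    simp only [FormalMultilinearSeries.partialSum, eval_finsetSum, eval_mul, eval_pow, eval_X,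
      eval_C, FormalMultilinearSeries.apply_eq_pow_smul_coeff, smul_eq_mul]
  rw [heval, ← dist_eq_norm, dist_comm]
  simpa only [zero_add] using hn z (closedBall_subset_ball hrt hz)

theorem sqrt_one_add_mem_polyClosure (hf : f ∈ polyClosure K)
    (hf2 : ∀ z ∈ K, ‖f z‖ ≤ 1 / 2) : (fun z => Complex.sqrt (1 + f z)) ∈ polyClosure K := by
  have hdiff : DifferentiableOn ℂ (fun w => Complex.sqrt (1 + w)) (ball 0 1) := fun w hw =>
    ((Complex.differentiableAt_sqrt (Complex.mem_slitPlane_of_norm_lt_one (by simpa using hw))).comp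
      w (differentiableAt_id.const_add 1)).differentiableWithinAt
  exact comp_mem_polyClosure (g := fun w => Complex.sqrt (1 + w))
    (mem_polyClosure_of_differentiableOn one_half_lt_one hdiff) hf
    fun z hz => mem_closedBall_zero_iff.2 (hf2 z hz)

end PolyClosure

section SqrtLink

variable {K : Set ℂ} [CompactSpace K] {a b c d : ℂ} {δ : ℝ}

/-- A branch in `P(K)` of `√((z - a) / (z - b))` which, outside the disc of radius `10 δ` about `c`,
takes its values in the sector `|arg| < π / 4`. The sector condition singles out the branch tending
to `1` at infinity, so that such branches can be multiplied. -/
def SqrtLink (K : Set ℂ) [CompactSpace K] (c : ℂ) (δ : ℝ) (a b : ℂ) : Prop :=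
  ∃ S ∈ polyClosure K, ∀ z ∈ K,
    S z ^ 2 = (z - a) / (z - b) ∧ (10 * δ ≤ ‖z - c‖ → |(S z).im| < (S z).re)

theorem abs_im_lt_re_of_sq {s : ℂ} (hs : 0 ≤ s.re) (hs2 : 0 < (s ^ 2).re) : |s.im| < s.re := by
  rw [sq, Complex.mul_re] at hs2
  exact abs_lt_of_sq_lt_sq (by linarith) hs

theorem re_mul_pos_of_abs_im_lt_re {s t : ℂ} (hs : |s.im| < s.re) (ht : |t.im| < t.re) :
    0 < (s * t).re := by
  rw [Complex.mul_re, sub_pos]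
  exact (le_abs_self _).trans_lt
    (abs_mul s.im t.im ▸ mul_lt_mul'' hs ht (abs_nonneg _) (abs_nonneg _))

theorem sub_div_sub_eq {z a b : ℂ} (h : z ≠ b) : (z - a) / (z - b) = 1 + (b - a) * (z - b)⁻¹ := by
  have := sub_ne_zero.2 h
  field_simp
  ring

theorem re_one_add_pos {h : ℂ} (hh : ‖h‖ < 1) : 0 < (1 + h).re := by
  have := (abs_le.1 (Complex.abs_re_le_norm h)).1
  rw [Complex.add_re, Complex.one_re]
  linarith

theorem sqrtLink_refl (ha : a ∉ K) : SqrtLink K c δ a a := by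
  refine ⟨1, one_mem _, fun z hz => ⟨?_, fun _ => by simp⟩⟩
  rw [div_self (sub_ne_zero.2 (ne_of_mem_of_not_mem hz ha)), Pi.one_apply, one_pow]

theorem SqrtLink.trans (hab : SqrtLink K c δ a b) (hbd : SqrtLink K c δ b d) (hb : b ∉ K)
    (hac : ‖a - c‖ < 2 * δ) (hdc : ‖d - c‖ < 2 * δ) : SqrtLink K c δ a d := by
  obtain ⟨S, hS, hS'⟩ := hab
  obtain ⟨T, hT, hT'⟩ := hbd
  have hmul : ∀ z ∈ K, (S z * T z) ^ 2 = (z - a) / (z - d) := fun z hz => by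
    rw [mul_pow, (hS' z hz).1, (hT' z hz).1,
      div_mul_div_cancel₀ (sub_ne_zero.2 (ne_of_mem_of_not_mem hz hb))]
  refine ⟨_, mul_mem hS hT, fun z hz => ⟨hmul z hz, fun hzc => abs_im_lt_re_of_sq
    (re_mul_pos_of_abs_im_lt_re ((hS' z hz).2 hzc) ((hT' z hz).2 hzc)).le ?_⟩⟩
  have hzd : 8 * δ < ‖z - d‖ := by
    linarith [norm_sub_le_norm_sub_add_norm_sub z d c]
  have hda : ‖d - a‖ < 4 * δ := by
    linarith [norm_sub_le_norm_sub_add_norm_sub d c a, norm_sub_rev a c]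
  have hpos : 0 < ‖z - d‖ := by linarith [norm_nonneg (d - a)]
  rw [Pi.mul_apply, hmul z hz, sub_div_sub_eq (sub_ne_zero.1 (norm_pos_iff.1 hpos))]
  refine re_one_add_pos ?_
  rw [norm_mul, norm_inv, ← div_eq_mul_inv, div_lt_one hpos]
  linarith [norm_nonneg (d - a)]

theorem sqrtLink_of_two_mul_norm_sub_le (hK : IsPreconnected Kᶜ) (hb : b ∉ K)
    (hab : ∀ z ∈ K, 2 * ‖b - a‖ ≤ ‖z - b‖) : SqrtLink K c δ a b := by
  have hsmall : ∀ z ∈ K, ‖(b - a) * (z - b)⁻¹‖ ≤ 1 / 2 := fun z hz => by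
    have hzb : 0 < ‖z - b‖ := norm_pos_iff.2 (sub_ne_zero.2 (ne_of_mem_of_not_mem hz hb))
    rw [norm_mul, norm_inv, ← div_eq_mul_inv, div_le_iff₀ hzb]
    linarith [hab z hz]
  refine ⟨_, sqrt_one_add_mem_polyClosure
    (mul_mem (const_mem_polyClosure (b - a)) (inv_sub_mem_polyClosure hK hb)) hsmall,
    fun z hz => ⟨?_, fun _ => abs_im_lt_re_of_sq ?_ ?_⟩⟩
  · rw [Complex.sqrt, Complex.cpow_ofNat_inv_pow, sub_div_sub_eq (ne_of_mem_of_not_mem hz hb)]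
    rfl
  · rw [Complex.sqrt, Complex.cpow_inv_two_re]
    positivity
  · rw [Complex.sqrt, Complex.cpow_ofNat_inv_pow]
    exact re_one_add_pos ((hsmall z hz).trans_lt one_half_lt_one)

theorem eventually_sqrtLink (hK : IsPreconnected Kᶜ) {x : ℂ} (hx : x ∉ K) :
    ∀ᶠ y in 𝓝 x, SqrtLink K c δ x y ∧ SqrtLink K c δ y x := by
  have hopen : IsOpen Kᶜ := (isCompact_iff_compactSpace.2 ‹_›).isClosed.isOpen_compl
  obtain ⟨r, hr, hball⟩ := Metric.isOpen_iff.1 hopen x hx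
  filter_upwards [ball_mem_nhds x (by positivity : 0 < r / 3)] with y hy
  have hyx : ‖y - x‖ < r / 3 := mem_ball_iff_norm.1 hy
  have hzx : ∀ z ∈ K, r ≤ ‖z - x‖ := fun z hz =>
    not_lt.1 fun h => hball (mem_ball_iff_norm.2 h) hz
  refine ⟨sqrtLink_of_two_mul_norm_sub_le hK (hball (ball_subset_ball (by linarith) hy)) ?_,
    sqrtLink_of_two_mul_norm_sub_le hK hx ?_⟩ <;> intro z hz
  · linarith [hzx z hz, norm_sub_le_norm_sub_add_norm_sub z y x]
  · linarith [hzx z hz, norm_sub_rev x y]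

/-- Otherwise the points linked to `c` would form a component of `Kᶜ` inside the disc of radius `δ`
about `c`. -/
theorem exists_sqrtLink (hK : IsPreconnected Kᶜ) (hc : c ∉ K) (hδ : 0 < δ) :
    ∃ b ∉ K, δ ≤ ‖b - c‖ ∧ ‖b - c‖ < 2 * δ ∧ SqrtLink K c δ c b := by
  by_contra! hcon
  have hcc : ‖c - c‖ < 2 * δ := by simpa using hδ
  let W : Set ℂ := {q | ‖q - c‖ < δ ∧ SqrtLink K c δ c q}
  have hstep : ∀ x y, x ∉ K → y ∉ K → ‖y - x‖ < δ → SqrtLink K c δ x y → x ∈ W → y ∈ W := by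
    intro x y hx hy hyx hlink hxW
    have hyc : ‖y - c‖ < 2 * δ := by
      linarith [hxW.1, norm_sub_le_norm_sub_add_norm_sub y x c]
    have hcy := hxW.2.trans hlink hx hcc hyc
    exact ⟨not_le.1 fun h => hcon y hy h hyc hcy, hcy⟩
  have hlocal : ∀ x ∈ Kᶜ, ∀ᶠ y in 𝓝[Kᶜ] x, (x ∈ W → y ∈ W) ∧ (y ∈ W → x ∈ W) := by
    intro x hx
    filter_upwards [nhdsWithin_le_nhds (eventually_sqrtLink (c := c) (δ := δ) hK hx),
      nhdsWithin_le_nhds (ball_mem_nhds x hδ), self_mem_nhdsWithin] with y hlink hy hyK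
    have hyx : ‖y - x‖ < δ := mem_ball_iff_norm.1 hy
    exact ⟨hstep x y hx hyK hyx hlink.1, hstep y x hyK hx (norm_sub_rev x y ▸ hyx) hlink.2⟩
  have hcW : c ∈ W := ⟨by simpa using hδ, sqrtLink_refl hc⟩
  have hsub : Kᶜ ⊆ ball c δ := fun y hy => mem_ball_iff_norm.2
    (hK.induction₂' (fun x y => x ∈ W → y ∈ W) hlocal (fun _ _ _ _ _ _ h h' => h' ∘ h) hc hy hcW).1
  have hbdd : Bornology.IsBounded (K ∪ Kᶜ) :=
    (isCompact_iff_compactSpace.2 ‹_›).isBounded.union (isBounded_ball.subset hsub)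
  exact NormedSpace.unbounded_univ ℂ ℂ (union_compl_self K ▸ hbdd)

end SqrtLink

section CauchyKernel

variable {K : Set ℂ} [CompactSpace K] {c : ℂ} {δ : ℝ}

/-- The profile of the error in Mergelyan's approximation of the Cauchy kernel: comparable with
`1 / y` for `y ≤ δ` and with `δ² / y³` for `y ≥ δ`. -/
noncomputable def errorProfile (δ y : ℝ) : ℝ := (y * (1 + (y / δ) ^ 2))⁻¹

theorem norm_le_of_sector {u b s : ℂ} (hs : |s.im| < s.re) (hb : 9 * ‖b‖ ≤ ‖u‖) :
    ‖u‖ ≤ ‖u + (u + b) * s‖ := by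
  rcases eq_or_ne u 0 with rfl | hu
  · simpa using by positivity
  have hq : ‖b / u‖ ≤ 1 / 9 := by
    rw [norm_div, div_le_iff₀ (norm_pos_iff.2 hu)]
    linarith
  have hqre := abs_le.1 ((Complex.abs_re_le_norm _).trans hq)
  have hqim := (Complex.abs_im_le_norm _).trans hq
  have him : (b / u).im * s.im ≤ 1 / 9 * s.re :=
    (le_abs_self _).trans
      (abs_mul (b / u).im s.im ▸ mul_le_mul hqim hs.le (abs_nonneg _) (by norm_num))
  have hone : 1 ≤ (1 + (1 + b / u) * s).re := by
    simp only [Complex.add_re, Complex.mul_re, Complex.one_re, Complex.add_im, Complex.one_im]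
    nlinarith [abs_nonneg s.im]
  have hfac : u + (u + b) * s = u * (1 + (1 + b / u) * s) := by
    field_simp
  rw [hfac, norm_mul]
  exact le_mul_of_one_le_right (norm_nonneg u) (hone.trans (Complex.re_le_norm _))

/-- With `m` the midpoint and `d` the difference of two linked points `b` and `c`, take
`g = 8 d⁻² (z - m - √((z - b) (z - c)))`, the smaller root of `d² g² / 16 - (z - m) g + 1`. -/
theorem exists_quadratic_kernel (hK : IsPreconnected Kᶜ) (hc : c ∉ K) (hδ : 0 < δ) :
    ∃ g ∈ polyClosure K, ∃ m d : ℂ, ‖m - c‖ ≤ δ ∧ δ ≤ ‖d‖ ∧ ‖d‖ ≤ 2 * δ ∧ ∀ z ∈ K,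
      g z * (z - m) - 1 = d ^ 2 / 16 * g z ^ 2 ∧
        (10 * δ ≤ ‖z - c‖ → ‖g z‖ * ‖z - m‖ ≤ 2) := by
  obtain ⟨b, hb, hδb, hbδ, S, hS, hSK⟩ := exists_sqrtLink hK hc hδ
  have hd : b - c ≠ 0 := norm_pos_iff.1 (hδ.trans_le hδb)
  have hmc : (b + c) / 2 - c = (b - c) / 2 := by ring
  have hhalf : ‖(b - c) / 2‖ ≤ δ := by
    rw [norm_div, Complex.norm_ofNat]
    linarith
  refine ⟨fun z => 8 / (b - c) ^ 2 * ((z - (b + c) / 2) - (z - b) * S z),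
    mul_mem (const_mem_polyClosure _) (sub_mem (sub_mem id_mem_polyClosure
      (const_mem_polyClosure _)) (mul_mem (sub_mem id_mem_polyClosure (const_mem_polyClosure _))
      hS)), (b + c) / 2, b - c, hmc ▸ hhalf, hδb, hbδ.le, fun z hz => ?_⟩
  obtain ⟨hS2, hsector⟩ := hSK z hz
  have hzb : z - b ≠ 0 := sub_ne_zero.2 (ne_of_mem_of_not_mem hz hb)
  rw [eq_div_iff hzb] at hS2
  refine ⟨?_, fun hzc => ?_⟩
  · field_simp
    linear_combination (-256) * (z - b) * hS2
  · have hzm : 9 * δ ≤ ‖z - (b + c) / 2‖ := by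
      linarith [norm_sub_le_norm_sub_add_norm_sub z ((b + c) / 2) c, hmc ▸ hhalf]
    have hu : ‖z - (b + c) / 2‖ ≤ ‖z - (b + c) / 2 + (z - b) * S z‖ := by
      convert norm_le_of_sector (u := z - (b + c) / 2) (b := -((b - c) / 2)) (hsector hzc)
        (by rw [norm_neg]; linarith) using 3
      ring
    calc _ ≤ ‖8 / (b - c) ^ 2 * ((z - (b + c) / 2) - (z - b) * S z)‖ *
          ‖z - (b + c) / 2 + (z - b) * S z‖ := by gcongr
      _ = ‖(2 : ℂ)‖ := by
        rw [← norm_mul]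
        congr 1
        field_simp
        linear_combination (-32) * (z - b) * hS2
      _ = 2 := Complex.norm_ofNat 2

theorem le_errorProfile {y : ℝ} (hδ : 0 < δ) (hy : 0 < y) (hyδ : y ≤ 12 * δ) :
    (145 * y)⁻¹ ≤ errorProfile δ y := by
  have hq : y / δ ≤ 12 := (div_le_iff₀ hδ).2 hyδ
  have hq0 : 0 < y / δ := by positivity
  have h145 : 1 + (y / δ) ^ 2 ≤ 145 := by nlinarith
  rw [errorProfile, mul_comm 145]
  gcongr

theorem le_errorProfile_of_le {x y : ℝ} (hδ : 0 < δ) (hy : 0 < y) (hx : 9 * δ ≤ x)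
    (hyx : y ≤ 4 / 3 * x) : δ ^ 2 / (3 * x ^ 3) ≤ errorProfile δ y := by
  have hx0 : 0 < x := by linarith
  have hsq : δ ^ 2 + y ^ 2 ≤ 9 / 4 * x ^ 2 := by nlinarith
  have heq : errorProfile δ y = δ ^ 2 / (y * (δ ^ 2 + y ^ 2)) := by
    rw [errorProfile]
    field_simp
  rw [heq]
  refine div_le_div_of_nonneg_left (by positivity) (by positivity) ?_
  calc y * (δ ^ 2 + y ^ 2) ≤ 4 / 3 * x * (9 / 4 * x ^ 2) := by gcongr
    _ = 3 * x ^ 3 := by ring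

variable {g d u ζ : ℂ}

/-- The error at distance: `g + ζ g² - (u - ζ)⁻¹ = (e (1 + ζ g) - ζ² g²) / (u - ζ)` for
`e = g u - 1`. -/
theorem norm_add_mul_sq_sub_inv_le_of_far (hδ : 0 < δ) (hd : ‖d‖ ≤ 2 * δ)
    (hζ : ‖ζ‖ ≤ 3 * δ) (hu : 9 * δ ≤ ‖u‖) (hgu : g * u - 1 = d ^ 2 / 16 * g ^ 2)
    (hg : ‖g‖ * ‖u‖ ≤ 2) : ‖g + ζ * g ^ 2 - (u - ζ)⁻¹‖ ≤ 60 * δ ^ 2 / ‖u‖ ^ 3 := by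
  have hu0 : 0 < ‖u‖ := by linarith
  have huζ : 2 / 3 * ‖u‖ ≤ ‖u - ζ‖ := by linarith [norm_sub_norm_le u ζ]
  have huζ0 : u - ζ ≠ 0 := norm_pos_iff.1 (by linarith)
  have hg' : ‖g‖ ≤ 2 / ‖u‖ := (le_div_iff₀ hu0).2 hg
  have he : ‖g * u - 1‖ ≤ δ ^ 2 / ‖u‖ ^ 2 := by
    rw [hgu, norm_mul, norm_div, norm_pow, norm_pow, Complex.norm_ofNat]
    calc ‖d‖ ^ 2 / 16 * ‖g‖ ^ 2 ≤ (2 * δ) ^ 2 / 16 * (2 / ‖u‖) ^ 2 := by gcongr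
      _ = δ ^ 2 / ‖u‖ ^ 2 := by ring
  have hζg : ‖ζ * g‖ ≤ 1 := by
    rw [norm_mul]
    calc ‖ζ‖ * ‖g‖ ≤ ‖u‖ / 3 * (2 / ‖u‖) := by gcongr; linarith
      _ ≤ 1 := by field_simp; norm_num
  have hζg2 : ‖ζ ^ 2 * g ^ 2‖ ≤ 36 * (δ ^ 2 / ‖u‖ ^ 2) := by
    rw [norm_mul, norm_pow, norm_pow]
    calc ‖ζ‖ ^ 2 * ‖g‖ ^ 2 ≤ (3 * δ) ^ 2 * (2 / ‖u‖) ^ 2 := by gcongr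
      _ = 36 * (δ ^ 2 / ‖u‖ ^ 2) := by ring
  have hnum : ‖(g * u - 1) * (1 + ζ * g) - ζ ^ 2 * g ^ 2‖ ≤ 38 * (δ ^ 2 / ‖u‖ ^ 2) := by
    calc _ ≤ ‖g * u - 1‖ * ‖1 + ζ * g‖ + ‖ζ ^ 2 * g ^ 2‖ :=
          norm_mul (g * u - 1) (1 + ζ * g) ▸ norm_sub_le _ _
      _ ≤ δ ^ 2 / ‖u‖ ^ 2 * 2 + 36 * (δ ^ 2 / ‖u‖ ^ 2) := by
        gcongr
        calc ‖1 + ζ * g‖ ≤ ‖(1 : ℂ)‖ + ‖ζ * g‖ := norm_add_le _ _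
          _ ≤ 2 := by rw [norm_one]; linarith
      _ = 38 * (δ ^ 2 / ‖u‖ ^ 2) := by ring
  have hfac : g + ζ * g ^ 2 - (u - ζ)⁻¹ =
      ((g * u - 1) * (1 + ζ * g) - ζ ^ 2 * g ^ 2) / (u - ζ) := by
    field_simp
    ring
  rw [hfac, norm_div]
  calc _ ≤ 38 * (δ ^ 2 / ‖u‖ ^ 2) / (2 / 3 * ‖u‖) := by gcongr
    _ ≤ 60 * δ ^ 2 / ‖u‖ ^ 3 := by
      field_simp
      norm_num

theorem norm_add_mul_sq_le_of_near (hδ : 0 < δ) (hd : δ ≤ ‖d‖) (hζ : ‖ζ‖ ≤ 3 * δ)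
    (hu : ‖u‖ ≤ 11 * δ) (hgu : g * u - 1 = d ^ 2 / 16 * g ^ 2) :
    δ * ‖g + ζ * g ^ 2‖ ≤ 10 ^ 5 := by
  have hquad : (δ * ‖g‖) ^ 2 ≤ 16 * (11 * (δ * ‖g‖) + 1) := by
    have h16 : ‖d‖ ^ 2 * ‖g‖ ^ 2 = 16 * ‖g * u - 1‖ := by
      rw [hgu, norm_mul, norm_div, norm_pow, norm_pow, Complex.norm_ofNat]
      ring
    calc (δ * ‖g‖) ^ 2 ≤ ‖d‖ ^ 2 * ‖g‖ ^ 2 := by rw [mul_pow]; gcongr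
      _ = 16 * ‖g * u - 1‖ := h16
      _ ≤ 16 * (‖g‖ * ‖u‖ + ‖(1 : ℂ)‖) := by gcongr; exact norm_mul g u ▸ norm_sub_le _ _
      _ ≤ 16 * (‖g‖ * (11 * δ) + 1) := by rw [norm_one]; gcongr
      _ = 16 * (11 * (δ * ‖g‖) + 1) := by ring
  have hx : δ * ‖g‖ ≤ 177 := by nlinarith [norm_nonneg g]
  calc δ * ‖g + ζ * g ^ 2‖ ≤ δ * (‖g‖ + ‖ζ‖ * ‖g‖ ^ 2) := by
        gcongr
        exact (norm_add_le g (ζ * g ^ 2)).trans_eq (by rw [norm_mul, norm_pow])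
    _ ≤ δ * (‖g‖ + 3 * δ * ‖g‖ ^ 2) := by gcongr
    _ = δ * ‖g‖ + 3 * (δ * ‖g‖) ^ 2 := by ring
    _ ≤ 177 + 3 * 177 ^ 2 := by gcongr
    _ ≤ 10 ^ 5 := by norm_num

theorem exists_cauchy_kernel (hK : IsPreconnected Kᶜ) (hc : c ∉ K) (hδ : 0 < δ) :
    ∃ g ∈ polyClosure K, ∃ m, ∀ z ∈ K, ∀ ζ, ‖ζ - c‖ ≤ 2 * δ → z ≠ ζ →
      ‖g z + (ζ - m) * g z ^ 2 - (z - ζ)⁻¹‖ ≤ 10 ^ 9 * errorProfile δ ‖z - ζ‖ := by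
  obtain ⟨g, hg, m, d, hm, hδd, hdδ, hgK⟩ := exists_quadratic_kernel hK hc hδ
  refine ⟨g, hg, m, fun z hz ζ hζ hzζ => ?_⟩
  obtain ⟨hquad, hfar⟩ := hgK z hz
  have hζm : ‖ζ - m‖ ≤ 3 * δ := by
    linarith [norm_sub_le_norm_sub_add_norm_sub ζ c m, norm_sub_rev c m]
  have hy : 0 < ‖z - ζ‖ := norm_pos_iff.2 (sub_ne_zero.2 hzζ)
  rcases le_or_gt (10 * δ) ‖z - c‖ with hzc | hzc
  · have hu : 9 * δ ≤ ‖z - m‖ := by linarith [norm_sub_le_norm_sub_add_norm_sub z m c]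
    have hyu : ‖z - ζ‖ ≤ 4 / 3 * ‖z - m‖ := by
      linarith [norm_sub_le_norm_sub_add_norm_sub z m ζ, norm_sub_rev m ζ]
    have herr := le_errorProfile_of_le hδ hy hu hyu
    have hbound := norm_add_mul_sq_sub_inv_le_of_far hδ hdδ hζm hu hquad (hfar hzc)
    rw [sub_sub_sub_cancel_right] at hbound
    calc _ ≤ 60 * δ ^ 2 / ‖z - m‖ ^ 3 := hbound
      _ = 180 * (δ ^ 2 / (3 * ‖z - m‖ ^ 3)) := by ring
      _ ≤ 10 ^ 9 * errorProfile δ ‖z - ζ‖ := by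
        gcongr
        norm_num
  · have hu : ‖z - m‖ ≤ 11 * δ := by
      linarith [norm_sub_le_norm_sub_add_norm_sub z c m, norm_sub_rev c m]
    have hyδ : ‖z - ζ‖ ≤ 12 * δ := by
      linarith [norm_sub_le_norm_sub_add_norm_sub z c ζ, norm_sub_rev c ζ]
    have hnear := norm_add_mul_sq_le_of_near hδ hδd hζm hu hquad
    have herr := le_errorProfile hδ hy hyδ
    calc _ ≤ ‖g z + (ζ - m) * g z ^ 2‖ + ‖z - ζ‖⁻¹ := norm_inv (z - ζ) ▸ norm_sub_le _ _
      _ ≤ 10 ^ 5 * 12 / ‖z - ζ‖ + ‖z - ζ‖⁻¹ := by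
        gcongr
        rw [le_div_iff₀ hy]
        nlinarith [norm_nonneg (g z + (ζ - m) * g z ^ 2)]
      _ = (10 ^ 5 * 12 + 1) * 145 * (145 * ‖z - ζ‖)⁻¹ := by
        field_simp
      _ ≤ 10 ^ 9 * errorProfile δ ‖z - ζ‖ := by
        gcongr
        norm_num

end CauchyKernel

section PolarCoordinates

theorem polarCoord_symm_eq_circleMap (r θ : ℝ) :
    Complex.polarCoord.symm (r, θ) = circleMap 0 r θ := by
  rw [Complex.polarCoord_symm_apply, circleMap, Complex.exp_mul_I, zero_add]
  simp

theorem integrableOn_smul_comp_polarCoord_symm {F : ℂ → ℂ} (hF : Measurable F)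
    (hFi : Integrable F) : IntegrableOn (fun p : ℝ × ℝ => p.1 • F (Complex.polarCoord.symm p))
      (Ioi 0 ×ˢ Ioo (-π) π) := by
  have hsymm : Measurable (fun p : ℝ × ℝ => Complex.polarCoord.symm p) := by
    simp only [Complex.polarCoord_symm_apply]
    fun_prop
  refine ⟨(measurable_fst.smul (hF.comp hsymm)).aestronglyMeasurable, ?_⟩
  have hpolar := Complex.lintegral_comp_polarCoord_symm (fun z => ‖F z‖ₑ)
  rw [polarCoord_target] at hpolar
  refine lt_of_eq_of_lt ?_ (hpolar.trans_lt hFi.2)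
  refine setLIntegral_congr_fun (measurableSet_Ioi.prod measurableSet_Ioo) fun p hp => ?_
  simp only [enorm_smul, smul_eq_mul, Real.enorm_of_nonneg (le_of_lt hp.1)]

theorem integral_eq_integral_circleMap {F : ℂ → ℂ} (hF : Measurable F) (hFi : Integrable F) :
    ∫ ζ, F ζ = ∫ r in Ioi (0 : ℝ), ∫ θ in Ioo (-π) π, r • F (circleMap 0 r θ) := by
  have hint := integrableOn_smul_comp_polarCoord_symm hF hFi
  rw [← Complex.integral_comp_polarCoord_symm, polarCoord_target]
  rw [Measure.volume_eq_prod] at hint ⊢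
  rw [setIntegral_prod _ hint]
  simp only [polarCoord_symm_eq_circleMap]

theorem circleIntegral_eq_integral_Ioo (h : ℂ → ℂ) (r : ℝ) :
    ∮ z in C(0, r), h z =
      ∫ θ in Ioo (-π) π, Complex.I * circleMap 0 r θ * h (circleMap 0 r θ) := by
  have hper : Function.Periodic
      (fun θ => Complex.I * circleMap 0 r θ * h (circleMap 0 r θ)) (2 * π) := fun θ => by
    simp only [periodic_circleMap 0 r θ]
  have hshift := hper.intervalIntegral_add_eq 0 (-π)
  rw [zero_add, show -π + 2 * π = π by ring,
    intervalIntegral.integral_of_le (by linarith [Real.pi_pos] : -π ≤ π),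
    integral_Ioc_eq_integral_Ioo] at hshift
  rw [← hshift, circleIntegral]
  simp only [deriv_circleMap, smul_eq_mul, mul_comm Complex.I]

end PolarCoordinates

section DiscKernel

variable {δ : ℝ} {h f : ℂ → ℂ}

/-- The function `ζ ↦ ζ` cut off to the disc of radius `δ`. It is `-∂/∂ζ̄` of the bump function
`(δ² - |ζ|²)₊`, hence annihilates holomorphic functions while its Cauchy transform is a multiple of
that bump function. -/
noncomputable def discKernel (δ : ℝ) : ℂ → ℂ := (ball 0 δ).indicator id

theorem discKernel_of_norm_lt {ζ : ℂ} (hζ : ‖ζ‖ < δ) : discKernel δ ζ = ζ :=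
  indicator_of_mem (mem_ball_zero_iff.2 hζ) _

theorem discKernel_of_le_norm {ζ : ℂ} (hζ : δ ≤ ‖ζ‖) : discKernel δ ζ = 0 :=
  indicator_of_notMem (fun hmem => hζ.not_gt (mem_ball_zero_iff.1 hmem)) _

theorem measurable_discKernel : Measurable (discKernel δ) :=
  measurable_id.indicator measurableSet_ball

theorem norm_discKernel_le (hδ : 0 ≤ δ) (ζ : ℂ) : ‖discKernel δ ζ‖ ≤ δ := by
  rcases lt_or_ge ‖ζ‖ δ with hζ | hζ
  · rw [discKernel_of_norm_lt hζ]
    exact hζ.le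
  · rw [discKernel_of_le_norm hζ, norm_zero]
    exact hδ

theorem integral_discKernel_mul (hm : Measurable h)
    (hi : Integrable fun ζ => discKernel δ ζ * h ζ) :
    ∫ ζ, discKernel δ ζ * h ζ =
      ∫ r in Ioo 0 δ, -Complex.I * r * ∮ z in C(0, r), h z := by
  have hmeas : Measurable fun ζ => discKernel δ ζ * h ζ := measurable_discKernel.mul hm
  rw [integral_eq_integral_circleMap hmeas hi,
    ← Ioi_inter_Iio (a := (0 : ℝ)) (b := δ), ← setIntegral_indicator measurableSet_Iio]
  refine setIntegral_congr_fun measurableSet_Ioi fun r (hr : 0 < r) => ?_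
  have hnorm (θ : ℝ) : ‖circleMap 0 r θ‖ = r := by rw [norm_circleMap_zero, abs_of_pos hr]
  rcases lt_or_ge r δ with hrδ | hrδ
  · rw [indicator_of_mem (mem_Iio.2 hrδ), circleIntegral_eq_integral_Ioo, ← integral_const_mul]
    congr 1
    ext θ
    rw [discKernel_of_norm_lt ((hnorm θ).trans_lt hrδ), Complex.real_smul]
    linear_combination (r * circleMap 0 r θ * h (circleMap 0 r θ)) * Complex.I_sq
  · rw [indicator_of_notMem (notMem_Iio.2 hrδ)]
    simp only [discKernel_of_le_norm (hrδ.trans_eq (hnorm _).symm), zero_mul, smul_zero,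
      integral_zero]

theorem integrable_discKernel_mul (hf : ContinuousOn f (closedBall 0 δ)) :
    Integrable fun ζ => discKernel δ ζ * f ζ := by
  have hint : IntegrableOn (fun ζ => ζ * f ζ) (ball 0 δ) :=
    ((continuousOn_id.mul hf).integrableOn_compact (isCompact_closedBall 0 δ)).mono_set
      ball_subset_closedBall
  refine (hint.integrable_indicator measurableSet_ball).congr (.of_forall fun ζ => ?_)
  exact indicator_mul_left (ball 0 δ) id f

theorem circleIntegral_eq_zero_of_differentiableOn {r : ℝ} (hr : 0 < r)
    (hf : DifferentiableOn ℂ f (closedBall 0 r)) : ∮ z in C(0, r), f z = 0 :=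
  DiffContOnCl.circleIntegral_eq_zero hr.le
    (DifferentiableOn.diffContOnCl (by rwa [closure_ball _ hr.ne']))

theorem integral_discKernel_mul_eq_zero (hf : DifferentiableOn ℂ f (closedBall 0 δ)) :
    ∫ ζ, discKernel δ ζ * f ζ = 0 := by
  classical
  let h : ℂ → ℂ := (closedBall (0 : ℂ) δ).piecewise f 0
  have hh : Measurable h := hf.continuousOn.measurable_piecewise continuousOn_const
    isClosed_closedBall.measurableSet
  have hhf : EqOn h f (closedBall 0 δ) := piecewise_eqOn _ _ _
  have hcongr : (fun ζ => discKernel δ ζ * f ζ) = fun ζ => discKernel δ ζ * h ζ := by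
    ext ζ
    rcases lt_or_ge ‖ζ‖ δ with hζ | hζ
    · rw [hhf (mem_closedBall_zero_iff.2 hζ.le)]
    · rw [discKernel_of_le_norm hζ, zero_mul, zero_mul]
  rw [hcongr, integral_discKernel_mul hh (hcongr ▸ integrable_discKernel_mul hf.continuousOn)]
  refine setIntegral_eq_zero_of_forall_eq_zero fun r hr => ?_
  have hball : closedBall (0 : ℂ) r ⊆ closedBall 0 δ := closedBall_subset_closedBall hr.2.le
  rw [circleIntegral_eq_zero_of_differentiableOn hr.1 ((hf.mono hball).congr (hhf.mono hball)),
    mul_zero]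

theorem integrableOn_inv_norm (R : ℝ) : IntegrableOn (fun ζ : ℂ => ‖ζ‖⁻¹) (ball 0 R) := by
  rw [integrableOn_fun_norm_addHaar volume (f := fun y : ℝ => y⁻¹)]
  refine IntegrableOn.congr_fun (integrableOn_const (C := (1 : ℝ)) (by simp)) (fun y hy => ?_)
    measurableSet_Ioo
  simp [Complex.finrank_real_complex, hy.1.ne']

theorem integrableOn_inv_norm_sub (z : ℂ) (R : ℝ) :
    IntegrableOn (fun ζ : ℂ => ‖z - ζ‖⁻¹) (ball 0 R) := by
  have h := ((integrableOn_inv_norm (R + ‖z‖)).integrable_indicator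
    measurableSet_ball).comp_sub_left z
  refine h.integrableOn.congr_fun (fun ζ hζ => indicator_of_mem ?_ _) measurableSet_ball
  rw [mem_ball_zero_iff] at hζ ⊢
  linarith [norm_sub_le z ζ]

theorem circleIntegral_inv_sub {z : ℂ} {r : ℝ} (hr : 0 < r) (hz : r ≠ ‖z‖) :
    ∮ ζ in C(0, r), (z - ζ)⁻¹ = if ‖z‖ < r then -(2 * π * Complex.I) else 0 := by
  split_ifs with hzr
  · rw [← circleIntegral.integral_sub_inv_of_mem_ball (mem_ball_zero_iff.2 hzr),
      ← neg_one_smul ℂ, ← circleIntegral.integral_smul]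
    congr 1
    ext ζ
    rw [neg_one_smul, ← inv_neg, neg_sub]
  · refine circleIntegral_eq_zero_of_differentiableOn hr fun ζ hζ => ?_
    have hne : z - ζ ≠ 0 := fun h0 => by
      rw [← sub_eq_zero.1 h0, mem_closedBall_zero_iff] at hζ
      exact hzr (hζ.lt_of_ne hz.symm)
    exact ((differentiableAt_id.const_sub z).inv hne).differentiableWithinAt

/-- The bump function `(δ² - |z|²)₊`. Divided by its integral it is the averaging weight in
Mergelyan's construction. -/
noncomputable def bump (δ : ℝ) (z : ℂ) : ℝ := max (δ ^ 2 - ‖z‖ ^ 2) 0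

theorem integral_Ioo_indicator_Ioi {s : ℝ} (hδ : 0 ≤ δ) (hs : 0 ≤ s) :
    ∫ r in Ioo 0 δ, (Ioi s).indicator (fun r => r) r = max (δ ^ 2 - s ^ 2) 0 / 2 := by
  have hinter : Ioo 0 δ ∩ Ioi s = Ioo s δ := by
    rw [Ioo, Ioi, Ioo]
    ext r
    exact ⟨fun hr => ⟨hr.2, hr.1.2⟩, fun hr => ⟨⟨hs.trans_lt hr.1, hr.2⟩, hr.1⟩⟩
  rw [setIntegral_indicator measurableSet_Ioi, hinter]
  rcases le_or_gt s δ with hsδ | hsδ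
  · rw [← integral_Ioc_eq_integral_Ioo, ← intervalIntegral.integral_of_le hsδ, integral_id,
      max_eq_left (by nlinarith)]
  · rw [Ioo_eq_empty hsδ.not_gt, setIntegral_empty, max_eq_right (by nlinarith), zero_div]

theorem integral_discKernel_mul_inv_sub (hδ : 0 ≤ δ) (z : ℂ) :
    ∫ ζ, discKernel δ ζ * (z - ζ)⁻¹ = -π * bump δ z := by
  have hint : Integrable fun ζ => discKernel δ ζ * (z - ζ)⁻¹ := by
    have hdom : IntegrableOn (fun ζ => δ * ‖z - ζ‖⁻¹) (ball 0 δ) :=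
      (integrableOn_inv_norm_sub z δ).const_mul δ
    refine (hdom.integrable_indicator measurableSet_ball).mono'
      (measurable_discKernel.mul (by fun_prop)).aestronglyMeasurable (.of_forall fun ζ => ?_)
    rcases lt_or_ge ‖ζ‖ δ with hζ | hζ
    · rw [indicator_of_mem (mem_ball_zero_iff.2 hζ), norm_mul, norm_inv]
      gcongr
      exact norm_discKernel_le hδ ζ
    · rw [discKernel_of_le_norm hζ, zero_mul, norm_zero]
      exact indicator_nonneg (fun _ _ => by positivity) _
  have hcircle : ∀ᵐ r : ℝ, r ∈ Ioo 0 δ → -Complex.I * r * ∮ ζ in C(0, r), (z - ζ)⁻¹ =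
      -2 * π * ((Ioi ‖z‖).indicator (fun r => r) r : ℝ) := by
    filter_upwards [Measure.ae_ne volume ‖z‖] with r hr hrδ
    rw [circleIntegral_inv_sub hrδ.1 hr]
    rcases lt_or_ge ‖z‖ r with hzr | hzr
    · rw [if_pos hzr, indicator_of_mem (mem_Ioi.2 hzr)]
      linear_combination (2 * π * r : ℂ) * Complex.I_sq
    · rw [if_neg hzr.not_gt, indicator_of_notMem (notMem_Ioi.2 hzr), mul_zero, Complex.ofReal_zero,
        mul_zero]
  rw [integral_discKernel_mul (by fun_prop) hint, setIntegral_congr_ae measurableSet_Ioo hcircle,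
    integral_const_mul, integral_complex_ofReal, integral_Ioo_indicator_Ioi hδ (norm_nonneg z),
    bump]
  push_cast
  ring

theorem integral_bump (hδ : 0 ≤ δ) : ∫ w : ℂ, bump δ w = π * δ ^ 4 / 2 := by
  have hradial : ∀ y ∈ Ioi (0 : ℝ), y ^ (Module.finrank ℝ ℂ - 1) • max (δ ^ 2 - y ^ 2) 0 =
      (Iio δ).indicator (fun y => δ ^ 2 * y - y ^ 3) y := fun y (hy : 0 < y) => by
    rw [Complex.finrank_real_complex, indicator_apply]
    split_ifs with hyδ
    · rw [max_eq_left (by nlinarith [mem_Iio.1 hyδ]), smul_eq_mul]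
      ring
    · rw [max_eq_right (by nlinarith [notMem_Iio.1 hyδ]), smul_zero]
  have hint : ∫ y in (0 : ℝ)..δ, (δ ^ 2 * y - y ^ 3) = δ ^ 4 / 4 := by
    rw [intervalIntegral.integral_sub (Continuous.intervalIntegrable (by fun_prop) _ _)
      (Continuous.intervalIntegrable (by fun_prop) _ _),
      intervalIntegral.integral_const_mul, integral_id, integral_pow]
    norm_num
    ring
  simp only [bump]
  rw [integral_fun_norm_addHaar volume (fun y : ℝ => max (δ ^ 2 - y ^ 2) 0),
    setIntegral_congr_fun measurableSet_Ioi hradial, setIntegral_indicator measurableSet_Iio,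
    Ioi_inter_Iio, ← integral_Ioc_eq_integral_Ioo, ← intervalIntegral.integral_of_le hδ, hint,
    Complex.finrank_real_complex]
  simp [Measure.real, Complex.volume_ball]
  ring

theorem pow_smul_errorProfile {y : ℝ} (hy : 0 < y) :
    y ^ (Module.finrank ℝ ℂ - 1) • errorProfile δ y = (1 + (δ⁻¹ * y) ^ 2)⁻¹ := by
  rw [Complex.finrank_real_complex, errorProfile, mul_inv, pow_one, smul_eq_mul,
    mul_inv_cancel_left₀ hy.ne', div_eq_inv_mul]

theorem integrable_errorProfile_norm (hδ : 0 < δ) :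
    Integrable fun ζ : ℂ => errorProfile δ ‖ζ‖ := by
  rw [integrable_fun_norm_addHaar volume (f := errorProfile δ),
    integrableOn_congr_fun (fun _ hy => pow_smul_errorProfile (mem_Ioi.1 hy)) measurableSet_Ioi]
  exact (integrableOn_Ioi_comp_mul_left_iff (fun x : ℝ => (1 + x ^ 2)⁻¹) 0 (inv_pos.2 hδ)).2
    integrable_inv_one_add_sq.integrableOn

theorem integral_errorProfile_norm (hδ : 0 < δ) :
    ∫ ζ : ℂ, errorProfile δ ‖ζ‖ = π ^ 2 * δ := by
  rw [integral_fun_norm_addHaar volume (errorProfile δ),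
    setIntegral_congr_fun measurableSet_Ioi (fun _ hy => pow_smul_errorProfile (mem_Ioi.1 hy)),
    integral_comp_mul_left_Ioi (fun x : ℝ => (1 + x ^ 2)⁻¹) 0 (inv_pos.2 hδ), mul_zero,
    integral_Ioi_inv_one_add_sq, Complex.finrank_real_complex]
  simp [Measure.real, Complex.volume_ball]
  ring

end DiscKernel

section DiscTransform

variable {δ R b : ℝ} {h k : ℂ → ℂ} {ζ : ℂ}

/-- The convolution of `h` with `discKernel δ`, Mergelyan's substitute for the `∂̄`-derivative of
the average of `h` over discs of radius `δ`. -/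
noncomputable def discTransform (δ : ℝ) (h : ℂ → ℂ) (ζ : ℂ) : ℂ :=
  ∫ w, h w * discKernel δ (ζ - w)

theorem integrable_discKernel : Integrable (discKernel δ) := by
  refine IntegrableOn.integrable_indicator ?_ measurableSet_ball
  exact (continuousOn_id.integrableOn_compact (isCompact_closedBall 0 δ)).mono_set
    ball_subset_closedBall

theorem integrable_discTransform (hh : Integrable h) : Integrable (discTransform δ h) :=
  hh.integrable_convolution (ContinuousLinearMap.mul ℂ ℂ) integrable_discKernel

theorem integrable_mul_discKernel_sub (hδ : 0 ≤ δ) (hh : Integrable h) (ζ : ℂ) :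
    Integrable fun w => h w * discKernel δ (ζ - w) :=
  hh.mul_bdd (c := δ) (measurable_discKernel.comp (measurable_const_sub ζ)).aestronglyMeasurable
    (.of_forall fun _ => norm_discKernel_le hδ _)

theorem discTransform_sum {ι : Type*} (hδ : 0 ≤ δ) (t : Finset ι) (a : ι → ℂ) {u : ι → ℂ → ℂ}
    (hu : ∀ i ∈ t, Integrable (u i)) (ζ : ℂ) :
    discTransform δ (fun w => ∑ i ∈ t, a i * u i w) ζ = ∑ i ∈ t, a i * discTransform δ (u i) ζ := by
  simp only [discTransform, Finset.sum_mul, mul_assoc]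
  rw [integral_finsetSum _ fun i hi => (integrable_mul_discKernel_sub hδ (hu i hi) ζ).const_mul _]
  simp only [integral_const_mul]

theorem discTransform_eq_zero (hR : ∀ w, R ≤ ‖w‖ → h w = 0) (hζ : R + δ ≤ ‖ζ‖) :
    discTransform δ h ζ = 0 := by
  refine integral_eq_zero_of_ae (.of_forall fun w => ?_)
  rcases le_or_gt R ‖w‖ with hw | hw
  · simp only [hR w hw, zero_mul, Pi.zero_apply]
  · have hfar : δ ≤ ‖ζ - w‖ := by linarith [norm_sub_norm_le ζ w]
    simp only [discKernel_of_le_norm hfar, mul_zero, Pi.zero_apply]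

theorem norm_discTransform_le (hδ : 0 ≤ δ) (hh : Integrable h)
    (hk : DifferentiableOn ℂ k (closedBall ζ δ)) (hb : ∀ w ∈ ball ζ δ, ‖h w - k w‖ ≤ b) :
    ‖discTransform δ h ζ‖ ≤ π * δ ^ 3 * b := by
  have hk' : DifferentiableOn ℂ (fun u => k (ζ - u)) (closedBall 0 δ) := by
    refine hk.comp (by fun_prop) fun u hu => ?_
    simpa using hu
  have hint : Integrable fun u => discKernel δ u * h (ζ - u) := by
    simpa only [sub_sub_cancel, mul_comm] using
      (integrable_mul_discKernel_sub hδ hh ζ).comp_sub_left ζ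
  have hsubst : discTransform δ h ζ = ∫ u, discKernel δ u * (h (ζ - u) - k (ζ - u)) := by
    simp only [mul_sub]
    rw [integral_sub hint (integrable_discKernel_mul hk'.continuousOn),
      integral_discKernel_mul_eq_zero hk', sub_zero, discTransform,
      ← integral_sub_left_eq_self _ volume ζ]
    simp only [sub_sub_cancel, mul_comm]
  have hbound (u : ℂ) : ‖discKernel δ u * (h (ζ - u) - k (ζ - u))‖ ≤
      (ball 0 δ).indicator (fun _ => δ * b) u := by
    rcases lt_or_ge ‖u‖ δ with hu | hu
    · rw [indicator_of_mem (mem_ball_zero_iff.2 hu), norm_mul]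
      gcongr
      · exact norm_discKernel_le hδ u
      · exact hb _ (by simpa using hu)
    · rw [discKernel_of_le_norm hu, zero_mul, norm_zero,
        indicator_of_notMem (fun hmem => hu.not_gt (mem_ball_zero_iff.1 hmem))]
  have hconst : IntegrableOn (fun _ : ℂ => δ * b) (ball 0 δ) :=
    integrableOn_const measure_ball_lt_top.ne
  calc ‖discTransform δ h ζ‖ ≤ ∫ _ in ball (0 : ℂ) δ, δ * b := by
        rw [hsubst, ← integral_indicator measurableSet_ball]
        exact norm_integral_le_of_norm_le (hconst.integrable_indicator measurableSet_ball)
          (.of_forall hbound)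
    _ = π * δ ^ 3 * b := by
        simp [Measure.real, Complex.volume_ball, ENNReal.toReal_ofReal hδ]
        ring

theorem integrable_discTransform_mul_inv_sub_prod (hδ : 0 ≤ δ) (hh : Integrable h)
    (hR : ∀ w, R ≤ ‖w‖ → h w = 0) (z : ℂ) :
    Integrable (fun p : ℂ × ℂ => h p.2 * discKernel δ (p.1 - p.2) * (z - p.1)⁻¹)
      (volume.prod volume) := by
  have hdom := ((integrableOn_inv_norm_sub z (R + δ)).integrable_indicator
    measurableSet_ball).mul_prod (hh.norm.mul_const δ)
  refine hdom.mono' ((hh.aestronglyMeasurable.comp_snd.mul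
    (measurable_discKernel.comp (by fun_prop)).aestronglyMeasurable).mul
    (Measurable.aestronglyMeasurable (by fun_prop))) (.of_forall fun ⟨ζ, w⟩ => ?_)
  have hnonneg := indicator_nonneg (s := ball (0 : ℂ) (R + δ)) (f := fun ζ => ‖z - ζ‖⁻¹)
    (fun _ _ => by positivity) ζ
  rcases le_or_gt R ‖w‖ with hw | hw
  · simp [hR w hw]
  rcases le_or_gt δ ‖ζ - w‖ with hζ | hζ
  · rw [discKernel_of_le_norm hζ, mul_zero, zero_mul, norm_zero]
    positivity
  · have hmem : ζ ∈ ball (0 : ℂ) (R + δ) := by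
      rw [mem_ball_zero_iff]
      linarith [norm_sub_norm_le ζ w]
    rw [indicator_of_mem hmem, norm_mul, norm_mul, norm_inv, mul_comm]
    gcongr
    exact norm_discKernel_le hδ _

theorem integrable_discTransform_mul_inv_sub (hδ : 0 ≤ δ) (hh : Integrable h)
    (hR : ∀ w, R ≤ ‖w‖ → h w = 0) (z : ℂ) :
    Integrable fun ζ => discTransform δ h ζ * (z - ζ)⁻¹ := by
  simpa only [discTransform, integral_mul_const] using
    (integrable_discTransform_mul_inv_sub_prod hδ hh hR z).integral_prod_left

theorem integral_discTransform_mul_inv_sub (hδ : 0 ≤ δ) (hh : Integrable h)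
    (hR : ∀ w, R ≤ ‖w‖ → h w = 0) (z : ℂ) :
    ∫ ζ, discTransform δ h ζ * (z - ζ)⁻¹ = -π * ∫ w, bump δ (z - w) * h w := by
  have hfubini := integral_integral_swap
    (f := fun ζ w => h w * discKernel δ (ζ - w) * (z - ζ)⁻¹)
    (integrable_discTransform_mul_inv_sub_prod hδ hh hR z)
  have hinner (w : ℂ) : ∫ ζ, h w * discKernel δ (ζ - w) * (z - ζ)⁻¹ =
      -π * (bump δ (z - w) * h w) := by
    simp only [mul_assoc]
    rw [integral_const_mul, ← integral_add_right_eq_self _ w]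
    simp only [add_sub_cancel_right, ← sub_sub, sub_right_comm z _ w]
    rw [integral_discKernel_mul_inv_sub hδ]
    ring
  simp only [integral_mul_const, hinner] at hfubini
  rw [← integral_const_mul, ← hfubini]
  rfl

theorem bump_nonneg (δ : ℝ) (z : ℂ) : 0 ≤ bump δ z := le_max_right _ _

theorem norm_ofReal_bump_le (δ : ℝ) (z : ℂ) : ‖(bump δ z : ℂ)‖ ≤ δ ^ 2 := by
  rw [Complex.norm_real, Real.norm_of_nonneg (bump_nonneg δ z)]
  exact max_le (sub_le_self _ (sq_nonneg _)) (sq_nonneg δ)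

theorem norm_bump_average_sub_le (hδ : 0 < δ) (hh : Integrable h) {z a : ℂ}
    (hz : ∀ w, ‖z - w‖ < δ → ‖h w - a‖ ≤ b) :
    ‖2 / (π * δ ^ 4) * (∫ w, bump δ (z - w) * h w) - a‖ ≤ b := by
  have htotal : ∫ w, bump δ (z - w) = π * δ ^ 4 / 2 :=
    (integral_sub_left_eq_self (bump δ) volume z).trans (integral_bump hδ.le)
  have hbump : Integrable fun w => bump δ (z - w) :=
    Integrable.of_integral_ne_zero (by rw [htotal]; positivity)
  have hbumpC : Integrable fun w => (bump δ (z - w) : ℂ) := hbump.ofReal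
  have hbumph : Integrable fun w => (bump δ (z - w) : ℂ) * h w :=
    hh.bdd_mul (c := δ ^ 2) hbumpC.aestronglyMeasurable
      (.of_forall fun w => norm_ofReal_bump_le δ (z - w))
  have hbound (w : ℂ) : ‖(bump δ (z - w) : ℂ) * (h w - a)‖ ≤ bump δ (z - w) * b := by
    rw [norm_mul, Complex.norm_real, Real.norm_of_nonneg (bump_nonneg _ _)]
    rcases lt_or_ge ‖z - w‖ δ with hw | hw
    · exact mul_le_mul_of_nonneg_left (hz w hw) (bump_nonneg _ _)
    · have hzero : bump δ (z - w) = 0 := max_eq_right (by nlinarith)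
      rw [hzero, zero_mul, zero_mul]
  have hsub : ∫ w, (bump δ (z - w) : ℂ) * (h w - a) =
      (∫ w, bump δ (z - w) * h w) - π * δ ^ 4 / 2 * a := by
    simp only [mul_sub]
    rw [integral_sub hbumph (hbumpC.mul_const a), integral_mul_const,
      integral_complex_ofReal, htotal]
    push_cast
    rfl
  have hδ' : (δ : ℂ) ≠ 0 := Complex.ofReal_ne_zero.2 hδ.ne'
  have hfactor : 2 / (π * δ ^ 4) * (∫ w, bump δ (z - w) * h w) - a =
      ((2 / (π * δ ^ 4) : ℝ) : ℂ) * ∫ w, (bump δ (z - w) : ℂ) * (h w - a) := by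
    rw [hsub]
    push_cast
    field_simp
  calc _ ≤ 2 / (π * δ ^ 4) * ∫ w, bump δ (z - w) * b := by
        rw [hfactor, norm_mul, Complex.norm_real, Real.norm_of_nonneg (by positivity)]
        gcongr
        exact norm_integral_le_of_norm_le (hbump.mul_const b) (.of_forall hbound)
    _ = b := by
        rw [integral_mul_const, htotal]
        field_simp

end DiscTransform

section NearestPoint

variable {X : Type*} [PseudoMetricSpace X] [MeasurableSpace X] [OpensMeasurableSpace X] {S : Set X}

theorem exists_simpleFunc_dist_le (hS : TotallyBounded S) (hne : S.Nonempty) {η : ℝ}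
    (hη : 0 < η) :
    ∃ σ : SimpleFunc X X, (∀ w, σ w ∈ S) ∧ ∀ w, ∀ a ∈ S, dist w (σ w) ≤ dist w a + η := by
  obtain ⟨t, htS, htfin, hcover⟩ := Metric.finite_approx_of_totallyBounded hS η hη
  have htne : t.Nonempty := by
    obtain ⟨a, ha⟩ := hne
    obtain ⟨y, hy, -⟩ := mem_iUnion₂.1 (hcover ha)
    exact ⟨y, hy⟩
  obtain ⟨e, rfl⟩ := htfin.countable.exists_eq_range htne
  obtain ⟨N, hN⟩ : ∃ N, ∀ y ∈ range e, ∃ k ≤ N, e k = y := by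
    choose! ind hind using fun y (hy : y ∈ range e) => hy
    obtain ⟨N, hN⟩ := (htfin.image ind).bddAbove
    exact ⟨N, fun y hy => ⟨ind y, hN (mem_image_of_mem ind hy), hind y hy⟩⟩
  refine ⟨SimpleFunc.nearestPt e N, fun w => htS (mem_range_self _), fun w a ha => ?_⟩
  obtain ⟨y, hy, hay⟩ := mem_iUnion₂.1 (hcover ha)
  obtain ⟨k, hk, rfl⟩ := hN y hy
  have hnearest : dist (SimpleFunc.nearestPt e N w) w ≤ dist (e k) w := by
    have hedist := SimpleFunc.edist_nearestPt_le e w hk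
    rwa [edist_dist, edist_dist, ENNReal.ofReal_le_ofReal_iff dist_nonneg] at hedist
  calc dist w (SimpleFunc.nearestPt e N w) ≤ dist w (e k) := by
        rwa [dist_comm w, dist_comm w]
    _ ≤ dist w a + dist a (e k) := dist_triangle _ _ _
    _ ≤ dist w a + η := by gcongr; exact (mem_ball.1 hay).le

end NearestPoint

section PolyKernel

theorem closedBall_subset_interior_of_forall_dist {X : Type*} [PseudoMetricSpace X]
    {K : Set X} {x : X} {δ r : ℝ} (hr : δ < r)
    (hK : ∀ a, a ∉ K → r ≤ dist x a) : closedBall x δ ⊆ interior K := by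
  refine (closedBall_subset_ball hr).trans (interior_maximal (fun a ha => ?_) isOpen_ball)
  by_contra haK
  exact (hK a haK).not_gt (mem_ball'.1 ha)

variable {K : Set ℂ} [CompactSpace K] {δ R : ℝ}

/-- A kernel whose integrals against integrable functions of the first variable lie in `P(K)` as
functions of the second one. -/
def IsPolyKernel (K : Set ℂ) [CompactSpace K] (Q : ℂ → ℂ → ℂ) : Prop :=
  ∀ ψ : ℂ → ℂ, Integrable ψ → (∀ z, Integrable fun ζ => ψ ζ * Q ζ z) ∧
    (fun z => ∫ ζ, ψ ζ * Q ζ z) ∈ polyClosure K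

theorem isPolyKernel_indicator_add_sub_mul {Y : Set ℂ} (hY : MeasurableSet Y)
    (hYb : Bornology.IsBounded Y) {p q : ℂ → ℂ} (hp : p ∈ polyClosure K) (hq : q ∈ polyClosure K)
    (m : ℂ) : IsPolyKernel K fun ζ z => Y.indicator (fun ζ => p z + (ζ - m) * q z) ζ := by
  intro ψ hψ
  have hψY : IntegrableOn ψ Y := hψ.integrableOn
  have hψmul : IntegrableOn (fun ζ => ψ ζ * (ζ - m)) Y := by
    obtain ⟨b, hb⟩ := hYb.subset_closedBall m
    refine hψY.mul_bdd (c := b) (Measurable.aestronglyMeasurable (by fun_prop)) ?_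
    filter_upwards [ae_restrict_mem hY] with ζ hζ
    exact mem_closedBall_iff_norm.1 (hb hζ)
  have hfun (z : ℂ) : (fun ζ => ψ ζ * Y.indicator (fun ζ => p z + (ζ - m) * q z) ζ) =
      Y.indicator fun ζ => ψ ζ * p z + ψ ζ * (ζ - m) * q z := by
    ext ζ
    rw [← indicator_mul_right]
    congr 1
    ext ζ
    ring
  have hsum (z : ℂ) : IntegrableOn (fun ζ => ψ ζ * p z + ψ ζ * (ζ - m) * q z) Y :=
    (hψY.mul_const _).add (hψmul.mul_const _)
  have hintegral : (fun z => ∫ ζ, ψ ζ * Y.indicator (fun ζ => p z + (ζ - m) * q z) ζ) =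
      (∫ ζ in Y, ψ ζ) • p + (∫ ζ in Y, ψ ζ * (ζ - m)) • q := by
    ext z
    rw [hfun, integral_indicator hY, integral_add (hψY.mul_const _) (hψmul.mul_const _),
      integral_mul_const, integral_mul_const]
    rfl
  refine ⟨fun z => hfun z ▸ (hsum z).integrable_indicator hY, ?_⟩
  rw [hintegral]
  exact add_mem (Subalgebra.smul_mem _ hp _) (Subalgebra.smul_mem _ hq _)

theorem isPolyKernel_simpleFunc (σ : SimpleFunc ℂ ℂ) {Q : ℂ → ℂ → ℂ → ℂ}
    (hQ : ∀ w, IsPolyKernel K (Q (σ w))) : IsPolyKernel K fun ζ => Q (σ ζ) ζ := by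
  intro ψ hψ
  let piece (c : ℂ) : ℂ → ℂ := (σ ⁻¹' {c}).indicator ψ
  have hpiece : ∀ c ∈ σ.range, (∀ z, Integrable fun ζ => piece c ζ * Q c ζ z) ∧
      (fun z => ∫ ζ, piece c ζ * Q c ζ z) ∈ polyClosure K := fun c hc => by
    obtain ⟨w, rfl⟩ := SimpleFunc.mem_range.1 hc
    exact hQ w _ (hψ.indicator (σ.measurableSet_fiber _))
  have hdecomp (z : ℂ) : (fun ζ => ψ ζ * Q (σ ζ) ζ z) =
      fun ζ => ∑ c ∈ σ.range, piece c ζ * Q c ζ z := by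
    ext ζ
    rw [Finset.sum_eq_single_of_mem (σ ζ) (σ.mem_range_self ζ) fun c _ hc => ?_]
    · have hmem : ζ ∈ σ ⁻¹' {σ ζ} := mem_singleton _
      rw [show piece (σ ζ) ζ = ψ ζ from indicator_of_mem hmem ψ]
    · have hnotMem : ζ ∉ σ ⁻¹' {c} := fun hmem => hc (mem_singleton_iff.1 hmem).symm
      rw [show piece c ζ = 0 from indicator_of_notMem hnotMem ψ, zero_mul]
  refine ⟨fun z => ?_, ?_⟩
  · rw [hdecomp]
    exact integrable_finsetSum _ fun c hc => (hpiece c hc).1 z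
  · have hintegral : (fun z => ∫ ζ, ψ ζ * Q (σ ζ) ζ z) =
        ∑ c ∈ σ.range, fun z => ∫ ζ, piece c ζ * Q c ζ z := by
      ext z
      rw [hdecomp, integral_finsetSum _ fun c hc => (hpiece c hc).1 z, Finset.sum_apply]
    rw [hintegral]
    exact sum_mem fun c hc => (hpiece c hc).2

/-- `Q ζ` agrees on `K` with the Cauchy kernel `z ↦ (z - ζ)⁻¹` up to the decaying error
`errorProfile δ`, for all `ζ ∈ ball 0 R` but some deep inside `K`. There `Q ζ` is zero, as the
`discTransform` of a nearly holomorphic function is small anyway. -/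
def IsNearCauchyKernel (K : Set ℂ) (δ R : ℝ) (Q : ℂ → ℂ → ℂ) : Prop :=
  ∀ ζ ∈ ball (0 : ℂ) R, (closedBall ζ δ ⊆ interior K ∧ ∀ z, Q ζ z = 0) ∨
    ∀ z ∈ K, z ≠ ζ → ‖(z - ζ)⁻¹ - Q ζ z‖ ≤ 10 ^ 9 * errorProfile δ ‖z - ζ‖

theorem exists_isPolyKernel_isNearCauchyKernel (hK : IsPreconnected Kᶜ) (hδ : 0 < δ) (R : ℝ) :
    ∃ Q, IsPolyKernel K Q ∧ IsNearCauchyKernel K δ R Q := by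
  obtain ⟨a₀, ha₀⟩ := nonempty_compl.2 (isCompact_iff_compactSpace.2 ‹_› : IsCompact K).ne_univ
  let S : Set ℂ := Kᶜ ∩ closedBall 0 (max (R + 2 * δ) ‖a₀‖)
  have hSbdd : TotallyBounded S :=
    (isCompact_closedBall _ _).totallyBounded.subset inter_subset_right
  have hSne : S.Nonempty := ⟨a₀, ha₀, mem_closedBall_zero_iff.2 (le_max_right _ _)⟩
  obtain ⟨σ, hσS, hσ⟩ := exists_simpleFunc_dist_le hSbdd hSne (half_pos hδ)
  choose! g hg m hgm using fun c (hc : c ∉ K) => exists_cauchy_kernel hK hc hδ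
  let Y : Set ℂ := ball 0 R ∩ {ζ | dist ζ (σ ζ) ≤ 2 * δ}
  have hY : MeasurableSet Y :=
    measurableSet_ball.inter (measurableSet_le (by fun_prop) measurable_const)
  let Q (c ζ z : ℂ) : ℂ := Y.indicator (fun ζ => g c z + (ζ - m c) * g c z ^ 2) ζ
  have hQmem (c z : ℂ) {ζ : ℂ} (hζ : ζ ∈ Y) : Q c ζ z = g c z + (ζ - m c) * g c z ^ 2 :=
    indicator_of_mem hζ _
  refine ⟨fun ζ => Q (σ ζ) ζ, isPolyKernel_simpleFunc σ fun w => ?_, fun ζ hζ => ?_⟩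
  · exact isPolyKernel_indicator_add_sub_mul hY (isBounded_ball.subset inter_subset_left)
      (hg _ (hσS w).1) (pow_mem (hg _ (hσS w).1) 2) _
  · by_cases hζσ : dist ζ (σ ζ) ≤ 2 * δ
    · refine .inr fun z hz hzζ => ?_
      beta_reduce
      rw [hQmem _ z ⟨hζ, hζσ⟩, norm_sub_rev]
      exact hgm _ (hσS ζ).1 z hz ζ (dist_eq_norm ζ _ ▸ hζσ) hzζ
    · refine .inl ⟨?_, fun z => indicator_of_notMem (fun h => hζσ h.2) _⟩
      refine closedBall_subset_interior_of_forall_dist (r := 3 / 2 * δ) (by linarith)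
        fun a ha => ?_
      by_contra! hclose
      have haS : a ∈ S := by
        refine ⟨ha, mem_closedBall_zero_iff.2 (le_max_of_le_left ?_)⟩
        rw [dist_comm, dist_eq_norm] at hclose
        linarith [norm_sub_norm_le a ζ, mem_ball_zero_iff.1 hζ]
      linarith [hσ ζ a haS]

end PolyKernel

section MergelyanOperator

variable {K : Set ℂ} {δ R r ω η : ℝ} {f h : ℂ → ℂ} {Q : ℂ → ℂ → ℂ} {z ζ : ℂ}

/-- Mergelyan's approximation of `h`: the disc average of `h`, written as a Cauchy-type integral of
`discTransform δ h` in which the kernel `Q` replaces the Cauchy kernel. -/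
noncomputable def mergelyanOperator (δ : ℝ) (Q : ℂ → ℂ → ℂ) (h : ℂ → ℂ) (z : ℂ) : ℂ :=
  -2 / (π ^ 2 * δ ^ 4) * ∫ ζ, discTransform δ h ζ * Q ζ z

theorem mergelyanOperator_mem_polyClosure [CompactSpace K] (hQ : IsPolyKernel K Q)
    (hh : Integrable h) : mergelyanOperator δ Q h ∈ polyClosure K :=
  mul_mem (const_mem_polyClosure _) (hQ _ (integrable_discTransform hh)).2

theorem mergelyanOperator_sum [CompactSpace K] {ι : Type*} (hδ : 0 ≤ δ) (hQ : IsPolyKernel K Q)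
    (t : Finset ι) (a : ι → ℂ) {u : ι → ℂ → ℂ} (hu : ∀ i ∈ t, Integrable (u i)) (z : ℂ) :
    mergelyanOperator δ Q (fun w => ∑ i ∈ t, a i * u i w) z =
      ∑ i ∈ t, a i * mergelyanOperator δ Q (u i) z := by
  have hint : ∀ i ∈ t, Integrable fun ζ => a i * (discTransform δ (u i) ζ * Q ζ z) :=
    fun i hi => ((hQ _ (integrable_discTransform (hu i hi))).1 z).const_mul _
  simp only [mergelyanOperator, discTransform_sum hδ t a hu, Finset.sum_mul, mul_assoc]
  rw [integral_finsetSum _ hint, Finset.mul_sum]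
  simp only [integral_const_mul, mul_left_comm]

theorem setIntegral_inv_norm_sub_le (hz : ‖z‖ ≤ r) (S : ℝ) :
    ∫ ζ in ball (0 : ℂ) S, ‖z - ζ‖⁻¹ ≤ ∫ ζ in ball (0 : ℂ) (S + r), ‖ζ‖⁻¹ := by
  classical
  have hbound : Integrable ((ball (0 : ℂ) (S + r)).indicator fun ζ => ‖ζ‖⁻¹) :=
    (integrableOn_inv_norm (S + r)).integrable_indicator measurableSet_ball
  rw [← integral_indicator measurableSet_ball, ← integral_indicator measurableSet_ball,
    ← integral_sub_left_eq_self (indicator _ _) volume z]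
  refine integral_mono_of_nonneg (.of_forall fun ζ => indicator_nonneg (by intros; positivity) _)
    hbound (.of_forall fun ζ => ?_)
  simp only [indicator_apply, sub_sub_cancel]
  split_ifs with hζ hζ'
  · exact le_rfl
  · rw [mem_ball_zero_iff] at hζ hζ'
    linarith [norm_sub_norm_le ζ z, norm_sub_rev ζ z]
  · positivity
  · exact le_rfl

theorem norm_discTransform_mul_sub_le (hδ : 0 < δ) (hh : Integrable h)
    (hR : ∀ w, R ≤ ‖w‖ → h w = 0) (hω : ∀ w ζ, dist w ζ < δ → ‖h w - h ζ‖ ≤ ω)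
    (hf : DifferentiableOn ℂ f (interior K)) (hη : ∀ w ∈ K, ‖h w - f w‖ ≤ η)
    (hQ : IsNearCauchyKernel K δ (R + δ) Q) (hz : z ∈ K) (hzζ : z ≠ ζ) :
    ‖discTransform δ h ζ * (z - ζ)⁻¹ - discTransform δ h ζ * Q ζ z‖ ≤
      π * δ ^ 3 * (10 ^ 9 * ω * errorProfile δ ‖z - ζ‖ +
        η * (ball 0 (R + δ)).indicator (fun ζ => ‖z - ζ‖⁻¹) ζ) := by
  have hω0 : 0 ≤ ω := (norm_nonneg _).trans (hω z z (by rwa [dist_self]))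
  have hη0 : 0 ≤ η := (norm_nonneg _).trans (hη z hz)
  have herr : 0 ≤ errorProfile δ ‖z - ζ‖ := by unfold errorProfile; positivity
  have hind : 0 ≤ (ball 0 (R + δ)).indicator (fun ζ => ‖z - ζ‖⁻¹) ζ :=
    indicator_nonneg (by intros; positivity) _
  rw [← mul_sub, norm_mul]
  by_cases hζ : ζ ∈ ball 0 (R + δ)
  · rcases hQ ζ hζ with ⟨hball, hQζ⟩ | hnear
    · have hΨ : ‖discTransform δ h ζ‖ ≤ π * δ ^ 3 * η :=
        norm_discTransform_le hδ.le hh (hf.mono hball) fun w hw =>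
          hη w (interior_subset (hball (ball_subset_closedBall hw)))
      rw [hQζ, sub_zero, norm_inv, indicator_of_mem hζ]
      calc ‖discTransform δ h ζ‖ * ‖z - ζ‖⁻¹ ≤ π * δ ^ 3 * η * ‖z - ζ‖⁻¹ := by gcongr
        _ = π * δ ^ 3 * (0 + η * ‖z - ζ‖⁻¹) := by ring
        _ ≤ _ := by gcongr; positivity
    · have hΨ : ‖discTransform δ h ζ‖ ≤ π * δ ^ 3 * ω :=
        norm_discTransform_le (k := fun _ => h ζ) hδ.le hh (differentiableOn_const _) fun w hw =>
          hω w ζ hw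
      calc ‖discTransform δ h ζ‖ * ‖(z - ζ)⁻¹ - Q ζ z‖
          ≤ π * δ ^ 3 * ω * (10 ^ 9 * errorProfile δ ‖z - ζ‖) := by
            gcongr
            exact hnear z hz hzζ
        _ = π * δ ^ 3 * (10 ^ 9 * ω * errorProfile δ ‖z - ζ‖ + 0) := by ring
        _ ≤ _ := by gcongr; positivity
  · rw [discTransform_eq_zero hR (not_lt.1 fun hlt => hζ (mem_ball_zero_iff.2 hlt)), norm_zero,
      zero_mul]
    positivity

theorem norm_integral_discTransform_mul_sub_le [CompactSpace K] (hδ : 0 < δ) (hh : Integrable h)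
    (hR : ∀ w, R ≤ ‖w‖ → h w = 0) (hω : ∀ w ζ, dist w ζ < δ → ‖h w - h ζ‖ ≤ ω)
    (hf : DifferentiableOn ℂ f (interior K)) (hη : ∀ w ∈ K, ‖h w - f w‖ ≤ η)
    (hQ : IsPolyKernel K Q) (hQ' : IsNearCauchyKernel K δ (R + δ) Q) (hz : z ∈ K) (hr : ‖z‖ ≤ r) :
    ‖(∫ ζ, discTransform δ h ζ * (z - ζ)⁻¹) - ∫ ζ, discTransform δ h ζ * Q ζ z‖ ≤
      π * δ ^ 3 * (10 ^ 9 * ω * (π ^ 2 * δ) +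
        η * ∫ ζ in ball (0 : ℂ) (R + δ + r), ‖ζ‖⁻¹) := by
  have hη0 : 0 ≤ η := (norm_nonneg _).trans (hη z hz)
  have hprofile : Integrable fun ζ => 10 ^ 9 * ω * errorProfile δ ‖z - ζ‖ :=
    ((integrable_errorProfile_norm hδ).comp_sub_left z).const_mul _
  have hinv : Integrable fun ζ => η * (ball 0 (R + δ)).indicator (fun ζ => ‖z - ζ‖⁻¹) ζ :=
    ((integrableOn_inv_norm_sub z (R + δ)).integrable_indicator measurableSet_ball).const_mul _
  have hne : ∀ᵐ ζ : ℂ, z ≠ ζ := by simp [ae_iff]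
  rw [← integral_sub (integrable_discTransform_mul_inv_sub hδ.le hh hR z)
    ((hQ _ (integrable_discTransform hh)).1 z)]
  calc _ ≤ ∫ ζ, π * δ ^ 3 * (10 ^ 9 * ω * errorProfile δ ‖z - ζ‖ +
          η * (ball 0 (R + δ)).indicator (fun ζ => ‖z - ζ‖⁻¹) ζ) :=
        norm_integral_le_of_norm_le ((hprofile.add hinv).const_mul _)
          (hne.mono fun ζ hζ => norm_discTransform_mul_sub_le hδ hh hR hω hf hη hQ' hz hζ)
    _ = π * δ ^ 3 * (10 ^ 9 * ω * (π ^ 2 * δ) +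
          η * ∫ ζ in ball (0 : ℂ) (R + δ), ‖z - ζ‖⁻¹) := by
        rw [integral_const_mul, integral_add hprofile hinv, integral_const_mul, integral_const_mul,
          integral_sub_left_eq_self (fun ζ : ℂ => errorProfile δ ‖ζ‖),
          integral_errorProfile_norm hδ, integral_indicator measurableSet_ball]
    _ ≤ _ := by
        gcongr
        exact setIntegral_inv_norm_sub_le hr _

theorem norm_sub_mergelyanOperator_le [CompactSpace K] (hδ : 0 < δ) (hh : Integrable h)
    (hR : ∀ w, R ≤ ‖w‖ → h w = 0) (hω : ∀ w ζ, dist w ζ < δ → ‖h w - h ζ‖ ≤ ω)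
    (hf : DifferentiableOn ℂ f (interior K)) (hη : ∀ w ∈ K, ‖h w - f w‖ ≤ η)
    (hQ : IsPolyKernel K Q) (hQ' : IsNearCauchyKernel K δ (R + δ) Q) (hz : z ∈ K) (hr : ‖z‖ ≤ r) :
    ‖h z - mergelyanOperator δ Q h z‖ ≤ (1 + 2 * π * 10 ^ 9) * ω +
      2 / (π * δ) * (∫ ζ in ball (0 : ℂ) (R + δ + r), ‖ζ‖⁻¹) * η := by
  have haverage := norm_bump_average_sub_le (z := z) (a := h z) hδ hh fun w hw =>
    hω w z (by rwa [dist_comm, dist_eq_norm])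
  have hkernel := norm_integral_discTransform_mul_sub_le hδ hh hR hω hf hη hQ hQ' hz hr
  rw [integral_discTransform_mul_inv_sub hδ.le hh hR z] at hkernel
  have hδ' : (δ : ℂ) ≠ 0 := Complex.ofReal_ne_zero.2 hδ.ne'
  have hπ : (π : ℂ) ≠ 0 := Complex.ofReal_ne_zero.2 Real.pi_ne_zero
  have hnorm : ‖(-2 / (π ^ 2 * δ ^ 4) : ℂ)‖ = 2 / (π ^ 2 * δ ^ 4) := by
    simp [abs_of_pos Real.pi_pos, abs_of_pos hδ]
  set average := ∫ w, (bump δ (z - w) : ℂ) * h w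
  set total := ∫ ζ, discTransform δ h ζ * Q ζ z with htotal
  calc ‖h z - mergelyanOperator δ Q h z‖
      = ‖-(2 / (π * δ ^ 4) * average - h z) + -2 / (π ^ 2 * δ ^ 4) * (-π * average - total)‖ := by
        rw [mergelyanOperator, ← htotal]
        congr 1
        field_simp
        ring
    _ ≤ ω + 2 / (π ^ 2 * δ ^ 4) * (π * δ ^ 3 * (10 ^ 9 * ω * (π ^ 2 * δ) +
          η * ∫ ζ in ball (0 : ℂ) (R + δ + r), ‖ζ‖⁻¹)) := by
        refine (norm_add_le _ _).trans ?_
        rw [norm_neg, norm_mul, hnorm]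
        gcongr
    _ = _ := by
        field_simp
        ring

end MergelyanOperator

section Sampling

variable {K : Set ℂ} {δ ρ η ω ω' B ε r : ℝ} {F : ℂ → ℂ} {σ : SimpleFunc ℂ ℂ} {w ζ : ℂ}

/-- The part of the cutoff `thickenedIndicator hρ K` on which the sampling map `σ` takes the
value `x`: the weight of the sample `F x` in the extension of `F` to the plane. -/
noncomputable def sampleWeight (hρ : 0 < ρ) (K : Set ℂ) (σ : SimpleFunc ℂ ℂ) (x w : ℂ) : ℂ :=
  (σ ⁻¹' {x}).indicator (fun w => ((thickenedIndicator hρ K w : ℝ) : ℂ)) w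

theorem sum_mul_sampleWeight (hρ : 0 < ρ) (F : ℂ → ℂ) (w : ℂ) :
    ∑ x ∈ σ.range, F x * sampleWeight hρ K σ x w =
      (thickenedIndicator hρ K w : ℝ) * F (σ w) := by
  rw [Finset.sum_eq_single_of_mem (σ w) (σ.mem_range_self w) fun x _ hx => ?_]
  · rw [sampleWeight, indicator_of_mem (show w ∈ σ ⁻¹' {σ w} from rfl), mul_comm]
  · rw [sampleWeight, indicator_of_notMem (fun hw => hx hw.symm), mul_zero]

theorem thickenedIndicator_eq_zero_of_le_norm (hρ : 0 < ρ) (hK : ∀ z ∈ K, ‖z‖ ≤ r)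
    (hw : r + ρ ≤ ‖w‖) : thickenedIndicator hρ K w = 0 := by
  refine thickenedIndicator_zero hρ K fun hmem => ?_
  obtain ⟨a, ha, hwa⟩ := mem_thickening_iff.1 hmem
  rw [dist_eq_norm] at hwa
  linarith [norm_sub_norm_le w a, hK a ha]

theorem integrable_sampleWeight (hρ : 0 < ρ) (hK : ∀ z ∈ K, ‖z‖ ≤ r) (x : ℂ) :
    Integrable (sampleWeight hρ K σ x) := by
  have hcont : Continuous fun w => ((thickenedIndicator hρ K w : ℝ) : ℂ) := by fun_prop
  have hsupp : HasCompactSupport fun w => ((thickenedIndicator hρ K w : ℝ) : ℂ) :=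
    .of_support_subset_isCompact (isCompact_closedBall 0 (r + ρ)) fun w hw => by
      rw [mem_closedBall_zero_iff]
      by_contra! hlt
      exact hw (by simp only [thickenedIndicator_eq_zero_of_le_norm hρ hK hlt.le,
        NNReal.coe_zero, Complex.ofReal_zero])
  exact (hcont.integrable_of_hasCompactSupport hsupp).indicator (σ.measurableSet_fiber x)

theorem norm_thickenedIndicator_mul_sub_le (hρ : 0 < ρ) (hδ : δ ≤ ρ) (hη : η ≤ ρ)
    (hσK : ∀ w, σ w ∈ K) (hσ : ∀ w, ∀ a ∈ K, dist w (σ w) ≤ dist w a + η)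
    (hB : ∀ z ∈ K, ‖F z‖ ≤ B) (hω : ∀ z ∈ K, ∀ w ∈ K, dist z w ≤ 6 * ρ → ‖F z - F w‖ ≤ ω)
    (hwζ : dist w ζ < δ) :
    ‖(thickenedIndicator hρ K w : ℝ) * F (σ w) - (thickenedIndicator hρ K ζ : ℝ) * F (σ ζ)‖ ≤
      δ / ρ * B + ω := by
  set χ := thickenedIndicator hρ K
  have hω0 : 0 ≤ ω := (norm_nonneg _).trans
    (hω _ (hσK w) _ (hσK w) (by rw [dist_self]; positivity))
  have hδ0 : 0 < δ := dist_nonneg.trans_lt hwζ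
  have hcutoff : ‖((χ w : ℝ) - (χ ζ : ℝ) : ℂ)‖ ≤ δ / ρ := by
    have hlip : dist (χ w) (χ ζ) ≤ ρ⁻¹ * dist w ζ := by
      have hlipschitz := (lipschitzWith_thickenedIndicator hρ K).dist_le_mul w ζ
      rwa [NNReal.coe_inv, Real.coe_toNNReal _ hρ.le] at hlipschitz
    rw [← Complex.ofReal_sub, Complex.norm_real, Real.norm_eq_abs, ← NNReal.dist_eq]
    calc dist (χ w) (χ ζ) ≤ ρ⁻¹ * δ := hlip.trans (by gcongr)
      _ = δ / ρ := by rw [div_eq_inv_mul]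
  have hsample : ‖((χ ζ : ℝ) : ℂ) * (F (σ w) - F (σ ζ))‖ ≤ ω := by
    by_cases hζ : ζ ∈ thickening ρ K
    · obtain ⟨a, ha, hζa⟩ := mem_thickening_iff.1 hζ
      have hclose : dist (σ w) (σ ζ) ≤ 6 * ρ := by
        linarith [hσ w a ha, hσ ζ a ha, dist_triangle w ζ a, dist_triangle_left (σ w) (σ ζ) w,
          dist_triangle w ζ (σ ζ)]
      have hχ : ‖((χ ζ : ℝ) : ℂ)‖ ≤ 1 := by
        rw [Complex.norm_real, Real.norm_of_nonneg (χ ζ).coe_nonneg]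
        exact thickenedIndicator_le_one hρ K ζ
      rw [norm_mul]
      exact (mul_le_of_le_one_left (norm_nonneg _) hχ).trans (hω _ (hσK w) _ (hσK ζ) hclose)
    · rw [show χ ζ = 0 from thickenedIndicator_zero hρ K hζ]
      simpa using hω0
  calc _ = ‖((χ w : ℝ) - (χ ζ : ℝ) : ℂ) * F (σ w) + (χ ζ : ℝ) * (F (σ w) - F (σ ζ))‖ := by
        congr 1
        ring
    _ ≤ δ / ρ * B + ω := by
        refine (norm_add_le _ _).trans (add_le_add ?_ hsample)
        rw [norm_mul]
        gcongr
        exact hB _ (hσK w)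

theorem norm_thickenedIndicator_mul_sub_le_of_mem (hρ : 0 < ρ) (hσK : ∀ w, σ w ∈ K)
    (hσ : ∀ w, ∀ a ∈ K, dist w (σ w) ≤ dist w a + η)
    (hω : ∀ z ∈ K, ∀ w ∈ K, dist z w ≤ η → ‖F z - F w‖ ≤ ω) (hw : w ∈ K) :
    ‖(thickenedIndicator hρ K w : ℝ) * F (σ w) - F w‖ ≤ ω := by
  rw [thickenedIndicator_one hρ K hw, NNReal.coe_one, Complex.ofReal_one, one_mul, norm_sub_rev]
  exact hω w hw _ (hσK w) (by simpa using hσ w w hw)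

theorem exists_finset_norm_sub_sum_le [CompactSpace K] (hK : IsPreconnected Kᶜ) (hne : K.Nonempty)
    (hKr : ∀ z ∈ K, ‖z‖ ≤ r) (hδ : 0 < δ) (hδρ : δ ≤ ρ) (hη : 0 < η) (hηρ : η ≤ ρ) :
    ∃ t : Finset ℂ, ↑t ⊆ K ∧ ∃ g : ℂ → ℂ → ℂ, (∀ x, g x ∈ polyClosure K) ∧
      ∀ (F : ℂ → ℂ) (B ω ω' : ℝ), DifferentiableOn ℂ F (interior K) → (∀ z ∈ K, ‖F z‖ ≤ B) →
        (∀ z ∈ K, ∀ w ∈ K, dist z w ≤ 6 * ρ → ‖F z - F w‖ ≤ ω) →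
        (∀ z ∈ K, ∀ w ∈ K, dist z w ≤ η → ‖F z - F w‖ ≤ ω') →
        ∀ z ∈ K, ‖F z - ∑ x ∈ t, F x * g x z‖ ≤ (1 + 2 * π * 10 ^ 9) * (δ / ρ * B + ω) +
          (1 + 2 / (π * δ) * ∫ ζ in ball (0 : ℂ) (r + ρ + δ + r), ‖ζ‖⁻¹) * ω' := by
  have hρ : 0 < ρ := hδ.trans_le hδρ
  obtain ⟨σ, hσK, hσ⟩ := exists_simpleFunc_dist_le
    (isCompact_iff_compactSpace.2 ‹_› : IsCompact K).totallyBounded hne hη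
  obtain ⟨Q, hQ, hQ'⟩ := exists_isPolyKernel_isNearCauchyKernel hK hδ (r + ρ + δ)
  have hweight (x : ℂ) : Integrable (sampleWeight hρ K σ x) := integrable_sampleWeight hρ hKr x
  refine ⟨σ.range, fun x hx => ?_, fun x => mergelyanOperator δ Q (sampleWeight hρ K σ x),
    fun x => mergelyanOperator_mem_polyClosure hQ (hweight x), fun F B ω ω' hF hB hω hω' z hz => ?_⟩
  · obtain ⟨w, rfl⟩ := SimpleFunc.mem_range.1 hx
    exact hσK w
  let h (w : ℂ) : ℂ := ∑ x ∈ σ.range, F x * sampleWeight hρ K σ x w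
  have hh (w : ℂ) : h w = (thickenedIndicator hρ K w : ℝ) * F (σ w) := sum_mul_sampleWeight hρ F w
  have hint : Integrable h := integrable_finsetSum _ fun x _ => (hweight x).const_mul _
  have hK' : ∀ w ∈ K, ‖h w - F w‖ ≤ ω' := fun w hw =>
    hh w ▸ norm_thickenedIndicator_mul_sub_le_of_mem hρ hσK hσ hω' hw
  have hosc (w ζ : ℂ) (hwζ : dist w ζ < δ) : ‖h w - h ζ‖ ≤ δ / ρ * B + ω := by
    rw [hh, hh]
    exact norm_thickenedIndicator_mul_sub_le hρ hδρ hηρ hσK hσ hB hω hwζ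
  have hsupp (w : ℂ) (hw : r + ρ ≤ ‖w‖) : h w = 0 := by
    rw [hh, thickenedIndicator_eq_zero_of_le_norm hρ hKr hw, NNReal.coe_zero, Complex.ofReal_zero,
      zero_mul]
  have hmain := norm_sub_mergelyanOperator_le hδ hint hsupp hosc hF hK' hQ hQ' hz (hKr z hz)
  rw [mergelyanOperator_sum hδ.le hQ _ _ fun x _ => hweight x] at hmain
  have htriangle := norm_sub_le_norm_sub_add_norm_sub (F z) (h z)
    (∑ x ∈ σ.range, F x * mergelyanOperator δ Q (sampleWeight hρ K σ x) z)
  rw [norm_sub_rev (F z) (h z)] at htriangle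
  linarith [hK' z hz]

end Sampling

section EquicontinuousFamily

variable {K : Set ℂ} {ι : Type*} {F : ι → ℂ → ℂ} {B ε : ℝ}

theorem exists_forall_norm_sub_le_of_uniformEquicontinuousOn (hF : UniformEquicontinuousOn F K)
    (hε : 0 < ε) :
    ∃ δ > 0, ∀ i, ∀ z ∈ K, ∀ w ∈ K, dist z w ≤ δ → ‖F i z - F i w‖ ≤ ε := by
  obtain ⟨δ, hδ, h⟩ := ((uniformity_basis_dist_le.inf_principal _).uniformEquicontinuousOn_iff
    uniformity_basis_dist_le).1 hF ε hε
  exact ⟨δ, hδ, fun i z hz w hw hzw => dist_eq_norm (F i z) _ ▸ h z w ⟨hzw, hz, hw⟩ i⟩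

theorem exists_polyClosure_norm_sub_sum_le [CompactSpace K] (hK : IsPreconnected Kᶜ)
    (hF : UniformEquicontinuousOn F K) (hd : ∀ i, DifferentiableOn ℂ (F i) (interior K))
    (hB : ∀ i, ∀ z ∈ K, ‖F i z‖ ≤ B) (hε : 0 < ε) :
    ∃ t : Finset ℂ, ↑t ⊆ K ∧ ∃ g : ℂ → ℂ → ℂ, (∀ x, g x ∈ polyClosure K) ∧
      ∀ i, ∀ z ∈ K, ‖F i z - ∑ x ∈ t, F i x * g x z‖ ≤ ε := by
  rcases K.eq_empty_or_nonempty with rfl | hne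
  · exact ⟨∅, by simp, 0, fun _ => zero_mem _, fun i z hz => absurd hz (notMem_empty z)⟩
  obtain ⟨r, hKr⟩ := (isCompact_iff_compactSpace.2 ‹_› : IsCompact K).isBounded.exists_norm_le
  set A : ℝ := 1 + 2 * π * 10 ^ 9
  have hA : 0 < A := by positivity
  obtain ⟨ρ₀, hρ₀, hω⟩ := exists_forall_norm_sub_le_of_uniformEquicontinuousOn hF
    (show 0 < ε / (4 * A) by positivity)
  obtain ⟨ρ, hρ, hρ₀'⟩ : ∃ ρ > 0, 6 * ρ ≤ ρ₀ := ⟨ρ₀ / 6, by positivity, by linarith⟩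
  obtain ⟨δ, hδ, hδρ, hδB⟩ : ∃ δ > 0, δ ≤ ρ ∧ δ / ρ * |B| ≤ ε / (4 * A) := by
    refine ⟨min ρ (ε / (4 * A) * ρ / (|B| + 1)), lt_min hρ (by positivity), min_le_left _ _, ?_⟩
    calc _ ≤ ε / (4 * A) * ρ / (|B| + 1) / ρ * (|B| + 1) := by
          gcongr
          · exact min_le_right _ _
          · linarith
      _ = ε / (4 * A) := by field_simp
  set C : ℝ := 1 + 2 / (π * δ) * ∫ ζ in ball (0 : ℂ) (r + ρ + δ + r), ‖ζ‖⁻¹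
  have hC : 0 < C := add_pos_of_pos_of_nonneg one_pos
    (mul_nonneg (by positivity) (integral_nonneg fun ζ => inv_nonneg.2 (norm_nonneg ζ)))
  obtain ⟨η₀, hη₀, hω'⟩ := exists_forall_norm_sub_le_of_uniformEquicontinuousOn hF
    (show 0 < ε / (2 * C) by positivity)
  obtain ⟨t, htK, g, hg, happrox⟩ := exists_finset_norm_sub_sum_le hK hne hKr hδ hδρ
    (lt_min hρ hη₀) (min_le_left ρ η₀)
  refine ⟨t, htK, g, hg, fun i z hz => (happrox (F i) |B| (ε / (4 * A)) (ε / (2 * C)) (hd i)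
    (fun w hw => (hB i w hw).trans (le_abs_self B))
    (fun w hw u hu hwu => hω i w hw u hu (hwu.trans hρ₀'))
    (fun w hw u hu hwu => hω' i w hw u hu (hwu.trans (min_le_right _ _))) z hz).trans ?_⟩
  calc A * (δ / ρ * |B| + ε / (4 * A)) + C * (ε / (2 * C))
      ≤ A * (ε / (4 * A) + ε / (4 * A)) + C * (ε / (2 * C)) := by gcongr
    _ = ε := by
      field_simp
      ring

theorem exists_polynomial_norm_sub_sum_le [CompactSpace K] (hK : IsPreconnected Kᶜ)
    (hF : UniformEquicontinuousOn F K) (hd : ∀ i, DifferentiableOn ℂ (F i) (interior K))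
    (hB : ∀ i, ∀ z ∈ K, ‖F i z‖ ≤ B) (hε : 0 < ε) :
    ∃ t : Finset ℂ, ↑t ⊆ K ∧ ∃ p : ℂ → ℂ[X],
      ∀ i, ∀ z ∈ K, ‖F i z - ∑ x ∈ t, F i x * (p x).eval z‖ ≤ ε := by
  obtain ⟨t, htK, g, hg, happrox⟩ := exists_polyClosure_norm_sub_sum_le hK hF hd hB (half_pos hε)
  obtain ⟨η, hη, hηε⟩ : ∃ η > 0, t.card * (|B| * η) ≤ ε / 2 := by
    refine ⟨ε / 2 / (t.card * |B| + 1), by positivity, ?_⟩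
    rw [← mul_assoc, mul_div_assoc', div_le_iff₀ (by positivity), mul_comm (ε / 2)]
    gcongr
    linarith
  choose p hp using fun x => exists_polynomial_norm_sub_lt (hg x) hη
  refine ⟨t, htK, p, fun i z hz => ?_⟩
  have hterm : ∀ x ∈ t, ‖F i x * g x z - F i x * (p x).eval z‖ ≤ |B| * η := fun x hx => by
    rw [← mul_sub, norm_mul, norm_sub_rev]
    exact mul_le_mul ((hB i x (htK hx)).trans (le_abs_self B)) (hp x z hz).le (norm_nonneg _)
      (abs_nonneg B)
  have hpoly : ‖∑ x ∈ t, F i x * g x z - ∑ x ∈ t, F i x * (p x).eval z‖ ≤ ε / 2 := by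
    rw [← Finset.sum_sub_distrib]
    exact (norm_sum_le_of_le t hterm).trans (by simpa using hηε)
  linarith [happrox i z hz, norm_sub_le_norm_sub_add_norm_sub (F i z) (∑ x ∈ t, F i x * g x z)
    (∑ x ∈ t, F i x * (p x).eval z)]

end EquicontinuousFamily

section PolyLimit

variable {I ι : Type*} {X : Set (I → ℂ)} {f : (I → ℂ) → ℂ}

/-- `f` is a uniform limit on `X` of polynomials, each in finitely many of the coordinates. -/
def IsPolyLimit (X : Set (I → ℂ)) (f : (I → ℂ) → ℂ) : Prop :=
  ∀ ε > 0, ∃ P : MvPolynomial I ℂ, ∀ z ∈ X, ‖MvPolynomial.eval z P - f z‖ < ε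

theorem isPolyLimit_eval (P : MvPolynomial I ℂ) : IsPolyLimit X fun z => MvPolynomial.eval z P :=
  fun ε hε => ⟨P, fun z _ => by rwa [sub_self, norm_zero]⟩

theorem isPolyLimit_of_forall_exists
    (h : ∀ ε > 0, ∃ g, IsPolyLimit X g ∧ ∀ z ∈ X, ‖f z - g z‖ ≤ ε) : IsPolyLimit X f := by
  intro ε hε
  obtain ⟨g, hg, hfg⟩ := h (ε / 2) (half_pos hε)
  obtain ⟨P, hP⟩ := hg (ε / 2) (half_pos hε)
  refine ⟨P, fun z hz => ?_⟩
  have htriangle := norm_sub_le_norm_sub_add_norm_sub (MvPolynomial.eval z P) (g z) (f z)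
  rw [norm_sub_rev (g z)] at htriangle
  linarith [hP z hz, hfg z hz]

theorem IsPolyLimit.add {g : (I → ℂ) → ℂ} (hf : IsPolyLimit X f) (hg : IsPolyLimit X g) :
    IsPolyLimit X fun z => f z + g z := by
  intro ε hε
  obtain ⟨P, hP⟩ := hf (ε / 2) (half_pos hε)
  obtain ⟨Q, hQ⟩ := hg (ε / 2) (half_pos hε)
  refine ⟨P + Q, fun z hz => ?_⟩
  rw [map_add, add_sub_add_comm]
  linarith [norm_add_le (MvPolynomial.eval z P - f z) (MvPolynomial.eval z Q - g z), hP z hz,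
    hQ z hz]

theorem IsPolyLimit.sum {g : ι → (I → ℂ) → ℂ} (t : Finset ι)
    (hg : ∀ x ∈ t, IsPolyLimit X (g x)) : IsPolyLimit X fun z => ∑ x ∈ t, g x z := by
  simp only [← Finset.sum_apply]
  exact Finset.sum_induction g (IsPolyLimit X) (fun _ _ => IsPolyLimit.add)
    (fun ε hε => ⟨0, fun z _ => by simpa using hε⟩) hg

theorem IsPolyLimit.mul_eval (hX : IsCompact X) (hf : IsPolyLimit X f) (P : MvPolynomial I ℂ) :
    IsPolyLimit X fun z => f z * MvPolynomial.eval z P := by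
  intro ε hε
  obtain ⟨C, hC⟩ := hX.exists_bound_of_continuousOn (MvPolynomial.continuous_eval P).continuousOn
  obtain ⟨Q, hQ⟩ := hf (ε / (|C| + 1)) (by positivity)
  refine ⟨Q * P, fun z hz => ?_⟩
  rw [map_mul, ← sub_mul, norm_mul]
  calc _ ≤ ‖MvPolynomial.eval z Q - f z‖ * (|C| + 1) := by
        gcongr
        exact (hC z hz).trans (by linarith [le_abs_self C])
    _ < ε / (|C| + 1) * (|C| + 1) := by gcongr; exact hQ z hz
    _ = ε := by field_simp

theorem eval_aeval_X (z : I → ℂ) (i : I) (p : ℂ[X]) :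
    MvPolynomial.eval z (aeval (MvPolynomial.X i) p) = p.eval (z i) := by
  have h := aeval_algHom_apply (MvPolynomial.aeval (R := ℂ) z) (MvPolynomial.X i) p
  simpa [MvPolynomial.aeval_eq_eval] using h.symm

end PolyLimit

section ProductUniformity

theorem exists_finset_forall_eqOn_mem_uniformity {I : Type*} {α : I → Type*}
    [∀ i, UniformSpace (α i)] {U : Set ((∀ i, α i) × (∀ i, α i))} (hU : U ∈ 𝓤 (∀ i, α i)) :
    ∃ s : Finset I, ∀ z w, (∀ i ∈ s, z i = w i) → (z, w) ∈ U := by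
  rw [Pi.uniformity, mem_iInf'] at hU
  obtain ⟨S, hS, V, hV, -, rfl, -⟩ := hU
  refine ⟨hS.toFinset, fun z w hzw => mem_iInter₂.2 fun i hi => ?_⟩
  obtain ⟨W, hW, hWV⟩ := mem_comap.1 (hV i)
  have hdiag : (z i, w i) ∈ W := hzw i (hS.mem_toFinset.2 hi) ▸ refl_mem_uniformity hW
  exact hWV hdiag

theorem uniformEquicontinuousOn_of_continuousOn_prod {α β γ : Type*} [UniformSpace α]
    [UniformSpace β] [UniformSpace γ] {X : Set α} {K : Set β} {g : α → β → γ} (hX : IsCompact X)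
    (hK : IsCompact K) (hg : ContinuousOn g.uncurry (X ×ˢ K)) :
    UniformEquicontinuousOn (fun z : X => g z) K := by
  intro U hU
  have hunif := (hX.prod hK).uniformContinuousOn_of_continuous hg hU
  rw [mem_map, mem_inf_principal, uniformity_prod_eq_comap_prod] at hunif
  obtain ⟨W, hW, hWU⟩ := mem_comap.1 hunif
  obtain ⟨A, hA, B, hB, hAB⟩ := mem_prod_iff.1 hW
  refine mem_inf_principal.2 (mem_of_superset hB fun xy hxy hxyK z => ?_)
  have hmem : ((z.1, xy.1), (z.1, xy.2)) ∈ (fun p : (α × β) × (α × β) =>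
      ((p.1.1, p.2.1), (p.1.2, p.2.2))) ⁻¹' W := hAB ⟨refl_mem_uniformity hA, hxy⟩
  exact hWU hmem ⟨⟨z.2, hxyK.1⟩, ⟨z.2, hxyK.2⟩⟩

end ProductUniformity

section ProductDomain

variable {I : Type*} {α : I → Type*} {K : ∀ i, Set (α i)}

theorem piecewise_mem_univ_pi {x z : ∀ i, α i} {S : Set I} [∀ i, Decidable (i ∈ S)]
    (hx : x ∈ S.pi K) (hz : z ∈ univ.pi K) : S.piecewise x z ∈ univ.pi K := fun i _ => by
  by_cases hi : i ∈ S
  · simpa only [piecewise_eq_of_mem _ _ _ hi] using hx i hi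
  · simpa only [piecewise_eq_of_notMem _ _ _ hi] using hz i trivial

theorem update_mem_univ_pi [DecidableEq I] {z : ∀ i, α i} {i : I} {w : α i}
    (hz : z ∈ univ.pi K) (hw : w ∈ K i) : Function.update z i w ∈ univ.pi K :=
  update_mem_pi_iff_of_mem hz |>.2 fun _ => hw

end ProductDomain

section ProductAlgebra

variable {I : Type*} [DecidableEq I] {K Ω : I → Set ℂ} {f : (I → ℂ) → ℂ} {x z : I → ℂ}
  {i : I} {w : ℂ}

/-- `f` belongs to the algebra `A(∏ᵢ Kᵢ)` of functions that are continuous on `∏ᵢ Kᵢ` and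
holomorphic in each variable on the interior of `Kᵢ`. The other variables are allowed to lie on
the boundary. -/
structure MemProductAlgebra (K : I → Set ℂ) (f : (I → ℂ) → ℂ) : Prop where
  continuousOn : ContinuousOn f (univ.pi K)
  differentiableOn : ∀ z ∈ univ.pi K, ∀ i,
    DifferentiableOn ℂ (fun w => f (Function.update z i w)) (interior (K i))

theorem continuousOn_uncurry_update (hf : ContinuousOn f (univ.pi K)) (i : I) :
    ContinuousOn (Function.uncurry fun z w => f (Function.update z i w)) (univ.pi K ×ˢ K i) :=
  hf.comp (Continuous.continuousOn (by fun_prop)) fun _ hp => update_mem_univ_pi hp.1 hp.2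

theorem MemProductAlgebra.comp_piecewise (hf : MemProductAlgebra K f) {S : Set I}
    [∀ i, Decidable (i ∈ S)] (hx : x ∈ S.pi K) :
    MemProductAlgebra K fun z => f (S.piecewise x z) := by
  refine ⟨hf.continuousOn.comp (continuous_pi fun i => ?_).continuousOn
    fun z => piecewise_mem_univ_pi hx, fun z hz i => ?_⟩
  · by_cases hi : i ∈ S
    · simpa only [piecewise_eq_of_mem _ _ _ hi] using continuous_const
    · simpa only [piecewise_eq_of_notMem _ _ _ hi] using continuous_apply i
  · by_cases hi : i ∈ S
    · have hconst (w : ℂ) : S.piecewise x (Function.update z i w) = S.piecewise x z := by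
        ext j
        rcases eq_or_ne j i with rfl | hj
        · rw [piecewise_eq_of_mem _ _ _ hi, piecewise_eq_of_mem _ _ _ hi]
        · simp only [piecewise, Function.update_of_ne hj]
      simpa only [hconst] using differentiableOn_const _
    · have hupdate (w : ℂ) :
          S.piecewise x (Function.update z i w) = Function.update (S.piecewise x z) i w := by
        ext j
        rcases eq_or_ne j i with rfl | hj
        · rw [piecewise_eq_of_notMem _ _ _ hi, Function.update_self, Function.update_self]
        · simp only [piecewise, Function.update_of_ne hj]
      simpa only [hupdate] using hf.differentiableOn _ (piecewise_mem_univ_pi hx hz) i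

theorem MemProductAlgebra.comp_update (hf : MemProductAlgebra K f) (hw : w ∈ K i) :
    MemProductAlgebra K fun z => f (Function.update z i w) := by
  simpa only [piecewise_singleton] using hf.comp_piecewise (S := {i}) (x := fun _ => w)
    fun j hj => (mem_singleton_iff.1 hj) ▸ hw

theorem memProductAlgebra_closure (hΩb : ∀ i, Bornology.IsBounded (Ω i))
    (hreg : ∀ i, interior (closure (Ω i)) = Ω i)
    (hfc : ContinuousOn f (univ.pi fun i => closure (Ω i)))
    (hfd : ∀ z ∈ univ.pi Ω, ∀ i,
      DifferentiableAt ℂ (fun w => f (Function.update z i w)) (z i)) :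
    MemProductAlgebra (fun i => closure (Ω i)) f := by
  refine ⟨hfc, fun z hz i => ?_⟩
  have hdense : (𝓝[univ.pi Ω] z).NeBot :=
    mem_closure_iff_nhdsWithin_neBot.1 (by rwa [closure_pi_set])
  have hlimit : TendstoUniformlyOn (fun y w => f (Function.update y i w))
      (fun w => f (Function.update z i w)) (𝓝[univ.pi Ω] z) (Ω i) := by
    intro U hU
    obtain ⟨V, hV, hVU⟩ := (hΩb i).isCompact_closure.mem_uniformity_of_prod
      (continuousOn_uncurry_update hfc i) hz (symm_le_uniformity hU)
    have hmono : 𝓝[univ.pi Ω] z ≤ 𝓝[univ.pi fun i => closure (Ω i)] z :=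
      nhdsWithin_mono z (pi_mono fun i _ => subset_closure)
    exact hmono (mem_of_superset hV fun y hy w hw => hVU y hy w (subset_closure hw))
  have hdiff : ∀ᶠ y in 𝓝[univ.pi Ω] z,
      DifferentiableOn ℂ (fun w => f (Function.update y i w)) (Ω i) := by
    filter_upwards [self_mem_nhdsWithin] with y hy w hw
    have hyw := hfd _ (update_mem_univ_pi hy hw) i
    simp only [Function.update_self, Function.update_idem] at hyw
    exact hyw.differentiableWithinAt
  rw [hreg]
  exact hlimit.tendstoLocallyUniformlyOn.differentiableOn hdiff (hreg i ▸ isOpen_interior)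

theorem MemProductAlgebra.isPolyLimit_of_dependsOn (hK : ∀ i, IsCompact (K i))
    (hKc : ∀ i, IsPreconnected (K i)ᶜ) (s : Finset I) {f : (I → ℂ) → ℂ}
    (hf : MemProductAlgebra K f) (hs : DependsOn f s) : IsPolyLimit (univ.pi K) f := by
  have hX : IsCompact (univ.pi K) := isCompact_univ_pi hK
  induction s using Finset.induction_on generalizing f with
  | empty =>
    have hconst (z : I → ℂ) : f z = f 0 := hs (by simp)
    have hpoly : f = fun z => MvPolynomial.eval z (MvPolynomial.C (f 0)) :=
      funext fun z => by rw [MvPolynomial.eval_C, hconst z]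
    exact hpoly ▸ isPolyLimit_eval _
  | insert i s _ ih =>
    refine isPolyLimit_of_forall_exists fun ε hε => ?_
    have := isCompact_iff_compactSpace.1 (hK i)
    obtain ⟨B, hB⟩ := hX.exists_bound_of_continuousOn hf.continuousOn
    obtain ⟨t, htK, p, hp⟩ := exists_polynomial_norm_sub_sum_le (hKc i)
      (uniformEquicontinuousOn_of_continuousOn_prod hX (hK i)
        (continuousOn_uncurry_update hf.continuousOn i))
      (fun z => hf.differentiableOn z z.2 i)
      (fun z w hw => hB _ (update_mem_univ_pi z.2 hw)) hε
    refine ⟨fun z => ∑ x ∈ t, f (Function.update z i x) *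
      MvPolynomial.eval z (aeval (MvPolynomial.X i) (p x)), ?_, fun z hz => ?_⟩
    · refine .sum t fun x hx => (ih (hf.comp_update (htK hx)) fun z w hzw => ?_).mul_eval hX _
      refine hs fun j hj => ?_
      rcases eq_or_ne j i with rfl | hji
      · rw [Function.update_self, Function.update_self]
      · rw [Function.update_of_ne hji, Function.update_of_ne hji]
        exact hzw j (Finset.mem_of_mem_insert_of_ne hj hji)
    · simpa only [eval_aeval_X, Function.update_eq_self] using hp ⟨z, hz⟩ (z i) (hz i trivial)

theorem MemProductAlgebra.isPolyLimit (hK : ∀ i, IsCompact (K i))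
    (hKc : ∀ i, IsPreconnected (K i)ᶜ) (hf : MemProductAlgebra K f) :
    IsPolyLimit (univ.pi K) f := by
  classical
  rcases (univ.pi K).eq_empty_or_nonempty with hempty | ⟨x, hx⟩
  · exact fun ε _ => ⟨0, fun z hz => absurd hz (hempty ▸ notMem_empty z)⟩
  refine isPolyLimit_of_forall_exists fun ε hε => ?_
  have hunif := (isCompact_univ_pi hK).uniformContinuousOn_of_continuous hf.continuousOn
    (dist_mem_uniformity hε)
  obtain ⟨s, hs⟩ := exists_finset_forall_eqOn_mem_uniformity (mem_inf_principal.1 hunif)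
  have hxs : x ∈ ((s : Set I)ᶜ).pi K := fun i _ => hx i trivial
  have hfree (z : I → ℂ) (i : I) (hi : i ∈ s) : (s : Set I)ᶜ.piecewise x z i = z i :=
    piecewise_eq_of_notMem _ _ _ (not_not.2 hi)
  have hfrozen (z : I → ℂ) (i : I) (hi : i ∉ s) : (s : Set I)ᶜ.piecewise x z i = x i :=
    piecewise_eq_of_mem _ _ _ hi
  refine ⟨fun z => f ((s : Set I)ᶜ.piecewise x z),
    (hf.comp_piecewise hxs).isPolyLimit_of_dependsOn hK hKc s fun z w hzw => ?_, fun z hz => ?_⟩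
  · refine congrArg f (funext fun i => ?_)
    by_cases hi : i ∈ s
    · rw [hfree z i hi, hfree w i hi, hzw i hi]
    · rw [hfrozen z i hi, hfrozen w i hi]
  · rw [← dist_eq_norm]
    exact le_of_lt (hs z _ (fun i hi => (hfree z i hi).symm) ⟨hz, piecewise_mem_univ_pi hxs hz⟩)

end ProductAlgebra

end Mergelyan

theorem stmt7_general {I : Type*} [DecidableEq I] (Ω : I → Set ℂ)
    (hΩb : ∀ i, Bornology.IsBounded (Ω i))
    (hreg : ∀ i, interior (closure (Ω i)) = Ω i)
    (hcc : ∀ i, IsPreconnected (closure (Ω i))ᶜ)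
    (f : (I → ℂ) → ℂ)
    (hfc : ContinuousOn f (Set.pi Set.univ fun i => closure (Ω i)))
    (hfd : ∀ z ∈ Set.pi Set.univ Ω, ∀ i : I,
      DifferentiableAt ℂ (fun w => f (Function.update z i w)) (z i)) :
    ∀ ε > 0, ∃ P : MvPolynomial I ℂ,
      ∀ z ∈ Set.pi Set.univ fun i => closure (Ω i),
        ‖MvPolynomial.eval z P - f z‖ < ε :=
  (Mergelyan.memProductAlgebra_closure hΩb hreg hfc hfd).isPolyLimit
    (fun i => (hΩb i).isCompact_closure) hcc

/-- **Polynomials are dense in `A(∏ᵢ Ωᵢ)`.** Let `I` be an arbitrary index set and `Ωᵢ ⊂ ℂ`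
bounded domains with `(closure Ωᵢ)° = Ωᵢ`, `ℂ \ closure Ωᵢ` connected, and constants `Mᵢ` so
that any two points of `Ωᵢ` can be joined in `Ωᵢ` by a path of length at most `Mᵢ`. Then every
`f : ∏ᵢ closure Ωᵢ → ℂ` continuous in the product topology and separately holomorphic on
`∏ᵢ Ωᵢ` is a uniform limit of polynomials (an `MvPolynomial` automatically depends on only
finitely many of the variables). -/
theorem stmt7 {I : Type*} [DecidableEq I] (Ω : I → Set ℂ)
    (hΩo : ∀ i, IsOpen (Ω i)) (hΩc : ∀ i, IsConnected (Ω i))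
    (hΩb : ∀ i, Bornology.IsBounded (Ω i))
    (hreg : ∀ i, interior (closure (Ω i)) = Ω i)
    (hcc : ∀ i, IsConnected (closure (Ω i))ᶜ)
    (M : I → ℝ) (hjoin : ∀ i, ∀ z ∈ Ω i, ∀ w ∈ Ω i, JoinedLe (Ω i) (M i) z w)
    (f : (I → ℂ) → ℂ)
    (hfc : ContinuousOn f (Set.pi Set.univ fun i => closure (Ω i)))
    (hfd : ∀ z ∈ Set.pi Set.univ Ω, ∀ i : I,
      DifferentiableAt ℂ (fun w => f (Function.update z i w)) (z i)) :
    ∀ ε > 0, ∃ P : MvPolynomial I ℂ,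
      ∀ z ∈ Set.pi Set.univ fun i => closure (Ω i),
        ‖MvPolynomial.eval z P - f z‖ < ε :=
  stmt7_general Ω hΩb hreg (fun i => (hcc i).isPreconnected) f hfc hfd
end

section
/- Let G ⊂ ℂ be a Jordan domain and φ : G → 𝔻 a conformal (biholomorphic) map onto the open unit disc. Then φ extends to a homeomorphism of closure(G) onto the closed unit disc. -/
/-- A Jordan domain: the bounded connected component of the complement of a Jordan curve
(a homeomorphic image of the unit circle) in `ℂ`. -/
def IsJordanDomain (G : Set ℂ) : Prop :=
  ∃ C : Set ℂ, Nonempty (↥(Metric.sphere (0:ℂ) 1) ≃ₜ ↥C) ∧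
    Bornology.IsBounded G ∧ ∃ z ∈ Cᶜ, G = connectedComponentIn Cᶜ z

/-!
Let `C` be the boundary curve and let `e : 𝔻 → G` be the inverse of the conformal map.

Since `G` has finite area, the length–area method gives, near each point `ζ` of the unit circle,
circular arcs `{s ∈ 𝔻 | |s - ζ| = r}` with arbitrarily small images. By local connectedness of `C`
such an image lies in a small compact set `A` with `A ∩ C` connected. By Janiszewski's theorem, two
points that are separated neither by `A` nor by `C` are not separated by `A ∪ C` either; hence `e`
maps one side of the arc into a small disc, and `e` has a limit at `ζ`. Janiszewski's theorem itself
comes from Eilenberg's criterion: a compact set separates `p` from `q` if and only if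
`(z - p) / (z - q)` has no continuous logarithm on it.

If the extension `F` took the same value `a` at two points of the circle, then the image of their
chord would meet `C` in `a` only. As `C \ {a}` is connected, it lies in one complementary component
of this image, so by Janiszewski's theorem again `F` is constantly `a` on one of the two arcs. The
maximum principle then forces `F 0 = a`, although `F 0 ∈ G` and `a ∈ C`.
-/

open Set Filter Topology Metric Complex MeasureTheory
open scoped ENNReal

/-! ### Continuous logarithms -/

/-- A function `f` has a *continuous logarithm* on `s` if `f = exp ∘ g` on `s` for some `g` that is
continuous on `s`. For `f z = (z - p) / (z - q)` this is Eilenberg's criterion for `s` not to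
separate `p` from `q`. -/
def HasContinuousLogOn {X : Type*} [TopologicalSpace X] (f : X → ℂ) (s : Set X) : Prop :=
  ∃ g : X → ℂ, ContinuousOn g s ∧ EqOn (exp ∘ g) f s

namespace HasContinuousLogOn

variable {X : Type*} [TopologicalSpace X] {f f₁ f₂ : X → ℂ} {s t : Set X}

lemma mono (h : HasContinuousLogOn f t) (hst : s ⊆ t) : HasContinuousLogOn f s :=
  let ⟨g, hg, hgf⟩ := h
  ⟨g, hg.mono hst, hgf.mono hst⟩

lemma congr (h : HasContinuousLogOn f₁ s) (h' : EqOn f₁ f₂ s) : HasContinuousLogOn f₂ s :=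
  let ⟨g, hg, hgf⟩ := h
  ⟨g, hg, hgf.trans h'⟩

lemma mul (h₁ : HasContinuousLogOn f₁ s) (h₂ : HasContinuousLogOn f₂ s) :
    HasContinuousLogOn (f₁ * f₂) s := by
  obtain ⟨g₁, hg₁, h₁⟩ := h₁
  obtain ⟨g₂, hg₂, h₂⟩ := h₂
  refine ⟨g₁ + g₂, hg₁.add hg₂, fun z hz => ?_⟩
  simp only [Function.comp_apply, Pi.add_apply, Pi.mul_apply, exp_add, ← h₁ hz, ← h₂ hz]

lemma inv (h : HasContinuousLogOn f s) : HasContinuousLogOn f⁻¹ s := by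
  obtain ⟨g, hg, h⟩ := h
  refine ⟨-g, hg.neg, fun z hz => ?_⟩
  simp only [Function.comp_apply, Pi.neg_apply, Pi.inv_apply, exp_neg, ← h hz]

end HasContinuousLogOn

section ContinuousLog

variable {X : Type*} [TopologicalSpace X] {f : X → ℂ} {s t : Set X}

lemma hasContinuousLogOn_of_mem_slitPlane (hf : ContinuousOn f s)
    (hs : ∀ z ∈ s, f z ∈ slitPlane) : HasContinuousLogOn f s :=
  ⟨fun z => log (f z), hf.clog hs, fun z hz => exp_log (slitPlane_ne_zero (hs z hz))⟩

lemma hasContinuousLogOn_univ [SimplyConnectedSpace X] [LocallyPathConnectedSpace X]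
    (hf : Continuous f) (h0 : ∀ z, f z ≠ 0) : HasContinuousLogOn f univ :=
  exists_continuousOn_eqOn_exp_comp
    ((Homeomorph.Set.univ X).toHomotopyEquiv.simplyConnectedSpace) isOpen_univ hf.continuousOn
    (by simpa using h0)

lemma eqOn_of_exp_comp_eqOn (hs : IsPreconnected s) {g k : X → ℂ}
    (hg : ContinuousOn g s) (hk : ContinuousOn k s) (h : EqOn (exp ∘ g) (exp ∘ k) s) {x : X}
    (hx : x ∈ s) (hgk : g x = k x) : EqOn g k s :=
  isCoveringMap_exp.eqOn_of_comp_eqOn hs hg hk (fun _ hz => Subtype.ext (h hz)) hx hgk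

lemma HasContinuousLogOn.union (hs : IsClosed s) (ht : IsClosed t) (hst : IsPreconnected (s ∩ t))
    (hfs : HasContinuousLogOn f s) (hft : HasContinuousLogOn f t) :
    HasContinuousLogOn f (s ∪ t) := by
  classical
  obtain ⟨g, hg, hgf⟩ := hfs
  obtain ⟨k, hk, hkf⟩ := hft
  have hgk : EqOn (exp ∘ g) (exp ∘ k) (s ∩ t) := fun z hz => (hgf hz.1).trans (hkf hz.2).symm
  obtain ⟨c, hc, hgkc⟩ : ∃ c, exp c = 1 ∧ EqOn g (fun z => k z + c) (s ∩ t) := by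
    obtain h | ⟨x, hx⟩ := (s ∩ t).eq_empty_or_nonempty
    · exact ⟨0, exp_zero, by simp [h]⟩
    · have hc : exp (g x - k x) = 1 := by
        rw [exp_sub, div_eq_one_iff_eq (exp_ne_zero _)]
        exact hgk hx
      refine ⟨g x - k x, hc, eqOn_of_exp_comp_eqOn hst (hg.mono inter_subset_left)
        ((hk.mono inter_subset_right).add continuousOn_const) (fun z hz => ?_) hx (by simp)⟩
      simp only [Function.comp_apply, exp_add, hc, mul_one]
      exact hgk hz
  have hs_eq : EqOn (s.piecewise g fun z => k z + c) g s := piecewise_eqOn _ _ _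
  have ht_eq : EqOn (s.piecewise g fun z => k z + c) (fun z => k z + c) t := fun z hz => by
    by_cases hzs : z ∈ s
    · rw [hs_eq hzs, hgkc ⟨hzs, hz⟩]
    · exact piecewise_eq_of_notMem _ _ _ hzs
  refine ⟨s.piecewise g fun z => k z + c, (hg.congr hs_eq).union_of_isClosed
    ((hk.add continuousOn_const).congr ht_eq) hs ht, EqOn.union (fun z hz => ?_) fun z hz => ?_⟩
  · simpa only [Function.comp_apply, hs_eq hz] using hgf hz
  · simpa only [Function.comp_apply, ht_eq hz, exp_add, hc, mul_one] using hkf hz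

end ContinuousLog

lemma not_hasContinuousLogOn_sub_sphere (p : ℂ) {R : ℝ} (hR : 0 < R) :
    ¬ HasContinuousLogOn (fun z => z - p) (sphere p R) := by
  rintro ⟨g, hg, hgf⟩
  have hmem : ∀ θ : ℝ, circleMap p R θ ∈ sphere p R := circleMap_mem_sphere p hR.le
  have hexp : ∀ θ : ℝ, exp (g (circleMap p R θ)) = R * exp (θ * I) := fun θ => by
    simpa [circleMap] using hgf (hmem θ)
  have hlift : EqOn (fun θ : ℝ => g (circleMap p R θ))
      (fun θ => g (circleMap p R 0) + θ * I) univ :=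
    eqOn_of_exp_comp_eqOn isPreconnected_univ
      (hg.comp (continuous_circleMap p R).continuousOn fun θ _ => hmem θ) (by fun_prop)
      (fun θ _ => by simp [exp_add, hexp]) (mem_univ 0) (by simp)
  simpa [circleMap, two_pi_I_ne_zero, Real.pi_ne_zero] using hlift (mem_univ (2 * Real.pi))

/-! ### Janiszewski's theorem -/

lemma hasContinuousLogOn_sub_div_sub_of_mem_ball {A : Set ℂ} {p q : ℂ} {r : ℝ}
    (hA : Disjoint (ball q r) A) (hp : p ∈ ball q r) :
    HasContinuousLogOn (fun z => (z - p) / (z - q)) A := by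
  have hr : ∀ z ∈ A, r ≤ ‖z - q‖ := fun z hz => by
    simpa [dist_eq] using hA.notMem_of_mem_right hz
  have hr0 : 0 < r := pos_of_mem_ball hp
  have hne : ∀ z ∈ A, z - q ≠ 0 := fun z hz => norm_pos_iff.1 (hr0.trans_le (hr z hz))
  refine hasContinuousLogOn_of_mem_slitPlane (by fun_prop (disch := assumption)) fun z hz => ?_
  have heq : (z - p) / (z - q) = 1 + (q - p) / (z - q) := by
    field_simp [hne z hz]
    ring
  rw [heq]
  refine mem_slitPlane_of_norm_lt_one ?_
  rw [norm_div, div_lt_one (norm_pos_iff.2 (hne z hz)), ← dist_eq, dist_comm]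
  exact (mem_ball.1 hp).trans_le (hr z hz)

lemma hasContinuousLogOn_sub_div_sub {A : Set ℂ} (hA : IsClosed A) {p q : ℂ}
    (h : q ∈ connectedComponentIn Aᶜ p) : HasContinuousLogOn (fun z => (z - p) / (z - q)) A := by
  have hsub : ∀ x ∈ connectedComponentIn Aᶜ p, ∀ z ∈ A, z - x ≠ 0 := fun x hx z hz h0 =>
    connectedComponentIn_subset _ _ hx (sub_eq_zero.1 h0 ▸ hz)
  refine isPreconnected_connectedComponentIn.induction₂
    (fun p q => HasContinuousLogOn (fun z => (z - p) / (z - q)) A) (fun x hx => ?_)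
    (fun x y w _ hy _ hxy hyw => ?_) (fun x y _ _ hxy => ?_)
    (mem_connectedComponentIn (connectedComponentIn_nonempty_iff.1 ⟨q, h⟩)) h
  · obtain ⟨r, hr, hball⟩ :=
      Metric.isOpen_iff.1 hA.isOpen_compl x (connectedComponentIn_subset _ _ hx)
    filter_upwards [nhdsWithin_le_nhds (ball_mem_nhds x hr)] with y hy
    have := (hasContinuousLogOn_sub_div_sub_of_mem_ball
      (disjoint_left.2 fun _ hz => hball hz) hy).inv
    exact this.congr fun z _ => inv_div _ _
  · exact (hxy.mul hyw).congr fun z hz => div_mul_div_cancel₀ (hsub y hy z hz)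
  · exact hxy.inv.congr fun z _ => inv_div _ _

lemma closure_connectedComponentIn_subset_union {X : Type*} [TopologicalSpace X] (W : Set X)
    (x : X) : closure (connectedComponentIn W x) ⊆ connectedComponentIn W x ∪ Wᶜ := by
  intro y hy
  by_cases hyW : y ∈ W
  · left
    have hx : x ∈ W := connectedComponentIn_nonempty_iff.1 (closure_nonempty_iff.1 ⟨y, hy⟩)
    exact (isPreconnected_connectedComponentIn.subset_closure (subset_insert _ _)
      (insert_subset hy subset_closure)).subset_connectedComponentIn
      (mem_insert_of_mem _ (mem_connectedComponentIn hx))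
      (insert_subset hyW (connectedComponentIn_subset _ _)) (mem_insert _ _)
  · exact Or.inr hyW

-- If `q` were outside the component `U` of `p`, then `exp g * (z - q)` on `U`, where `g` extends
-- the logarithm, and `z - p` off `U` would glue to a zero-free function with winding number one.
lemma mem_connectedComponentIn_compl_of_isBounded {K : Set ℂ} (hK : IsClosed K) {p q : ℂ}
    (hp : p ∉ K) (hq : q ∉ K) (hlog : HasContinuousLogOn (fun z => (z - p) / (z - q)) K)
    (hb : Bornology.IsBounded (connectedComponentIn Kᶜ p)) : q ∈ connectedComponentIn Kᶜ p := by
  classical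
  by_contra hqU
  obtain ⟨g, hg, hgf⟩ := hlog
  set U := connectedComponentIn Kᶜ p
  have hUo : IsOpen U := hK.isOpen_compl.connectedComponentIn
  have hpU : p ∈ U := mem_connectedComponentIn hp
  have hcl : closure U ⊆ U ∪ K := by
    simpa only [compl_compl] using closure_connectedComponentIn_subset_union Kᶜ p
  obtain ⟨G, hG⟩ := ContinuousMap.exists_restrict_eq hK ⟨K.domRestrict g, hg.domRestrict⟩
  have hGg : EqOn G g K := fun z hz => DFunLike.congr_fun hG ⟨z, hz⟩
  have hqc : ∀ z ∈ closure U, z - q ≠ 0 := fun z hz h =>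
    (hcl hz).elim (fun h' => hqU (sub_eq_zero.1 h ▸ h')) fun h' => hq (sub_eq_zero.1 h ▸ h')
  have hFc : Continuous (U.piecewise (fun z => exp (G z) * (z - q)) fun z => z - p) := by
    refine Continuous.piecewise (fun z hz => ?_) (by fun_prop) (by fun_prop)
    have hzU : z ∉ U := hUo.interior_eq ▸ hz.2
    have hzK : z ∈ K := (hcl hz.1).resolve_left hzU
    have hexp : exp (g z) = (z - p) / (z - q) := hgf hzK
    rw [hGg hzK, hexp, div_mul_cancel₀ _ (hqc z hz.1)]
  obtain ⟨R, hR⟩ := hb.subset_ball p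
  refine not_hasContinuousLogOn_sub_sphere p (pos_of_mem_ball (hR hpU))
    (((hasContinuousLogOn_univ hFc fun z => ?_).mono (subset_univ _)).congr fun z hz => ?_)
  · by_cases hz : z ∈ U
    · rw [piecewise_eq_of_mem _ _ _ hz]
      exact mul_ne_zero (exp_ne_zero _) (hqc z (subset_closure hz))
    · rw [piecewise_eq_of_notMem _ _ _ hz]
      exact fun h => hz (sub_eq_zero.1 h ▸ hpU)
  · exact piecewise_eq_of_notMem _ _ _ fun hzU => (mem_ball.1 (hR hzU)).ne hz

lemma isPreconnected_compl_closedBall {E : Type*} [NormedAddCommGroup E] [NormedSpace ℝ E]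
    (hE : 1 < Module.rank ℝ E) (c : E) (R : ℝ) : IsPreconnected (closedBall c R)ᶜ := by
  obtain hR | hR := lt_or_ge R 0
  · simpa [closedBall_eq_empty.2 hR] using isPreconnected_univ
  have himage : (closedBall c R)ᶜ = (fun x : ℝ × E => c + x.1 • x.2) '' (Ioi R ×ˢ sphere 0 1) := by
    ext z
    refine ⟨fun hz => ?_, ?_⟩
    · have hz' : R < ‖z - c‖ := by simpa [dist_eq_norm] using hz
      have h0 : ‖z - c‖ ≠ 0 := (hR.trans_lt hz').ne'
      exact ⟨(‖z - c‖, ‖z - c‖⁻¹ • (z - c)), ⟨hz', by simp [norm_smul, h0]⟩, by simp [h0]⟩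
    · rintro ⟨⟨r, u⟩, ⟨hr, hu⟩, rfl⟩
      have hu : ‖u‖ = 1 := by simpa using hu
      have hr : R < r := hr
      simpa [norm_smul, hu] using hr.trans_le (le_abs_self r)
  rw [himage]
  exact (isPreconnected_Ioi.prod (isPreconnected_sphere hE 0 1)).image _ (by fun_prop)

lemma mem_connectedComponentIn_compl_of_not_isBounded {E : Type*} [NormedAddCommGroup E]
    [NormedSpace ℝ E] (hE : 1 < Module.rank ℝ E) {K : Set E} (hK : Bornology.IsBounded K) {p q : E}
    (hp : ¬ Bornology.IsBounded (connectedComponentIn Kᶜ p))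
    (hq : ¬ Bornology.IsBounded (connectedComponentIn Kᶜ q)) : q ∈ connectedComponentIn Kᶜ p := by
  obtain ⟨R, hR⟩ := hK.subset_closedBall 0
  obtain ⟨a, ha, haR⟩ := not_subset.1 fun h => hp (isBounded_closedBall.subset h)
  obtain ⟨b, hb, hbR⟩ := not_subset.1 fun h => hq (isBounded_closedBall.subset h)
  have hab : b ∈ connectedComponentIn Kᶜ a :=
    (isPreconnected_compl_closedBall hE 0 R).subset_connectedComponentIn haR
      (compl_subset_compl.2 hR) hbR
  rw [connectedComponentIn_eq ha, connectedComponentIn_eq hab, ← connectedComponentIn_eq hb]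
  exact mem_connectedComponentIn (connectedComponentIn_nonempty_iff.1 ⟨b, hb⟩)

lemma mem_connectedComponentIn_compl_of_hasContinuousLogOn {K : Set ℂ} (hK : IsCompact K) {p q : ℂ}
    (hp : p ∉ K) (hq : q ∉ K) (hlog : HasContinuousLogOn (fun z => (z - p) / (z - q)) K) :
    q ∈ connectedComponentIn Kᶜ p := by
  by_cases hbp : Bornology.IsBounded (connectedComponentIn Kᶜ p)
  · exact mem_connectedComponentIn_compl_of_isBounded hK.isClosed hp hq hlog hbp
  by_cases hbq : Bornology.IsBounded (connectedComponentIn Kᶜ q)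
  · have hpq := mem_connectedComponentIn_compl_of_isBounded hK.isClosed hq hp
      (hlog.inv.congr fun z _ => inv_div _ _) hbq
    rw [← connectedComponentIn_eq hpq]
    exact mem_connectedComponentIn hq
  exact mem_connectedComponentIn_compl_of_not_isBounded (by simp [rank_real_complex]) hK.isBounded
    hbp hbq

theorem janiszewski {A B : Set ℂ} (hA : IsCompact A) (hB : IsCompact B)
    (hAB : IsPreconnected (A ∩ B)) {p q : ℂ} (hpqA : q ∈ connectedComponentIn Aᶜ p)
    (hpqB : q ∈ connectedComponentIn Bᶜ p) : q ∈ connectedComponentIn (A ∪ B)ᶜ p := by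
  refine mem_connectedComponentIn_compl_of_hasContinuousLogOn (hA.union hB) ?_ ?_
    ((hasContinuousLogOn_sub_div_sub hA.isClosed hpqA).union hA.isClosed hB.isClosed hAB
      (hasContinuousLogOn_sub_div_sub hB.isClosed hpqB))
  · exact not_or.2 ⟨connectedComponentIn_nonempty_iff.1 ⟨q, hpqA⟩,
      connectedComponentIn_nonempty_iff.1 ⟨q, hpqB⟩⟩
  · exact not_or.2 ⟨connectedComponentIn_subset _ _ hpqA, connectedComponentIn_subset _ _ hpqB⟩

lemma notMem_connectedComponentIn_of_levelSet {X : Type*} [TopologicalSpace X]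
    (e : OpenPartialHomeomorph X ℂ) {A C : Set ℂ} {z₀ : ℂ}
    (he : e.target = connectedComponentIn Cᶜ z₀) (hA : IsCompact A) (hC : IsCompact C)
    (hAC : IsPreconnected (A ∩ C)) {h : X → ℝ} (hh : ContinuousOn h e.source) {c : ℝ}
    (hlevel : ∀ s ∈ e.source, h s = c → e s ∈ A) {s t : X} (hs : s ∈ e.source) (ht : t ∈ e.source)
    (hsc : h s ≤ c) (hct : c ≤ h t) : e t ∉ connectedComponentIn Aᶜ (e s) := by
  intro hst
  have hcomp : e.target = connectedComponentIn Cᶜ (e s) := by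
    rw [he, connectedComponentIn_eq (he ▸ e.map_source hs)]
  have htK := janiszewski hA hC hAC hst (hcomp ▸ e.map_source ht)
  set K := connectedComponentIn (A ∪ C)ᶜ (e s)
  have hsK : e s ∈ K := mem_connectedComponentIn (connectedComponentIn_nonempty_iff.1 ⟨_, htK⟩)
  have hKA : K ⊆ Aᶜ :=
    (connectedComponentIn_subset _ _).trans (compl_subset_compl.2 subset_union_left)
  have hKt : K ⊆ e.target := hcomp ▸ isPreconnected_connectedComponentIn.subset_connectedComponentIn
    hsK ((connectedComponentIn_subset _ _).trans (compl_subset_compl.2 subset_union_right))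
  obtain ⟨w, hwK, hw⟩ := isPreconnected_connectedComponentIn.intermediate_value hsK htK
    (hh.comp (e.continuousOn_symm.mono hKt) fun w hw => e.map_target (hKt hw))
    (by simpa only [Function.comp_apply, e.left_inv hs, e.left_inv ht] using ⟨hsc, hct⟩)
  exact hKA hwK (e.right_inv (hKt hwK) ▸ hlevel _ (e.map_target (hKt hwK)) hw)

/-! ### Local connectedness and cut points -/

section LocallyConnected

variable {X : Type*} [PseudoMetricSpace X]

lemma exists_isPreconnected_ball_subset [CompactSpace X] [LocallyConnectedSpace X] {ε : ℝ}
    (hε : 0 < ε) : ∃ δ > 0, ∀ x : X, ∃ T, IsClosed T ∧ IsPreconnected T ∧ ball x δ ⊆ T ∧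
      T ⊆ closedBall x ε := by
  choose V hVsub hVo hmem hV using fun y : X =>
    locallyConnectedSpace_iff_subsets_isOpen_isConnected.1 ‹_› y _
      (closedBall_mem_nhds y (half_pos hε))
  obtain ⟨δ, hδ, hball⟩ := lebesgue_number_lemma_of_metric (isCompact_univ (X := X)) hVo
    fun x _ => mem_iUnion_of_mem x (hmem x)
  refine ⟨δ, hδ, fun x => ?_⟩
  obtain ⟨y, hy⟩ := hball x (mem_univ x)
  refine ⟨closure (V y), isClosed_closure, (hV y).isPreconnected.closure, hy.trans subset_closure,
    (closure_minimal (hVsub y) isClosed_closedBall).trans (closedBall_subset_closedBall' ?_)⟩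
  have hxy : dist x y ≤ ε / 2 := hVsub y (hy (mem_ball_self hδ))
  rw [dist_comm]
  linarith

lemma exists_isPreconnected_inter_ball_subset {C : Set X} (hC : IsCompact C)
    [LocallyConnectedSpace C] {ε : ℝ} (hε : 0 < ε) : ∃ δ > 0, ∀ x ∈ C, ∃ T ⊆ C, IsCompact T ∧
      IsPreconnected T ∧ C ∩ ball x δ ⊆ T ∧ T ⊆ closedBall x ε := by
  have := isCompact_iff_compactSpace.1 hC
  obtain ⟨δ, hδ, h⟩ := exists_isPreconnected_ball_subset (X := C) hε
  refine ⟨δ, hδ, fun x hx => ?_⟩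
  obtain ⟨T, hTc, hT, hball, hsub⟩ := h ⟨x, hx⟩
  refine ⟨(↑) '' T, Subtype.coe_image_subset C T, hTc.isCompact.image continuous_subtype_val,
    hT.image _ continuous_subtype_val.continuousOn, ?_, ?_⟩
  · exact fun y hy => ⟨⟨y, hy.1⟩, hball hy.2, rfl⟩
  · rintro _ ⟨y, hy, rfl⟩
    exact hsub hy

end LocallyConnected

section Sphere

variable {E : Type*} [NormedAddCommGroup E] [InnerProductSpace ℝ E]

lemma isPreconnected_compl_singleton_sphere (v : sphere (0 : E) 1) :
    IsPreconnected ({v}ᶜ : Set (sphere (0 : E) 1)) := by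
  have hv : ‖(v : E)‖ = 1 := norm_eq_of_mem_sphere v
  have h := isPreconnected_univ.image (stereographic hv).symm
    (stereographic_target hv ▸ (stereographic hv).continuousOn_symm)
  rwa [← stereographic_target hv, (stereographic hv).symm_image_target_eq_source,
    stereographic_source] at h

lemma locallyConnectedSpace_sphere {n : ℕ} [Fact (Module.finrank ℝ E = n + 1)] :
    LocallyConnectedSpace (sphere (0 : E) 1) :=
  ChartedSpace.locallyConnectedSpace (EuclideanSpace ℝ (Fin n)) _

end Sphere

lemma isPreconnected_diff_singleton_of_homeomorph {X Y : Type*} [TopologicalSpace X]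
    [TopologicalSpace Y] {C : Set Y} (γ : X ≃ₜ C) (h : ∀ x : X, IsPreconnected ({x}ᶜ : Set X))
    {a : Y} (ha : a ∈ C) : IsPreconnected (C \ {a}) := by
  have himage : C \ {a} = (fun x => (γ x : Y)) '' {γ.symm ⟨a, ha⟩}ᶜ := by
    rw [← image_image, image_compl_eq γ.bijective, image_singleton, γ.apply_symm_apply,
      image_compl_eq_range_sdiff_image Subtype.val_injective, Subtype.range_coe, image_singleton]
  rw [himage]
  exact (h _).image _ (by fun_prop)

/-! ### The length–area method -/

lemma lintegral_enorm_deriv_sq_eq_volume_image {Ω : Set ℂ} (hΩ : IsOpen Ω) {g : ℂ → ℂ}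
    (hg : DifferentiableOn ℂ g Ω) (hi : InjOn g Ω) :
    ∫⁻ w in Ω, ‖deriv g w‖ₑ ^ 2 = volume (g '' Ω) := by
  have hdet : ∀ a : ℂ, ENNReal.ofReal
      |((ContinuousLinearMap.toSpanSingleton ℂ a).restrictScalars ℝ).det| = ‖a‖ₑ ^ 2 := fun a => by
    rw [← ofReal_norm, ← ENNReal.ofReal_pow (norm_nonneg a)]
    simp [ContinuousLinearMap.det, LinearMap.det_restrictScalars, Algebra.norm_complex_apply,
      normSq_eq_norm_sq]
  simp_rw [← hdet]
  exact lintegral_abs_det_fderiv_eq_addHaar_image volume hΩ.measurableSet (fun w hw =>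
    ((hg.differentiableAt (hΩ.mem_nhds hw)).hasDerivAt.hasFDerivAt.restrictScalars
      ℝ).hasFDerivWithinAt) hi

lemma lintegral_complex_eq_lintegral_lintegral {h : ℂ → ℝ≥0∞} (hh : Measurable h) :
    ∫⁻ w, h w = ∫⁻ x : ℝ, ∫⁻ y : ℝ, h (x + y * I) := by
  rw [← volume_preserving_equiv_real_prod.symm.lintegral_comp_emb
    measurableEquivRealProd.symm.measurableEmbedding, Measure.volume_eq_prod,
    lintegral_prod (fun x => h (measurableEquivRealProd.symm x))
      (hh.comp measurableEquivRealProd.symm.measurable).aemeasurable]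
  simp_rw [measurableEquivRealProd_symm_apply, mk_eq_add_mul_I]

lemma exists_lt_of_lintegral_ne_top {H : ℝ → ℝ≥0∞} (hH : ∫⁻ x, H x ≠ ∞) (x₀ : ℝ) {η : ℝ≥0∞}
    (hη : η ≠ 0) : ∃ x < x₀, H x < η := by
  by_contra! h
  refine hH (eq_top_iff.2 ?_)
  calc ∞ = ∫⁻ _ in Iio x₀, η := by
        rw [setLIntegral_const, Real.volume_Iio, ENNReal.mul_top hη]
    _ ≤ ∫⁻ x in Iio x₀, H x := setLIntegral_mono' measurableSet_Iio h
    _ ≤ ∫⁻ x, H x := setLIntegral_le_lintegral _ _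

lemma sq_lintegral_le_measure_univ_mul_lintegral_sq {α : Type*} [MeasurableSpace α]
    {μ : Measure α} {f : α → ℝ≥0∞} (hf : AEMeasurable f μ) :
    (∫⁻ a, f a ∂μ) ^ 2 ≤ μ univ * ∫⁻ a, f a ^ 2 ∂μ := by
  have hsq : ∀ x : ℝ≥0∞, (x ^ (1 / 2 : ℝ)) ^ 2 = x := fun x => by
    rw [← ENNReal.rpow_mul_natCast]
    norm_num
  have hoelder := ENNReal.lintegral_mul_le_Lp_mul_Lq μ Real.HolderConjugate.two_two
    (f := 1) aemeasurable_const hf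
  simp only [one_mul, Pi.one_apply, ENNReal.rpow_two, one_pow, lintegral_one] at hoelder
  calc (∫⁻ a, f a ∂μ) ^ 2 ≤ (μ univ ^ (1 / 2 : ℝ) * (∫⁻ a, f a ^ 2 ∂μ) ^ (1 / 2 : ℝ)) ^ 2 := by
        gcongr
    _ = μ univ * ∫⁻ a, f a ^ 2 ∂μ := by rw [mul_pow, hsq, hsq]

lemma enorm_sub_sq_le_lintegral_enorm_deriv_sq {E : Type*} [NormedAddCommGroup E] [NormedSpace ℝ E]
    [CompleteSpace E] {γ γ' : ℝ → E} {a b : ℝ} (hab : a ≤ b)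
    (hγ : ∀ y ∈ Icc a b, HasDerivAt γ (γ' y) y) (hγ' : ContinuousOn γ' (Icc a b)) :
    ‖γ b - γ a‖ₑ ^ 2 ≤ ENNReal.ofReal (b - a) * ∫⁻ y in Icc a b, ‖γ' y‖ₑ ^ 2 := by
  have hftc : ∫ y in Icc a b, γ' y = γ b - γ a := by
    rw [integral_Icc_eq_integral_Ioc, ← intervalIntegral.integral_of_le hab]
    rw [← uIcc_of_le hab] at hγ hγ'
    exact intervalIntegral.integral_eq_sub_of_hasDerivAt hγ hγ'.intervalIntegrable
  calc ‖γ b - γ a‖ₑ ^ 2 ≤ (∫⁻ y in Icc a b, ‖γ' y‖ₑ) ^ 2 := by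
        rw [← hftc]
        gcongr
        exact enorm_integral_le_lintegral_enorm _
    _ ≤ volume.restrict (Icc a b) univ * ∫⁻ y in Icc a b, ‖γ' y‖ₑ ^ 2 :=
        sq_lintegral_le_measure_univ_mul_lintegral_sq
          (hγ'.enorm.aemeasurable measurableSet_Icc)
    _ = ENNReal.ofReal (b - a) * ∫⁻ y in Icc a b, ‖γ' y‖ₑ ^ 2 := by
        rw [Measure.restrict_apply_univ, Real.volume_Icc]

lemma enorm_sub_sq_le_of_vertical_segment {Ω : Set ℂ} (hΩ : IsOpen Ω) {g : ℂ → ℂ}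
    (hg : DifferentiableOn ℂ g Ω) {x a b : ℝ} (hab : a ≤ b)
    (hseg : ∀ y ∈ Icc a b, (x + y * I : ℂ) ∈ Ω) :
    ‖g (x + b * I) - g (x + a * I)‖ₑ ^ 2 ≤
      ENNReal.ofReal (b - a) * ∫⁻ y : ℝ, Ω.indicator (fun w => ‖deriv g w‖ₑ ^ 2) (x + y * I) := by
  have hline : ∀ y : ℝ, HasDerivAt (fun y : ℝ => (x + y * I : ℂ)) I y := fun y => by
    simpa using ((hasDerivAt_id y).ofReal_comp.mul_const I).const_add (x : ℂ)
  refine (enorm_sub_sq_le_lintegral_enorm_deriv_sq (γ := fun y : ℝ => g (x + y * I)) hab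
    (fun y hy => HasDerivAt.comp y
      (hg.differentiableAt (hΩ.mem_nhds (hseg y hy))).hasDerivAt (hline y))
    (((hg.deriv hΩ).continuousOn.comp (by fun_prop) hseg).mul continuousOn_const)).trans ?_
  refine mul_le_mul_right ?_ _
  rw [← lintegral_indicator measurableSet_Icc]
  refine lintegral_mono (indicator_le fun y hy => ?_)
  simp [indicator_of_mem (hseg y hy), ← ofReal_norm]

lemma exists_dist_le_of_re_eq {Ω : Set ℂ} (hΩ : IsOpen Ω) {L : ℝ} (hL : ∀ w ∈ Ω, |w.im| ≤ L)
    (hslice : ∀ x : ℝ, OrdConnected {y : ℝ | (x + y * I : ℂ) ∈ Ω}) {g : ℂ → ℂ}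
    (hg : DifferentiableOn ℂ g Ω) (hi : InjOn g Ω) (harea : volume (g '' Ω) ≠ ∞) (x₀ : ℝ) {ε : ℝ}
    (hε : 0 < ε) : ∃ x < x₀, ∀ w ∈ Ω, ∀ z ∈ Ω, w.re = x → z.re = x → dist (g w) (g z) ≤ ε := by
  have hmeas : Measurable (Ω.indicator fun w => ‖deriv g w‖ₑ ^ 2) :=
    ((measurable_deriv g).enorm.pow_const 2).indicator hΩ.measurableSet
  rw [← lintegral_enorm_deriv_sq_eq_volume_image hΩ hg hi, ← lintegral_indicator hΩ.measurableSet,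
    lintegral_complex_eq_lintegral_lintegral hmeas] at harea
  obtain ⟨x, hx, hlt⟩ := exists_lt_of_lintegral_ne_top harea x₀
    (η := ENNReal.ofReal ε ^ 2 / ENNReal.ofReal (2 * L))
    (ENNReal.div_ne_zero.2 ⟨by simpa using hε, ENNReal.ofReal_ne_top⟩)
  refine ⟨x, hx, ?_⟩
  have hmain : ∀ a b : ℝ, a ≤ b → (x + a * I : ℂ) ∈ Ω → (x + b * I : ℂ) ∈ Ω →
      dist (g (x + b * I)) (g (x + a * I)) ≤ ε := fun a b hab ha hb => by
    have hba : b - a ≤ 2 * L := by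
      have ha' : |a| ≤ L := by simpa using hL _ ha
      have hb' : |b| ≤ L := by simpa using hL _ hb
      linarith [neg_abs_le a, le_abs_self b]
    have hsq : ‖g (x + b * I) - g (x + a * I)‖ₑ ^ 2 ≤ ENNReal.ofReal ε ^ 2 :=
      (enorm_sub_sq_le_of_vertical_segment hΩ hg hab ((hslice x).out ha hb)).trans
        ((mul_le_mul' (ENNReal.ofReal_le_ofReal hba) hlt.le).trans ENNReal.mul_div_le)
    rw [dist_eq, ← ENNReal.ofReal_le_ofReal_iff hε.le, ofReal_norm]
    exact (ENNReal.pow_le_pow_left_iff two_ne_zero).1 hsq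
  intro w hw z hz hwx hzx
  rw [← re_add_im w, hwx] at hw ⊢
  rw [← re_add_im z, hzx] at hz ⊢
  obtain h | h := le_total w.im z.im
  · rw [dist_comm]; exact hmain _ _ h hw hz
  · exact hmain _ _ h hz hw

lemma norm_one_sub_exp_lt_one_iff (w : ℂ) :
    ‖1 - exp w‖ < 1 ↔ Real.exp w.re < 2 * Real.cos w.im := by
  have h : ‖1 - exp w‖ ^ 2 - 1 = Real.exp w.re * (Real.exp w.re - 2 * Real.cos w.im) := by
    rw [← normSq_eq_norm_sq, normSq_apply]
    simp only [sub_re, one_re, exp_re, sub_im, one_im, exp_im]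
    linear_combination Real.exp w.re ^ 2 * Real.sin_sq_add_cos_sq w.im
  rw [← sq_lt_one_iff₀ (norm_nonneg _), ← sub_neg, h]
  simp [mul_neg_iff, Real.exp_pos, (Real.exp_pos _).not_gt]

lemma ordConnected_setOf_norm_one_sub_exp_lt_one (x : ℝ) :
    OrdConnected {y : ℝ | |y| < Real.pi ∧ ‖1 - exp (x + y * I)‖ < 1} := by
  refine ⟨fun a ha b hb y hy => ?_⟩
  simp only [mem_ofPred_eq, norm_one_sub_exp_lt_one_iff, add_re, add_im, ofReal_re, ofReal_im,
    re_ofReal_mul, im_ofReal_mul, I_re, I_im, mul_zero, mul_one, add_zero, zero_add] at *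
  obtain ⟨c, hc, hcy⟩ : ∃ c ∈ ({a, b} : Set ℝ), |y| ≤ |c| := by
    obtain h | h := le_max_iff.1 (abs_le_max_abs_abs hy.1 hy.2)
    exacts [⟨a, by simp, h⟩, ⟨b, by simp, h⟩]
  have hc : |c| < Real.pi ∧ Real.exp x < 2 * Real.cos c := by
    rcases hc with rfl | rfl
    exacts [ha, hb]
  refine ⟨hcy.trans_lt hc.1, hc.2.trans_le ?_⟩
  rw [← Real.cos_abs c, ← Real.cos_abs y]
  gcongr
  exact Real.cos_le_cos_of_nonneg_of_le_pi (abs_nonneg _) hc.1.le hcy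

lemma mapsTo_mul_one_sub_exp {ζ : ℂ} (hζ : ‖ζ‖ = 1) :
    MapsTo (fun w => ζ * (1 - exp w)) {w | ‖1 - exp w‖ < 1} (ball 0 1) := fun w hw => by
  simpa [hζ] using hw

lemma injOn_mul_one_sub_exp {ζ : ℂ} (hζ : ζ ≠ 0) :
    InjOn (fun w => ζ * (1 - exp w)) {w | |w.im| < Real.pi} := by
  intro w hw z hz h
  rw [mem_ofPred_eq, abs_lt] at hw hz
  exact exp_inj_of_neg_pi_lt_of_le_pi hw.1 hw.2.le hz.1 hz.2.le
    (sub_right_injective (mul_left_cancel₀ hζ h))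

lemma exists_mul_one_sub_exp_eq {ζ s : ℂ} (hζ : ‖ζ‖ = 1) (hs : s ∈ ball (0 : ℂ) 1) :
    ∃ w : ℂ, |w.im| < Real.pi ∧ ζ * (1 - exp w) = s ∧ w.re = Real.log (dist s ζ) := by
  have hζ0 : ζ ≠ 0 := norm_ne_zero_iff.1 (hζ ▸ one_ne_zero)
  have hslit : 1 - s / ζ ∈ slitPlane := by
    rw [sub_eq_add_neg]
    exact mem_slitPlane_of_norm_lt_one (by simpa [hζ] using hs)
  have hdist : ‖1 - s / ζ‖ = dist s ζ := by
    rw [one_sub_div hζ0, norm_div, hζ, div_one, dist_comm, dist_eq]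
  refine ⟨log (1 - s / ζ), ?_, ?_, by rw [log_re, hdist]⟩
  · rw [log_im]
    exact abs_lt.2 ⟨neg_pi_lt_arg _, (arg_le_pi _).lt_of_ne (mem_slitPlane_iff_arg.1 hslit).1⟩
  · rw [exp_log (slitPlane_ne_zero hslit), sub_sub_cancel, mul_div_cancel₀ _ hζ0]

-- Wolff's lemma: in the logarithmic coordinate `w = log (1 - s / ζ)` the circular crosscuts at `ζ`
-- become vertical segments, and by Fubini some arbitrarily far to the left have short images.
lemma exists_radius_crosscut_dist_le {f : ℂ → ℂ} (hf : DifferentiableOn ℂ f (ball 0 1))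
    (hi : InjOn f (ball 0 1)) (harea : volume (f '' ball 0 1) ≠ ∞) {ζ : ℂ} (hζ : ‖ζ‖ = 1)
    {ε δ : ℝ} (hε : 0 < ε) (hδ : 0 < δ) : ∃ r ∈ Ioo 0 δ, ∀ s ∈ ball (0 : ℂ) 1,
      ∀ t ∈ ball (0 : ℂ) 1, dist s ζ = r → dist t ζ = r → dist (f s) (f t) ≤ ε := by
  have hζ0 : ζ ≠ 0 := norm_ne_zero_iff.1 (hζ ▸ one_ne_zero)
  set u : ℂ → ℂ := fun w => ζ * (1 - exp w)
  set Ω : Set ℂ := {w | |w.im| < Real.pi ∧ ‖1 - exp w‖ < 1}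
  have hΩ : IsOpen Ω :=
    (isOpen_lt (f := fun w : ℂ => |w.im|) (by fun_prop) continuous_const).inter
      (isOpen_lt (f := fun w => ‖1 - exp w‖) (by fun_prop) continuous_const)
  have hu : MapsTo u Ω (ball 0 1) := (mapsTo_mul_one_sub_exp hζ).mono_left fun w hw => hw.2
  have hfu : (f ∘ u) '' Ω ⊆ f '' ball 0 1 := image_comp f u Ω ▸ image_mono hu.image_subset
  obtain ⟨x, hx, hdist⟩ := exists_dist_le_of_re_eq hΩ (fun w hw => hw.1.le)
    (fun x => by simpa [Ω] using ordConnected_setOf_norm_one_sub_exp_lt_one x)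
    (hf.comp (by fun_prop) hu)
    (hi.comp ((injOn_mul_one_sub_exp hζ0).mono fun w hw => hw.1) hu)
    (ne_top_of_le_ne_top harea (measure_mono hfu)) (Real.log δ) hε
  refine ⟨Real.exp x, ⟨Real.exp_pos x, (Real.lt_log_iff_exp_lt hδ).1 hx⟩, ?_⟩
  have hlift : ∀ s ∈ ball (0 : ℂ) 1, dist s ζ = Real.exp x → ∃ w ∈ Ω, w.re = x ∧ u w = s := by
    intro s hs hsx
    obtain ⟨w, hw, rfl, hwx⟩ := exists_mul_one_sub_exp_eq hζ hs
    exact ⟨w, ⟨hw, by simpa [hζ] using hs⟩, by rw [hwx, hsx, Real.log_exp], rfl⟩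
  intro s hs t ht hsx htx
  obtain ⟨w, hw, hwx, rfl⟩ := hlift s hs hsx
  obtain ⟨z, hz, hzx, rfl⟩ := hlift t ht htx
  exact hdist w hw z hz hwx hzx

/-! ### Boundary limits -/

lemma mem_closedBall_of_levelSet {X : Type*} [TopologicalSpace X]
    (e : OpenPartialHomeomorph X ℂ) {A C : Set ℂ} {z₀ : ℂ}
    (he : e.target = connectedComponentIn Cᶜ z₀) (hA : IsCompact A) (hC : IsCompact C)
    (hAC : IsPreconnected (A ∩ C)) {h : X → ℝ} (hh : ContinuousOn h e.source) {c : ℝ}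
    (hlevel : ∀ s ∈ e.source, h s = c → e s ∈ A) {p : ℂ} {R : ℝ} (hAR : A ⊆ closedBall p R)
    {s t : X} (hs : s ∈ e.source) (ht : t ∈ e.source) (hsc : h s ≤ c) (hct : c ≤ h t)
    (htR : e t ∉ closedBall p R) : e s ∈ closedBall p R := by
  by_contra hsR
  exact notMem_connectedComponentIn_of_levelSet e he hA hC hAC hh hlevel hs ht hsc hct
    ((isPreconnected_compl_closedBall (by simp [rank_real_complex]) p R).subset_connectedComponentIn
      hsR (compl_subset_compl.2 hAR) htR)

lemma exists_isCompact_superset_closedBall_isPreconnected_inter {X : Type*} [PseudoMetricSpace X]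
    [ProperSpace X] {C : Set X} (hC : IsCompact C) [LocallyConnectedSpace C] {ε : ℝ} (hε : 0 < ε) :
    ∃ δ > 0, ∀ p : X, ∃ A, IsCompact A ∧ IsPreconnected (A ∩ C) ∧ closedBall p δ ⊆ A ∧
      A ⊆ closedBall p ε := by
  obtain ⟨η, hη, hT⟩ := exists_isPreconnected_inter_ball_subset hC (half_pos hε)
  obtain ⟨δ, hδ, hδη, hδε⟩ : ∃ δ > 0, 2 * δ < η ∧ δ ≤ ε / 2 :=
    ⟨min (η / 3) (ε / 2), by positivity, by linarith [min_le_left (η / 3) (ε / 2)],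
      min_le_right _ _⟩
  refine ⟨δ, hδ, fun p => ?_⟩
  obtain ⟨T, hTC, hTc, hTp, hsub, hTε⟩ : ∃ T ⊆ C, IsCompact T ∧ IsPreconnected T ∧
      closedBall p δ ∩ C ⊆ T ∧ T ⊆ closedBall p ε := by
    obtain h | ⟨x, hxp, hxC⟩ := (closedBall p δ ∩ C).eq_empty_or_nonempty
    · exact ⟨∅, empty_subset _, isCompact_empty, isPreconnected_empty, h.subset, empty_subset _⟩
    obtain ⟨T, hTC, hTc, hTp, hball, hTε⟩ := hT x hxC
    rw [mem_closedBall] at hxp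
    refine ⟨T, hTC, hTc, hTp, fun y hy => hball ⟨hy.2, ?_⟩,
      hTε.trans (closedBall_subset_closedBall' (by linarith))⟩
    have hyp : dist y p ≤ δ := hy.1
    exact (dist_triangle_right y x p).trans_lt (by linarith)
  refine ⟨closedBall p δ ∪ T, (isCompact_closedBall p δ).union hTc, ?_, subset_union_left,
    union_subset (closedBall_subset_closedBall (by linarith)) hTε⟩
  rwa [union_inter_distrib_right, inter_eq_left.2 hTC, union_eq_right.2 hsub]

lemma eventually_notMem_of_isCompact {X Y : Type*} [TopologicalSpace X] [T2Space X]
    [TopologicalSpace Y] (e : OpenPartialHomeomorph X Y) {K : Set Y} (hK : IsCompact K)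
    (hKe : K ⊆ e.target) {x : X} (hx : x ∉ e.source) : ∀ᶠ s in 𝓝[e.source] x, e s ∉ K := by
  have hclosed : IsClosed (e.symm '' K) :=
    (hK.image_of_continuousOn (e.continuousOn_symm.mono hKe)).isClosed
  have hxK : x ∉ e.symm '' K := fun ⟨y, hy, hyx⟩ => hx (hyx ▸ e.map_target (hKe hy))
  filter_upwards [nhdsWithin_le_nhds (hclosed.isOpen_compl.mem_nhds hxK), self_mem_nhdsWithin]
    with s hs hse hsK
  exact hs ⟨e s, hsK, e.left_inv hse⟩

lemma notMem_target_of_tendsto {X Y : Type*} [TopologicalSpace X] [T2Space X] [TopologicalSpace Y]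
    [LocallyCompactSpace Y] (e : OpenPartialHomeomorph X Y) {x : X} {y : Y}
    (hx : x ∈ closure e.source \ e.source) (hy : Tendsto e (𝓝[e.source] x) (𝓝 y)) :
    y ∉ e.target := fun hye => by
  obtain ⟨K, hK, hKe, hKc⟩ := local_compact_nhds (e.open_target.mem_nhds hye)
  have := mem_closure_iff_nhdsWithin_neBot.1 hx.1
  obtain ⟨s, hs, hs'⟩ :=
    ((eventually_notMem_of_isCompact e hKc hKe hx.2).and (hy.eventually_mem hK)).exists
  exact hs hs'

section RiemannMap

variable {e : OpenPartialHomeomorph ℂ ℂ} {C : Set ℂ} {z₀ : ℂ}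

lemma exists_image_inter_ball_subset_closedBall (hsource : e.source = ball 0 1)
    (htarget : e.target = connectedComponentIn Cᶜ z₀) (hd : DifferentiableOn ℂ e (ball 0 1))
    (hb : Bornology.IsBounded e.target) (hC : IsCompact C) [LocallyConnectedSpace C] {ζ : ℂ}
    (hζ : ‖ζ‖ = 1) {ε : ℝ} (hε : 0 < ε) :
    ∃ r > 0, ∃ p, ∀ s ∈ ball (0 : ℂ) 1, dist s ζ ≤ r → e s ∈ closedBall p ε := by
  have hball : ∀ {s : ℂ}, s ∈ e.source ↔ s ∈ ball (0 : ℂ) 1 := by simp [hsource]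
  have h0 : (0 : ℂ) ∈ e.source := hball.2 (mem_ball_self one_pos)
  obtain ⟨ε', hε', hε'K⟩ := Metric.nhds_basis_closedBall.mem_iff.1
    (e.open_target.mem_nhds (e.map_source h0))
  wlog hle : ε ≤ ε' generalizing ε
  · obtain ⟨r, hr, p, h⟩ := this hε' le_rfl
    exact ⟨r, hr, p, fun s hs hsr => closedBall_subset_closedBall (le_of_not_ge hle) (h s hs hsr)⟩
  have hζe : ζ ∉ e.source := by simp [hsource, hζ]
  obtain ⟨δ, hδ, hfar⟩ : ∃ δ > 0, ∀ s ∈ e.source, dist s ζ < δ → e s ∉ closedBall (e 0) ε' := by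
    obtain ⟨δ, hδ, h⟩ := Metric.eventually_nhds_iff.1 (eventually_nhdsWithin_iff.1
      (eventually_notMem_of_isCompact e (isCompact_closedBall _ _) hε'K hζe))
    exact ⟨δ, hδ, fun s hs hsδ => h hsδ hs⟩
  obtain ⟨η, hη, hA⟩ := exists_isCompact_superset_closedBall_isPreconnected_inter hC hε
  have harea : volume (e '' ball 0 1) ≠ ∞ := by
    rw [← hsource, e.image_source_eq_target]
    exact hb.measure_lt_top.ne
  obtain ⟨r, ⟨hr0, hr⟩, hlen⟩ := exists_radius_crosscut_dist_le hd (hsource ▸ e.injOn) harea hζ hη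
    (lt_min hδ one_pos)
  obtain ⟨hrδ, hr1⟩ := lt_min_iff.1 hr
  obtain ⟨s₀, hs₀, hs₀ζ⟩ : ∃ s₀ ∈ ball (0 : ℂ) 1, dist s₀ ζ = r := by
    refine ⟨(1 - r : ℝ) * ζ, ?_, ?_⟩
    · rw [mem_ball_zero_iff, norm_mul, hζ, mul_one, norm_real,
        Real.norm_of_nonneg (sub_nonneg.2 hr1.le)]
      linarith
    · rw [dist_eq, ofReal_sub, ofReal_one, sub_mul, one_mul, sub_sub_cancel_left, norm_neg,
        norm_mul, hζ, mul_one, norm_real, Real.norm_of_nonneg hr0.le]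
  obtain ⟨A, hAc, hAC, hsub, hAε⟩ := hA (e s₀)
  refine ⟨r, hr0, e s₀, fun s hs hsr => mem_closedBall_of_levelSet e htarget hAc hC hAC
    (h := fun s => dist s ζ) (by fun_prop)
    (fun t ht htr => hsub (hlen t (hball.1 ht) s₀ hs₀ htr hs₀ζ)) hAε (hball.2 hs) h0 hsr
    (by simpa [hζ] using hr1.le) fun h => ?_⟩
  exact hfar s₀ (hball.2 hs₀) (hs₀ζ.trans_lt hrδ)
    (closedBall_subset_closedBall hle (mem_closedBall_comm.1 h))

lemma exists_tendsto_nhdsWithin_ball (hsource : e.source = ball 0 1)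
    (htarget : e.target = connectedComponentIn Cᶜ z₀) (hd : DifferentiableOn ℂ e (ball 0 1))
    (hb : Bornology.IsBounded e.target) (hC : IsCompact C) [LocallyConnectedSpace C] {ζ : ℂ}
    (hζ : ζ ∈ closedBall 0 1) : ∃ w, Tendsto e (𝓝[ball 0 1] ζ) (𝓝 w) := by
  rw [← ball_union_sphere] at hζ
  obtain hζ | hζ := hζ
  · exact ⟨e ζ, hd.continuousOn ζ hζ⟩
  have hcl : ζ ∈ closure (ball (0 : ℂ) 1) := by
    rw [closure_ball _ one_ne_zero]
    exact sphere_subset_closedBall hζ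
  have := mem_closure_iff_nhdsWithin_neBot.1 hcl
  refine cauchy_map_iff_exists_tendsto.1 (Metric.cauchy_iff.2 ⟨inferInstance, fun ε hε => ?_⟩)
  obtain ⟨r, hr, p, h⟩ := exists_image_inter_ball_subset_closedBall hsource htarget hd hb hC
    (mem_sphere_zero_iff_norm.1 hζ) (show 0 < ε / 3 by positivity)
  refine ⟨closedBall p (ε / 3), ?_, fun x hx y hy => ?_⟩
  · refine mem_map.2 ?_
    filter_upwards [self_mem_nhdsWithin, mem_nhdsWithin_of_mem_nhds (closedBall_mem_nhds ζ hr)]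
      with s hs hsr
    exact h s hs hsr
  · rw [mem_closedBall] at hx hy
    exact (dist_triangle_right x y p).trans_lt (by linarith)

end RiemannMap

/-! ### Inverses of injective holomorphic functions -/

lemma not_eventually_eq_of_injOn {U : Set ℂ} {φ : ℂ → ℂ} (hi : InjOn φ U) {w : ℂ} (hw : U ∈ 𝓝 w) :
    ¬ ∀ᶠ z in 𝓝 w, φ z = φ w := fun h => by
  obtain ⟨z, ⟨hz, hzU⟩, hzw⟩ := ((eventually_nhdsWithin_of_eventually_nhds (h.and hw)).and
    (self_mem_nhdsWithin : {w}ᶜ ∈ 𝓝[≠] w)).exists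
  exact hzw (hi hzU (mem_of_mem_nhds hw) hz)

lemma isOpenMap_domRestrict_of_injOn {U : Set ℂ} (hU : IsOpen U) {φ : ℂ → ℂ}
    (hd : DifferentiableOn ℂ φ U) (hi : InjOn φ U) : IsOpenMap (U.domRestrict φ) := by
  refine IsOpenMap.of_nhds_le fun w => ?_
  have hw := hU.mem_nhds w.2
  rw [domRestrict_eq, ← map_map, map_nhds_subtype_coe_eq_nhds w.2 hw]
  exact (hd.analyticAt hw).eventually_constant_or_nhds_le_map_nhds.resolve_left
    (not_eventually_eq_of_injOn hi hw)

lemma exists_openPartialHomeomorph_of_bijOn {U V : Set ℂ} (hU : IsOpen U) {φ : ℂ → ℂ}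
    (hd : DifferentiableOn ℂ φ U) (hb : BijOn φ U V) :
    ∃ e : OpenPartialHomeomorph ℂ ℂ, ⇑e = φ ∧ e.source = U ∧ e.target = V :=
  ⟨.ofContinuousOpenRestrict (hb.toPartialEquiv φ U V) hd.continuousOn
    (isOpenMap_domRestrict_of_injOn hU hd hb.injOn) hU, rfl, rfl, rfl⟩

lemma differentiableOn_openPartialHomeomorph_symm (e : OpenPartialHomeomorph ℂ ℂ)
    (hd : DifferentiableOn ℂ e e.source) : DifferentiableOn ℂ e.symm e.target := by
  intro s hs
  have hw := e.map_target hs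
  have hderiv : ∀ᶠ z in 𝓝[≠] e.symm s, deriv e z ≠ 0 := by
    have han := hd.analyticAt (e.open_source.mem_nhds hw)
    refine han.deriv.eventually_eq_zero_or_eventually_ne_zero.resolve_left fun h => ?_
    obtain ⟨r, hr, hball⟩ := Metric.eventually_nhds_iff_ball.1
      (h.and (e.open_source.mem_nhds hw))
    refine not_eventually_eq_of_injOn e.injOn (e.open_source.mem_nhds hw) ?_
    filter_upwards [ball_mem_nhds _ hr] with z hz
    exact isOpen_ball.is_const_of_deriv_eq_zero (convex_ball _ r).isPreconnected
      (hd.mono fun y hy => (hball y hy).2) (fun y hy => (hball y hy).1) hz (mem_ball_self hr)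
  refine (analyticAt_of_differentiable_on_punctured_nhds_of_continuousAt ?_
    (e.continuousAt_symm hs)).differentiableAt.differentiableWithinAt
  have htendsto : Tendsto e.symm (𝓝[≠] s) (𝓝[≠] e.symm s) := by
    refine tendsto_nhdsWithin_iff.2 ⟨(e.continuousAt_symm hs).mono_left nhdsWithin_le_nhds, ?_⟩
    filter_upwards [self_mem_nhdsWithin, mem_nhdsWithin_of_mem_nhds (e.open_target.mem_nhds hs)]
      with t hts ht using e.symm.injOn.ne ht hs hts
  filter_upwards [htendsto.eventually hderiv,
    mem_nhdsWithin_of_mem_nhds (e.open_target.mem_nhds hs)] with t hne ht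
  exact (e.hasDerivAt_symm ht hne (hd.differentiableAt
    (e.open_source.mem_nhds (e.map_target ht))).hasDerivAt).differentiableAt

/-! ### Injectivity on the boundary -/

-- Finitely many rotations of the arc cover the circle, so the product over these rotations of
-- `F - a` vanishes on the circle and hence, by the maximum principle, at the center.
lemma eq_at_center_of_eqOn_arc {F : ℂ → ℂ} (hF : DiffContOnCl ℂ F (ball 0 1)) {a : ℂ} {U : Set ℂ}
    (hU : IsOpen U) (hne : (sphere 0 1 ∩ U).Nonempty) (h : ∀ z ∈ sphere 0 1 ∩ U, F z = a) :
    F 0 = a := by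
  obtain ⟨ζ, hζ, hζU⟩ := hne
  obtain ⟨T, hT⟩ : ∃ T : Finset (sphere (0 : ℂ) 1),
      sphere (0 : ℂ) 1 ⊆ ⋃ c ∈ T, (fun z => (c : ℂ) * z) ⁻¹' U := by
    refine (isCompact_sphere 0 1).elim_finite_subcover _
      (fun c => hU.preimage (continuous_const_mul (c : ℂ))) fun z hz => mem_iUnion.2 ?_
    have hz0 : z ≠ 0 := ne_zero_of_mem_unit_sphere ⟨z, hz⟩
    refine ⟨⟨ζ / z, ?_⟩, ?_⟩
    · rw [mem_sphere_zero_iff_norm] at *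
      rw [norm_div, hζ, hz, div_one]
    · rwa [mem_preimage, div_mul_cancel₀ _ hz0]
  have hdiff (c : sphere (0 : ℂ) 1) : DiffContOnCl ℂ (fun z => F (c * z) - a) (ball 0 1) := by
    have hrot : MapsTo (fun z => (c : ℂ) * z) (ball 0 1) (ball 0 1) := fun z hz => by
      rwa [mem_ball_zero_iff, norm_mul, norm_eq_of_mem_sphere c, one_mul, ← mem_ball_zero_iff]
    exact (hF.comp (differentiable_id.const_mul (c : ℂ)).diffContOnCl hrot).sub_const a
  have hP : DiffContOnCl ℂ (fun z => ∏ c ∈ T, (F (c * z) - a)) (ball 0 1) :=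
    ⟨.fun_finsetProd fun c _ => (hdiff c).differentiableOn,
      continuousOn_finsetProd _ fun c _ => (hdiff c).continuousOn⟩
  have hP0 : ∏ c ∈ T, (F (c * 0) - a) = 0 := by
    refine norm_le_zero_iff.1 (norm_le_of_forall_mem_frontier_norm_le isBounded_ball hP
      (fun z hz => ?_) (subset_closure (mem_ball_self one_pos)))
    rw [frontier_ball _ one_ne_zero] at hz
    obtain ⟨c, hc, hcz⟩ := mem_iUnion₂.1 (hT hz)
    refine (norm_eq_zero.2 (Finset.prod_eq_zero hc (sub_eq_zero.2 (h _ ⟨?_, hcz⟩)))).le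
    rwa [mem_sphere_zero_iff_norm, norm_mul, norm_eq_of_mem_sphere c, one_mul,
      ← mem_sphere_zero_iff_norm]
  obtain ⟨c, -, hc⟩ := Finset.prod_eq_zero_iff.1 hP0
  simpa [sub_eq_zero] using hc

lemma mem_segment_of_im_div_eq_zero {ζ₁ ζ₂ s : ℂ} (h₁ : ζ₁ ∈ sphere 0 1) (h₂ : ζ₂ ∈ sphere 0 1)
    (hne : ζ₁ ≠ ζ₂) (hs : s ∈ closedBall 0 1) (him : ((s - ζ₁) / (ζ₂ - ζ₁)).im = 0) :
    s ∈ segment ℝ ζ₁ ζ₂ := by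
  obtain ⟨τ, hτ⟩ : ∃ τ : ℝ, (τ : ℂ) = (s - ζ₁) / (ζ₂ - ζ₁) := CanLift.prf _ him
  have hsτ : s = τ • (ζ₂ - ζ₁) + ζ₁ := by
    rw [real_smul, hτ, div_mul_cancel₀ _ (sub_ne_zero.2 hne.symm), sub_add_cancel]
  have hcol : Collinear ℝ {ζ₁, s, ζ₂} := by
    refine (collinear_iff_of_mem (mem_insert _ _)).2 ⟨ζ₂ - ζ₁, ?_⟩
    rintro p (rfl | rfl | rfl)
    exacts [⟨0, by simp⟩, ⟨τ, hsτ⟩, ⟨1, by simp⟩]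
  exact mem_segment_iff_wbtw.2 (hcol.wbtw_of_dist_eq_of_dist_le h₁ hs h₂ hne)

lemma exists_mem_sphere_im_div_pos {ζ₁ ζ₂ : ℂ} (h₁ : ζ₁ ∈ sphere 0 1) (h₂ : ζ₂ ∈ sphere 0 1)
    (hne : ζ₁ ≠ ζ₂) : ∃ ξ ∈ sphere (0 : ℂ) 1, 0 < ((ξ - ζ₁) / (ζ₂ - ζ₁)).im := by
  rw [mem_sphere_zero_iff_norm] at h₁ h₂
  have hd : ζ₂ - ζ₁ ≠ 0 := sub_ne_zero.2 hne.symm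
  have hd' : (‖ζ₂ - ζ₁‖ : ℂ) ≠ 0 := by simpa using hd
  set m := ζ₁ / (ζ₂ - ζ₁) with hm
  have hmn : ‖m‖ = ‖ζ₂ - ζ₁‖⁻¹ := by rw [hm, norm_div, h₁, one_div]
  have hm1 : ‖m + 1‖ = ‖m‖ := by
    rw [hm, div_add_one hd, add_sub_cancel, norm_div, norm_div, h₁, h₂]
  have hre : m.re ≠ 0 := by
    have := congrArg (· ^ 2) hm1
    simp only [← normSq_eq_norm_sq, normSq_apply, add_re, add_im, one_re, one_im] at this
    intro h
    simp only [h] at this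
    linarith
  refine ⟨I * (ζ₂ - ζ₁) / ‖ζ₂ - ζ₁‖, ?_, ?_⟩
  · rw [mem_sphere_zero_iff_norm, norm_div, norm_mul, norm_I, one_mul, norm_real, norm_norm,
      div_self (norm_ne_zero_iff.2 hd)]
  · have hquot : I * (ζ₂ - ζ₁) / ‖ζ₂ - ζ₁‖ / (ζ₂ - ζ₁) = (‖ζ₂ - ζ₁‖⁻¹ : ℝ) * I := by
      push_cast
      field_simp
    rw [sub_div, hquot, ← hm, sub_im, im_ofReal_mul, I_im, mul_one, ← hmn]
    exact sub_pos.2 ((le_abs_self _).trans_lt (abs_im_lt_norm.2 hre))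

lemma exists_mem_sphere_im_div_neg {ζ₁ ζ₂ : ℂ} (h₁ : ζ₁ ∈ sphere 0 1) (h₂ : ζ₂ ∈ sphere 0 1)
    (hne : ζ₁ ≠ ζ₂) : ∃ ξ ∈ sphere (0 : ℂ) 1, ((ξ - ζ₁) / (ζ₂ - ζ₁)).im < 0 := by
  obtain ⟨ξ, hξ, hpos⟩ := exists_mem_sphere_im_div_pos h₂ h₁ hne.symm
  have hswap : (ξ - ζ₂) / (ζ₁ - ζ₂) = 1 - (ξ - ζ₁) / (ζ₂ - ζ₁) := by
    rw [one_sub_div (sub_ne_zero.2 hne.symm), sub_sub_sub_cancel_right, ← neg_sub ζ₂ ξ,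
      ← neg_sub ζ₂ ζ₁, neg_div_neg_eq]
  rw [hswap, sub_im, one_im, zero_sub, neg_pos] at hpos
  exact ⟨ξ, hξ, hpos⟩

section BoundaryInjectivity

variable {e : OpenPartialHomeomorph ℂ ℂ} {C : Set ℂ} {z₀ : ℂ} {F : ℂ → ℂ}

lemma exists_mem_ball_of_isOpen (hF : ContinuousOn F (closedBall 0 1)) {V U : Set ℂ}
    (hV : IsOpen V) (hU : IsOpen U) {ξ : ℂ} (hξ : ξ ∈ closedBall (0 : ℂ) 1) (hξV : F ξ ∈ V)
    (hξU : ξ ∈ U) : ∃ s ∈ ball (0 : ℂ) 1, s ∈ U ∧ F s ∈ V := by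
  have := mem_closure_iff_nhdsWithin_neBot.1 (closure_ball (0 : ℂ) one_ne_zero ▸ hξ)
  have hFV := ((hF ξ hξ).mono ball_subset_closedBall).eventually_mem (hV.mem_nhds hξV)
  obtain ⟨s, hs, hsU, hsV⟩ := (eventually_mem_nhdsWithin.and
    ((eventually_nhdsWithin_of_eventually_nhds (hU.eventually_mem hξU)).and hFV)).exists
  exact ⟨s, hs, hsU, hsV⟩

lemma eq_or_eq_of_levelSet (hsource : e.source = ball 0 1)
    (htarget : e.target = connectedComponentIn Cᶜ z₀) (hC : IsCompact C)
    (hF : ContinuousOn F (closedBall 0 1)) (hFe : EqOn F e (ball 0 1))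
    (hFC : MapsTo F (sphere 0 1) C) {a : ℂ} (hCa : IsPreconnected (C \ {a})) {A : Set ℂ}
    (hA : IsCompact A) (hAC : A ∩ C = {a}) {h : ℂ → ℝ} (hh : Continuous h) {c : ℝ}
    (hlevel : ∀ s ∈ ball (0 : ℂ) 1, h s = c → F s ∈ A) {ξ₁ ξ₂ : ℂ} (h₁ : ξ₁ ∈ sphere 0 1)
    (h₂ : ξ₂ ∈ sphere 0 1) (hlt : h ξ₁ < c) (hgt : c < h ξ₂) : F ξ₁ = a ∨ F ξ₂ = a := by
  by_contra! ⟨hξ₁, hξ₂⟩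
  have hsub : C \ {a} ⊆ Aᶜ := fun x hx hxA => hx.2 (hAC.subset ⟨hxA, hx.1⟩)
  set V := connectedComponentIn Aᶜ (F ξ₁)
  have hVo : IsOpen V := hA.isClosed.isOpen_compl.connectedComponentIn
  have hCV : C \ {a} ⊆ V := hCa.subset_connectedComponentIn ⟨hFC h₁, hξ₁⟩ hsub
  obtain ⟨s₁, hs₁, hlt₁, hsV₁⟩ := exists_mem_ball_of_isOpen hF hVo
    (isOpen_lt hh continuous_const) (sphere_subset_closedBall h₁) (hCV ⟨hFC h₁, hξ₁⟩) hlt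
  obtain ⟨s₂, hs₂, hgt₂, hsV₂⟩ := exists_mem_ball_of_isOpen hF hVo
    (isOpen_lt continuous_const hh) (sphere_subset_closedBall h₂) (hCV ⟨hFC h₂, hξ₂⟩) hgt
  rw [hFe hs₁] at hsV₁
  rw [hFe hs₂] at hsV₂
  refine notMem_connectedComponentIn_of_levelSet e htarget hA hC (hAC ▸ isPreconnected_singleton)
    hh.continuousOn (c := c) (fun s hs hsc => ?_) (hsource ▸ hs₁) (hsource ▸ hs₂) hlt₁.le hgt₂.le
    (connectedComponentIn_eq hsV₁ ▸ hsV₂)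
  rw [hsource] at hs
  exact hFe hs ▸ hlevel s hs hsc

lemma image_segment_inter_eq_singleton (htarget : e.target ⊆ Cᶜ) (hsource : e.source = ball 0 1)
    (hFe : EqOn F e (ball 0 1)) (hFC : MapsTo F (sphere 0 1) C) {ζ₁ ζ₂ : ℂ}
    (h₁ : ζ₁ ∈ sphere 0 1) (h₂ : ζ₂ ∈ sphere 0 1) (heq : F ζ₁ = F ζ₂) :
    F '' segment ℝ ζ₁ ζ₂ ∩ C = {F ζ₁} := by
  refine Subset.antisymm ?_ (singleton_subset_iff.2
    ⟨mem_image_of_mem F (left_mem_segment _ _ _), hFC h₁⟩)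
  rintro _ ⟨⟨s, hs, rfl⟩, hsC⟩
  obtain rfl | rfl | hs' : s = ζ₁ ∨ s = ζ₂ ∨ s ∈ openSegment ℝ ζ₁ ζ₂ := by
    rwa [← insert_endpoints_openSegment] at hs
  · rfl
  · exact heq.symm
  obtain rfl | hne := eq_or_ne ζ₁ ζ₂
  · rw [openSegment_same] at hs'
    exact congrArg F hs'
  have hball : s ∈ ball (0 : ℂ) 1 := by
    rw [← interior_closedBall _ one_ne_zero]
    exact (strictConvex_closedBall ℝ (0 : ℂ) 1).openSegment_subset (sphere_subset_closedBall h₁)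
      (sphere_subset_closedBall h₂) hne hs'
  rw [hFe hball] at hsC
  exact absurd hsC (htarget (e.map_source (hsource ▸ hball)))

lemma injOn_sphere_of_eqOn_ball (hsource : e.source = ball 0 1)
    (htarget : e.target = connectedComponentIn Cᶜ z₀) (hC : IsCompact C)
    (hcut : ∀ a ∈ C, IsPreconnected (C \ {a})) (hF : DiffContOnCl ℂ F (ball 0 1))
    (hFe : EqOn F e (ball 0 1)) (hFC : MapsTo F (sphere 0 1) C) : InjOn F (sphere 0 1) := by
  intro ζ₁ h₁ ζ₂ h₂ heq
  by_contra hne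
  have hFc : ContinuousOn F (closedBall 0 1) := hF.continuousOn_ball
  have hsub : e.target ⊆ Cᶜ := htarget ▸ connectedComponentIn_subset _ _
  have h0 : F 0 ≠ F ζ₁ := by
    have h0 := mem_ball_self (x := (0 : ℂ)) one_pos
    rw [hFe h0]
    exact fun h => hsub (e.map_source (hsource ▸ h0)) (h ▸ hFC h₁)
  have hchord : IsCompact (F '' segment ℝ ζ₁ ζ₂) := by
    have hseg := (convex_closedBall (0 : ℂ) 1).segment_subset (sphere_subset_closedBall h₁)
      (sphere_subset_closedBall h₂)
    rw [segment_eq_image_lineMap] at hseg ⊢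
    exact (isCompact_Icc.image AffineMap.lineMap_continuous).image_of_continuousOn (hFc.mono hseg)
  have hℓ : Continuous fun s => ((s - ζ₁) / (ζ₂ - ζ₁)).im := by fun_prop
  have hside := fun {ξ₁ ξ₂} => eq_or_eq_of_levelSet (ξ₁ := ξ₁) (ξ₂ := ξ₂) hsource htarget hC hFc hFe
    hFC (hcut _ (hFC h₁)) hchord (image_segment_inter_eq_singleton hsub hsource hFe hFC h₁ h₂ heq)
    hℓ (c := 0) fun s hs him => mem_image_of_mem F
      (mem_segment_of_im_div_eq_zero h₁ h₂ hne (ball_subset_closedBall hs) him)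
  obtain ⟨ξ₁, hξ₁, hneg⟩ := exists_mem_sphere_im_div_neg h₁ h₂ hne
  obtain ⟨ξ₂, hξ₂, hpos⟩ := exists_mem_sphere_im_div_pos h₁ h₂ hne
  by_cases hconst : ∀ ξ ∈ sphere (0 : ℂ) 1 ∩ {s | ((s - ζ₁) / (ζ₂ - ζ₁)).im < 0}, F ξ = F ζ₁
  · exact h0 (eq_at_center_of_eqOn_arc hF (isOpen_lt hℓ continuous_const) ⟨ξ₁, hξ₁, hneg⟩ hconst)
  · push Not at hconst
    obtain ⟨ξ, ⟨hξ, hlt⟩, hξa⟩ := hconst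
    exact h0 (eq_at_center_of_eqOn_arc hF (isOpen_lt continuous_const hℓ) ⟨ξ₂, hξ₂, hpos⟩
      fun ξ' hξ' => (hside hξ hξ'.1 hlt hξ'.2).resolve_left hξa)

end BoundaryInjectivity

/-! ### The extension theorem -/

lemma exists_homeomorph_of_bijOn {X Y : Type*} [TopologicalSpace X] [TopologicalSpace Y] [T2Space Y]
    {K : Set X} {L : Set Y} {F : X → Y} (hK : IsCompact K) (hF : ContinuousOn F K)
    (hb : BijOn F K L) : ∃ h : K ≃ₜ L, ∀ x, (h x : Y) = F x := by
  have := isCompact_iff_compactSpace.1 hK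
  exact ⟨Continuous.homeoOfEquivCompactToT2 (f := hb.equiv F)
    (hF.domRestrict.subtype_mk fun x => hb.mapsTo x.2), fun _ => rfl⟩

section Extension

variable {e : OpenPartialHomeomorph ℂ ℂ} {C : Set ℂ} {z₀ : ℂ} {F : ℂ → ℂ}

lemma exists_diffContOnCl_extension (hsource : e.source = ball 0 1)
    (htarget : e.target = connectedComponentIn Cᶜ z₀) (hd : DifferentiableOn ℂ e (ball 0 1))
    (hb : Bornology.IsBounded e.target) (hC : IsCompact C) [LocallyConnectedSpace C] :
    ∃ F, DiffContOnCl ℂ F (ball 0 1) ∧ EqOn F e (ball 0 1) := by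
  have heq : EqOn (extendFrom (ball 0 1) e) e (ball 0 1) := extendFrom_extends hd.continuousOn
  refine ⟨extendFrom (ball 0 1) e,
    ⟨hd.congr heq, continuousOn_extendFrom subset_rfl fun ζ hζ => ?_⟩, heq⟩
  rw [closure_ball _ one_ne_zero] at hζ
  exact exists_tendsto_nhdsWithin_ball hsource htarget hd hb hC hζ

lemma mapsTo_sphere_of_eqOn_ball (hsource : e.source = ball 0 1)
    (htarget : e.target = connectedComponentIn Cᶜ z₀) (hF : ContinuousOn F (closedBall 0 1))
    (hFe : EqOn F e (ball 0 1)) : MapsTo F (sphere 0 1) C := by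
  intro ζ hζ
  have hcl : ζ ∈ closure e.source := by
    rw [hsource, closure_ball _ one_ne_zero]
    exact sphere_subset_closedBall hζ
  have hlim : Tendsto e (𝓝[e.source] ζ) (𝓝 (F ζ)) := by
    rw [hsource]
    exact ((hF ζ (sphere_subset_closedBall hζ)).mono ball_subset_closedBall).congr'
      hFe.eventuallyEq_nhdsWithin
  have hnot : F ζ ∉ e.target := notMem_target_of_tendsto e
    ⟨hcl, hsource ▸ sphere_disjoint_ball.notMem_of_mem_left hζ⟩ hlim
  have := mem_closure_iff_nhdsWithin_neBot.1 hcl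
  have hmem : F ζ ∈ closure e.target := mem_closure_of_tendsto hlim
    (eventually_mem_nhdsWithin.mono fun s hs => e.map_source hs)
  rw [htarget] at hnot hmem
  exact compl_compl C ▸ (closure_connectedComponentIn_subset_union Cᶜ z₀ hmem).resolve_left hnot

lemma bijOn_closedBall_closure_of_eqOn_ball (hsource : e.source = ball 0 1)
    (htarget : e.target = connectedComponentIn Cᶜ z₀) (hC : IsCompact C)
    (hcut : ∀ a ∈ C, IsPreconnected (C \ {a})) (hF : DiffContOnCl ℂ F (ball 0 1))
    (hFe : EqOn F e (ball 0 1)) : BijOn F (closedBall 0 1) (closure e.target) := by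
  have hFc : ContinuousOn F (closedBall 0 1) := hF.continuousOn_ball
  have hFC := mapsTo_sphere_of_eqOn_ball hsource htarget hFc hFe
  have himage : F '' ball 0 1 = e.target := by
    rw [hFe.image_eq, ← hsource, e.image_source_eq_target]
  have hcl : closure (ball (0 : ℂ) 1) = closedBall 0 1 := closure_ball _ one_ne_zero
  refine ⟨?_, ?_, ?_⟩
  · rw [mapsTo_iff_image_subset, ← hcl, ← himage]
    exact hF.continuousOn.image_closure
  · rw [← ball_union_sphere, injOn_union sphere_disjoint_ball.symm]
    refine ⟨hFe.injOn_iff.2 (hsource ▸ e.injOn),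
      injOn_sphere_of_eqOn_ball hsource htarget hC hcut hF hFe hFC, fun x hx y hy hxy => ?_⟩
    exact connectedComponentIn_subset Cᶜ z₀ (htarget ▸ himage ▸ mem_image_of_mem F hx)
      (hxy ▸ hFC hy)
  · refine closure_minimal (himage ▸ image_mono ball_subset_closedBall) ?_
    exact ((isCompact_closedBall _ _).image_of_continuousOn hFc).isClosed

end Extension

theorem stmt19_general {C G : Set ℂ} (hC : IsCompact C) [LocallyConnectedSpace C]
    (hcut : ∀ a ∈ C, IsPreconnected (C \ {a})) {z₀ : ℂ} (hG : G = connectedComponentIn Cᶜ z₀)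
    (hb : Bornology.IsBounded G) {φ : ℂ → ℂ} (hφd : DifferentiableOn ℂ φ G)
    (hφbij : BijOn φ G (ball 0 1)) :
    ∃ h : closure G ≃ₜ closedBall (0 : ℂ) 1, ∀ z : closure G, (z : ℂ) ∈ G → (h z : ℂ) = φ z := by
  have hGo : IsOpen G := hG ▸ hC.isClosed.isOpen_compl.connectedComponentIn
  obtain ⟨e, rfl, rfl, htarget⟩ := exists_openPartialHomeomorph_of_bijOn hGo hφd hφbij
  have hd : DifferentiableOn ℂ e.symm (ball 0 1) :=
    htarget ▸ differentiableOn_openPartialHomeomorph_symm e hφd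
  obtain ⟨F, hF, hFe⟩ := exists_diffContOnCl_extension (e := e.symm) htarget hG hd hb hC
  obtain ⟨h, hh⟩ := exists_homeomorph_of_bijOn (isCompact_closedBall 0 1) hF.continuousOn_ball
    (bijOn_closedBall_closure_of_eqOn_ball (e := e.symm) htarget hG hC hcut hF hFe)
  refine ⟨h.symm, fun z hz => ?_⟩
  have hez : e z ∈ ball (0 : ℂ) 1 := htarget ▸ e.map_source hz
  have hhez : z = h ⟨e z, ball_subset_closedBall hez⟩ :=
    Subtype.ext (by rw [hh, hFe hez, e.left_inv hz])
  exact congrArg Subtype.val (h.symm_apply_eq.2 hhez)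

/-- **Osgood–Carathéodory theorem.** A conformal (biholomorphic) map `φ` of a Jordan domain
`G` onto the open unit disc extends to a homeomorphism of `closure G` onto the closed unit
disc. -/
theorem stmt19 (G : Set ℂ) (hG : IsJordanDomain G)
    (φ : ℂ → ℂ) (hφd : DifferentiableOn ℂ φ G)
    (hφbij : Set.BijOn φ G (Metric.ball (0:ℂ) 1)) :
    ∃ h : ↥(closure G) ≃ₜ ↥(Metric.closedBall (0:ℂ) 1),
      ∀ z : ↥(closure G), (z : ℂ) ∈ G → (h z : ℂ) = φ z := by
  obtain ⟨C, ⟨γ⟩, hb, z₀, -, hGC⟩ := hG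
  have : Fact (Module.finrank ℝ ℂ = 1 + 1) := ⟨finrank_real_complex⟩
  have := locallyConnectedSpace_sphere (E := ℂ) (n := 1)
  have : LocallyConnectedSpace C := γ.symm.locallyConnectedSpace
  exact stmt19_general (isCompact_iff_compactSpace.2 γ.compactSpace)
    (fun _ => isPreconnected_diff_singleton_of_homeomorph γ isPreconnected_compl_singleton_sphere)
    hGC hb hφd hφbij
end
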